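/- (Theorem 2.1, equation (2.4).) For all positive integers a, b, s, x with x ≤ a and all integers k_1, …, k_s with 0 < k_1 < k_2 < ⋯ < k_s ≤ (2a−1)/2 such that the 2s triangular holes and the central rhombus of side 2x−1 are pairwise disjoint, the number of lozenge tilings of H_{2a−1,2b}(k_1,…,k_s; 2x−1) that are invariant under rotation by 180° about the center of the region equals the square of the number of lozenge tilings of H_{2a−1,2b}(k_1,…,k_s; 2x−1) that are invariant both under this 180° rotation and under reflection across the vertical symmetry axis; that is, M_⊙(H_{2a−1,2b}(k_1,…,k_s;2x−1)) = M_{⊙,|}(H_{2a−1,2b}(k_1,…,k_s;2x−1))². -/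

import Mathlib

/-!
Geometric setup: the triangular lattice is drawn in the plane (identified with `ℝ × ℝ`)
so that one family of lattice lines is vertical.  Lattice vertices are generated by
`v1 = (√3/2, 1/2)` and `v2 = (0,1)`, anchored so that the bottom vertex of the western
vertical side of the hexagon is at the origin.

The hexagon with side lengths `a, a, 2b, a, a, 2b` (clockwise from the northwestern side)
then has vertices `(0,0)`, `(0,2b)`, `(a√3/2, a/2+2b)`, `(a√3, 2b)`, `(a√3, 0)`,
`(a√3/2, -a/2)`; its center is `(a√3/2, b)` and its horizontal symmetry axis is `y = b`.
-/

noncomputable section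

abbrev Pt : Type := ℝ × ℝ

namespace PP

/-- √3, the ratio of the long diagonal of a unit lozenge to its side. -/
def s3 : ℝ := Real.sqrt 3

/-- The vertices of the triangular lattice (one family of lattice lines vertical). -/
def triLattice : Set Pt :=
  {p | ∃ m n : ℤ, p = ((m : ℝ) * (s3 / 2), (m : ℝ) / 2 + (n : ℝ))}

/-- The six unit vectors along lattice directions. -/
def unitVecs : Set Pt :=
  {(0, 1), (0, -1), (s3 / 2, 1 / 2), (-(s3 / 2), -(1 / 2)),
    (s3 / 2, -(1 / 2)), (-(s3 / 2), 1 / 2)}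

/-- A (unit) lozenge of the triangular lattice: the union of two unit lattice triangles
sharing an edge, i.e. the convex hull of `p, p+u, p+v, p+u+v` for a lattice vertex `p`
and two distinct non-opposite lattice unit vectors `u, v`. -/
def IsLozenge (L : Set Pt) : Prop :=
  ∃ p u v : Pt, p ∈ triLattice ∧ u ∈ unitVecs ∧ v ∈ unitVecs ∧ u ≠ v ∧ u ≠ -v ∧
    L = convexHull ℝ {p, p + u, p + v, p + u + v}

/-- A lozenge tiling of a region `R`: a set of lozenges covering `R` whose interiors
are pairwise disjoint. -/
def IsLozengeTiling (R : Set Pt) (T : Set (Set Pt)) : Prop :=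
  (∀ L ∈ T, IsLozenge L) ∧ ⋃₀ T = R ∧
    ∀ L ∈ T, ∀ L' ∈ T, L ≠ L' → interior L ∩ interior L' = ∅

/-- The hexagon with side lengths `A, A, 2b, A, A, 2b`, clockwise from the NW side. -/
def hexagon (A b : ℕ) : Set Pt :=
  convexHull ℝ
    {((0 : ℝ), (0 : ℝ)), ((0 : ℝ), 2 * (b : ℝ)),
      ((A : ℝ) * (s3 / 2), (A : ℝ) / 2 + 2 * (b : ℝ)),
      ((A : ℝ) * s3, 2 * (b : ℝ)), ((A : ℝ) * s3, (0 : ℝ)),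
      ((A : ℝ) * (s3 / 2), -((A : ℝ) / 2))}

/-- The left-pointing triangular hole of side 2 whose vertical (right) side lies at
distance `2k` (in units of `√3` times half the lattice spacing, i.e. at `x = k√3`)
from the left side of the hexagon, centered on the horizontal symmetry axis `y = b`. -/
def leftHole (b k : ℕ) : Set Pt :=
  convexHull ℝ
    {((k : ℝ) * s3, (b : ℝ) - 1), ((k : ℝ) * s3, (b : ℝ) + 1), (((k : ℝ) - 1) * s3, (b : ℝ))}

/-- The mirror image of `leftHole b k` across the vertical symmetry axis of the hexagon:
a right-pointing triangular hole of side 2. -/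
def rightHole (A b k : ℕ) : Set Pt :=
  convexHull ℝ
    {(((A : ℝ) - k) * s3, (b : ℝ) - 1), (((A : ℝ) - k) * s3, (b : ℝ) + 1),
      (((A : ℝ) - k + 1) * s3, (b : ℝ))}

/-- The region `H_{A,2b}(k_1,…,k_s)`: the hexagon with side lengths `A, A, 2b, A, A, 2b`,
with the (open) triangular holes `leftHole (k i)` and their mirror images removed. -/
def Hreg (A b s : ℕ) (k : Fin s → ℕ) : Set Pt :=
  hexagon A b \ ⋃ i : Fin s, (interior (leftHole b (k i)) ∪ interior (rightHole A b (k i)))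

/-- The horizontal lattice rhombus of side `t` centered at the center `(A√3/2, b)`
of the hexagon. -/
def centralRhombus (A b t : ℕ) : Set Pt :=
  convexHull ℝ
    {((A : ℝ) * (s3 / 2) - (t : ℝ) * (s3 / 2), (b : ℝ)),
      ((A : ℝ) * (s3 / 2) + (t : ℝ) * (s3 / 2), (b : ℝ)),
      ((A : ℝ) * (s3 / 2), (b : ℝ) - (t : ℝ) / 2),
      ((A : ℝ) * (s3 / 2), (b : ℝ) + (t : ℝ) / 2)}

/-- The region `H_{A,2b}(k_1,…,k_s; t)`: `H_{A,2b}(k_1,…,k_s)` with the (open) central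
horizontal rhombus of side `t` also removed. -/
def HregC (A b s : ℕ) (k : Fin s → ℕ) (t : ℕ) : Set Pt :=
  Hreg A b s k \ interior (centralRhombus A b t)

/-- Rotation by `180°` about the center `(A√3/2, b)` of the hexagon. -/
def rot180 (A b : ℕ) (p : Pt) : Pt := ((A : ℝ) * s3 - p.1, 2 * (b : ℝ) - p.2)

/-- Reflection across the vertical symmetry axis `x = A√3/2` of the hexagon. -/
def reflV (A : ℕ) (p : Pt) : Pt := ((A : ℝ) * s3 - p.1, p.2)

/-- A tiling is invariant under rotation by `180°` about the center of the region. -/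
def RotInvariant (A b : ℕ) (T : Set (Set Pt)) : Prop :=
  ∀ L ∈ T, rot180 A b '' L ∈ T

/-- A tiling is invariant under reflection across the vertical symmetry axis. -/
def ReflInvariant (A : ℕ) (T : Set (Set Pt)) : Prop :=
  ∀ L ∈ T, reflV A '' L ∈ T

/-- `M_⊙(R)`: the number of lozenge tilings of `R` invariant under rotation by `180°`
about the center (of the hexagon with parameters `A`, `b` from which `R` was built). -/
def Mrot (A b : ℕ) (R : Set Pt) : ℕ :=
  Nat.card {T : Set (Set Pt) // IsLozengeTiling R T ∧ RotInvariant A b T}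

/-- `M_{⊙,|}(R)`: the number of lozenge tilings of `R` invariant both under rotation by
`180°` about the center and under reflection across the vertical symmetry axis. -/
def MrotRefl (A b : ℕ) (R : Set Pt) : ℕ :=
  Nat.card {T : Set (Set Pt) //
    IsLozengeTiling R T ∧ RotInvariant A b T ∧ ReflInvariant A T}

end PP

namespace PQ
open Finset Matrix

/-- product over pairs -/
noncomputable def Qp (c : ℚ → ℚ → ℚ) {r : ℕ} (p : Fin r → ℚ) : ℚ :=
  ∏ i, ∏ j ∈ Ioi i, c (p i) (p j)

lemma Qp_succ (c : ℚ → ℚ → ℚ) {r : ℕ} (p : Fin (r+1) → ℚ) :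
    Qp c p = (∏ j : Fin r, c (p 0) (p j.succ)) * Qp c (fun i => p i.succ) := by
  unfold Qp
  rw [Fin.prod_univ_succ, Fin.prod_Ioi_zero]
  congr 1
  refine Finset.prod_congr rfl fun i _ => ?_
  rw [Fin.prod_Ioi_succ]

lemma Qp_succAbove (c : ℚ → ℚ → ℚ) (hc : ∀ u v, c u v = - c v u) {r : ℕ} (p : Fin (r+1) → ℚ)
    (i : Fin (r+1)) :
    Qp c p = (-1)^(i:ℕ) * (∏ j : Fin r, c (p i) (p (i.succAbove j))) *
      Qp c (fun j => p (i.succAbove j)) := by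
  induction r with
  | zero =>
    have : i = 0 := Fin.fin_one_eq_zero i
    subst this
    simp [Qp]
  | succ r ih =>
    refine Fin.cases ?_ (fun i' => ?_) i
    · rw [Qp_succ]; simp
    · rw [Qp_succ c p, ih (fun i => p i.succ) i', Qp_succ c (fun j => p (i'.succ.succAbove j)),
        Fin.prod_univ_succAbove _ i', Fin.prod_univ_succ (n := r)]
      simp only [Fin.succ_succAbove_zero, Fin.succ_succAbove_succ]
      rw [hc (p 0) (p i'.succ)]
      simp only [Fin.val_succ, pow_succ]
      ring

noncomputable def cc (u v : ℚ) : ℚ := (v - u) / (v + u)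

lemma cc_anti (u v : ℚ) : cc u v = - cc v u := by
  unfold cc
  rw [← neg_div, neg_sub, add_comm]

/-- symmetric Cauchy determinant -/
lemma cauchy_det {r : ℕ} (p : Fin r → ℚ) (hp : ∀ i, 0 < p i) :
    (Matrix.of fun i j => 1 / (p i + p j)).det = (∏ i, 1 / (2 * p i)) * (Qp cc p)^2 := by
  induction r with
  | zero => simp [Qp]
  | succ r ih =>
    have h0 := hp 0
    let B : Matrix (Fin (r+1)) (Fin (r+1)) ℚ := Matrix.of fun i j =>
      if i = 0 then 1 / (p i + p j) else
        1 / (p i + p j) - (2 * p 0) / (p i + p 0) * (1 / (p 0 + p j))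
    have e1 : (Matrix.of fun i j => 1 / (p i + p j)).det = B.det := by
      refine Matrix.det_eq_of_forall_row_eq_smul_add_const
        (fun i => if i = 0 then 0 else (2 * p 0) / (p i + p 0)) 0 (by simp) ?_
      intro i j
      by_cases hi : i = 0
      · simp [B, hi]
      · simp [B, hi]
    rw [e1, Matrix.det_succ_column_zero, Fin.sum_univ_succ]
    have hz : ∀ i : Fin r, B i.succ 0 = 0 := by
      intro i
      have := hp i.succ
      simp only [B, Matrix.of_apply, Fin.succ_ne_zero, if_false]
      field_simp
      ring
    simp only [hz, mul_zero, zero_mul, Finset.sum_const_zero, add_zero]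
    have e2 : (B.submatrix (Fin.succAbove 0) Fin.succ).det =
        (∏ i : Fin r, cc (p 0) (p i.succ)) * ((∏ i : Fin r, cc (p 0) (p i.succ)) *
        (Matrix.of fun i j : Fin r => 1 / (p i.succ + p j.succ)).det) := by
      rw [← Matrix.det_mul_row, ← Matrix.det_mul_column]
      congr 1
      ext i j
      have hi := hp i.succ
      have hj := hp j.succ
      simp only [B, Matrix.submatrix_apply, Matrix.of_apply, Fin.succAbove_zero, Fin.succ_ne_zero,
        if_false, cc]
      field_simp
      ring
    rw [show (0 : Fin (r+1)).succAbove = Fin.succAbove 0 from rfl, e2,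
      ih (fun i => p i.succ) (fun i => hp _), Qp_succ, Fin.prod_univ_succ]
    simp only [B, Matrix.of_apply, if_true]
    rw [← two_mul]
    simp
    ring

/-- Partial fractions. -/
lemma pf_identity {r : ℕ} (p : Fin (r+1) → ℚ) (hp : ∀ i, 0 < p i) (hinj : Function.Injective p)
    (x : ℚ) :
    ∏ i, (p i + x) = ∏ i, (p i - x) + 2 * x * ∑ i : Fin (r+1),
      ∏ j : Fin r, ((p (i.succAbove j) - x) * (p i + p (i.succAbove j)) /
        (p (i.succAbove j) - p i)) := by
  classical
  let P : Polynomial ℚ := ∏ i, (Polynomial.C (p i) + Polynomial.X)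
  let R : Polynomial ℚ := ∏ i, (Polynomial.C (p i) - Polynomial.X) +
    Polynomial.C 2 * Polynomial.X * ∑ i : Fin (r+1), ∏ j : Fin r,
      ((Polynomial.C (p (i.succAbove j)) - Polynomial.X) *
        Polynomial.C ((p i + p (i.succAbove j)) / (p (i.succAbove j) - p i)))
  have dX1 : ∀ a : ℚ, (Polynomial.C a + Polynomial.X).natDegree ≤ 1 := by
    intro a; compute_degree
  have dX2 : ∀ a : ℚ, (Polynomial.C a - Polynomial.X).natDegree ≤ 1 := by
    intro a; compute_degree
  have dP : P.natDegree ≤ r + 1 := by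
    refine (Polynomial.natDegree_prod_le _ _).trans ?_
    refine (Finset.sum_le_card_nsmul _ _ 1 fun i _ => dX1 _).trans ?_
    simp
  have dR : R.natDegree ≤ r + 1 := by
    refine Polynomial.natDegree_add_le_of_degree_le ?_ ?_
    · refine (Polynomial.natDegree_prod_le _ _).trans ?_
      refine (Finset.sum_le_card_nsmul _ _ 1 fun i _ => dX2 _).trans ?_
      simp
    · have : (Polynomial.C (2:ℚ) * Polynomial.X).natDegree ≤ 1 := by compute_degree
      refine (Polynomial.natDegree_mul_le_of_le this (n := r) ?_).trans (add_comm 1 r).le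
      refine Polynomial.natDegree_sum_le_of_forall_le _ _ fun i _ => ?_
      refine (Polynomial.natDegree_prod_le _ _).trans ?_
      refine (Finset.sum_le_card_nsmul _ _ 1 fun j _ => ?_).trans ?_
      · refine (Polynomial.natDegree_mul_C_le _ _).trans (dX2 _)
      · simp
  have key : P = R := by
    refine Polynomial.eq_of_natDegree_lt_card_of_eval_eq' P R (insert 0 (Finset.univ.image p)) ?_ ?_
    · intro y hy
      rw [Finset.mem_insert, Finset.mem_image] at hy
      rcases hy with rfl | ⟨k, -, rfl⟩
      · simp [P, R, Polynomial.eval_prod]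
      · simp only [P, R, Polynomial.eval_prod, Polynomial.eval_add, Polynomial.eval_sub,
          Polynomial.eval_C, Polynomial.eval_X, Polynomial.eval_mul, Polynomial.eval_finsetSum]
        rw [Finset.prod_eq_zero (f := fun x => p x - p k) (Finset.mem_univ k) (sub_self _), zero_add,
          Finset.sum_eq_single k]
        · rw [Fin.prod_univ_succAbove _ k, ← two_mul]
          congr 1
          refine Finset.prod_congr rfl fun j _ => ?_
          have : p (k.succAbove j) - p k ≠ 0 :=
            sub_ne_zero.2 fun h => Fin.succAbove_ne k j (hinj h)
          field_simp
          ring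
        · intro i _ hik
          obtain ⟨j, hj⟩ := Fin.exists_succAbove_eq (Ne.symm hik)
          refine Finset.prod_eq_zero (Finset.mem_univ j) ?_
          rw [hj]; simp
        · simp
    · rw [Finset.card_insert_of_notMem, Finset.card_image_of_injective _ hinj]
      · simp only [Finset.card_univ, Fintype.card_fin]
        exact max_lt (by omega) (by omega)
      · intro h
        obtain ⟨k, -, hk⟩ := Finset.mem_image.1 h
        exact (hp k).ne' hk
  have := congrArg (Polynomial.eval x) key
  simp only [P, R, Polynomial.eval_prod, Polynomial.eval_add, Polynomial.eval_sub,
          Polynomial.eval_C, Polynomial.eval_X, Polynomial.eval_mul, Polynomial.eval_finsetSum] at this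
  rw [this]
  congr 2
  refine Finset.sum_congr rfl fun i _ => Finset.prod_congr rfl fun j _ => ?_
  ring

/-- Sum over strictly increasing tuples. -/
noncomputable def smSum {R : Type*} [AddCommMonoid R] (N r : ℕ) (g : (Fin r → Fin N) → R) : R := by
  classical
  exact ∑ h ∈ (Finset.univ.filter fun h : Fin r → Fin N => StrictMono h), g h

lemma smSum_zero {R : Type*} [AddCommMonoid R] (N : ℕ) (g : (Fin 0 → Fin N) → R) :
    smSum N 0 g = g (fun i => i.elim0) := by
  classical
  unfold smSum
  rw [Finset.filter_true_of_mem]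
  · rw [Fintype.sum_unique]; congr 1
  · intro h _ i; exact i.elim0

lemma smSum_empty {R : Type*} [AddCommMonoid R] (r : ℕ) (g : (Fin (r+1) → Fin 0) → R) :
    smSum 0 (r+1) g = 0 := by
  classical
  unfold smSum
  refine Finset.sum_eq_zero fun h _ => (h 0).elim0

lemma smSum_succ {R : Type*} [AddCommMonoid R] (N r : ℕ) (g : (Fin (r+1) → Fin (N+1)) → R) :
    smSum (N+1) (r+1) g =
      smSum N (r+1) (fun h => g (fun i => (h i).succ)) +
      smSum N r (fun h => g (Fin.cons 0 (fun i => (h i).succ))) := by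
  classical
  unfold smSum
  rw [← Finset.sum_filter_add_sum_filter_not _ (fun h : Fin (r+1) → Fin (N+1) => h 0 ≠ 0)]
  congr 1
  · symm
    refine Finset.sum_bij (fun h _ i => (h i).succ) ?_ ?_ ?_ ?_
    · intro h hh
      simp only [mem_filter, mem_univ, true_and] at hh ⊢
      exact ⟨fun i j hij => Fin.succ_lt_succ_iff.2 (hh hij), Fin.succ_ne_zero _⟩
    · intro h _ h' _ e
      funext i
      exact Fin.succ_injective _ (congrFun e i)
    · intro h hh
      simp only [mem_filter, mem_univ, true_and] at hh
      have hne : ∀ i, h i ≠ 0 := fun i =>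
        ((Fin.pos_of_ne_zero hh.2).trans_le (hh.1.monotone (Fin.zero_le i))).ne'
      refine ⟨fun i => (h i).pred (hne i), ?_, ?_⟩
      · simp only [mem_filter, mem_univ, true_and]
        intro i j hij
        exact Fin.pred_lt_pred_iff.2 (hh.1 hij)
      · funext i; simp
    · intro h _; rfl
  · symm
    refine Finset.sum_bij (fun h _ => Fin.cons 0 (fun i => (h i).succ)) ?_ ?_ ?_ ?_
    · intro h hh
      simp only [mem_filter, mem_univ, true_and, not_not] at hh ⊢
      refine ⟨?_, by simp⟩
      intro i j hij
      induction i using Fin.cases with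
      | zero =>
        induction j using Fin.cases with
        | zero => exact absurd hij (lt_irrefl _)
        | succ j => simp
      | succ i =>
        induction j using Fin.cases with
        | zero => exact absurd hij (by simp)
        | succ j => simpa using hh (by simpa using hij)
    · intro h _ h' _ e
      funext i
      have := congrFun e i.succ
      simpa using this
    · intro h hh
      simp only [mem_filter, mem_univ, true_and, not_not] at hh
      have hne : ∀ i : Fin r, h i.succ ≠ 0 := fun i => by
        have := hh.1 (Fin.succ_pos i)
        rw [hh.2] at this
        exact this.ne'
      refine ⟨fun i => (h i.succ).pred (hne i), ?_, ?_⟩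
      · simp only [mem_filter, mem_univ, true_and]
        intro i j hij
        exact Fin.pred_lt_pred_iff.2 (hh.1 (by simpa using hij))
      · funext i
        induction i using Fin.cases with
        | zero => simp [hh.2]
        | succ i => simp
    · intro h _; rfl

/-- Cauchy--Binet. -/
lemma cauchyBinet {N r : ℕ} (A B : Fin r → Fin N → ℚ) :
    smSum N r (fun h => (Matrix.of fun i j => A i (h j)).det * (Matrix.of fun i j => B i (h j)).det)
      = (Matrix.of fun i j => ∑ k, A i k * B j k).det := by
  classical
  have e1 : (Matrix.of fun i j => ∑ k, A i k * B j k).det =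
      ∑ f : Fin r → Fin N, (∏ i, A i (f i)) * (Matrix.of fun i j => B j (f i)).det := by
    have h1 : (Matrix.of fun i j => ∑ k, A i k * B j k) =
        (fun i => ∑ k, A i k • (fun j => B j k)) := by
      ext i j; simp [Finset.sum_apply]
    have h2 := (Matrix.detRowAlternating (n := Fin r) (R := ℚ)).toMultilinearMap.map_sum
      (fun i k => A i k • (fun j => B j k))
    rw [h1]
    refine h2.trans (Finset.sum_congr rfl fun f _ => ?_)
    exact (Matrix.detRowAlternating (n := Fin r) (R := ℚ)).toMultilinearMap.map_smul_univ
      (fun i => A i (f i)) (fun i j => B j (f i))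
  rw [e1, ← Finset.sum_subset (Finset.subset_univ
    (Finset.univ.filter fun f : Fin r → Fin N => Function.Injective f))]
  · unfold smSum
    rw [Finset.sum_congr rfl (g := fun h => ∑ σ : Equiv.Perm (Fin r), (∏ i, A i (h (σ i))) *
      (Matrix.of fun i j => B j (h (σ i))).det)]
    · rw [Finset.sum_sigma']
      symm
      refine Finset.sum_bij' (fun f _ => ⟨f ∘ Tuple.sort f, (Tuple.sort f)⁻¹⟩)
        (fun q _ => q.1 ∘ q.2) ?_ ?_ ?_ ?_ ?_
      · intro f hf
        simp only [mem_filter, mem_univ, true_and, mem_sigma, and_true] at hf ⊢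
        exact (Tuple.monotone_sort f).strictMono_of_injective
          (hf.comp (Tuple.sort f).injective)
      · rintro ⟨h, σ⟩ hq
        simp only [mem_filter, mem_univ, true_and, mem_sigma, and_true] at hq ⊢
        exact hq.injective.comp σ.injective
      · intro f hf
        funext i; simp
      · rintro ⟨h, σ⟩ hq
        simp only [mem_filter, mem_univ, true_and, mem_sigma, and_true] at hq
        have hs : (h ∘ σ) ∘ Tuple.sort (h ∘ σ) = h := by
          have m1 : StrictMono ((h ∘ σ) ∘ Tuple.sort (h ∘ σ)) :=
            (Tuple.monotone_sort (h ∘ σ)).strictMono_of_injective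
              ((hq.injective.comp σ.injective).comp (Equiv.injective _))
          refine (StrictMono.range_inj m1 hq).1 ?_
          rw [EquivLike.range_comp, EquivLike.range_comp]
        have hσ : (Tuple.sort (h ∘ σ))⁻¹ = σ := by
          ext1 i
          apply hq.injective
          have := congrFun hs ((Tuple.sort (h ∘ σ))⁻¹ i)
          rw [← this]
          simp
        simp only [hs, hσ]
      · intro f hf
        simp
    · intro h _
      beta_reduce
      rw [← Matrix.det_transpose (Matrix.of fun i j => A i (h j)), Matrix.det_apply, Finset.sum_mul]
      refine Finset.sum_congr rfl fun σ _ => ?_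
      have : (Matrix.of fun i j => B j (h (σ i))) =
          ((Matrix.of fun i j => B i (h j))ᵀ).submatrix σ id := by ext i j; rfl
      rw [this, Matrix.det_permute, Matrix.det_transpose, Units.smul_def, zsmul_eq_mul]
      simp only [Matrix.transpose_apply, Matrix.of_apply]
      ring
  · intro f _ hf
    rw [mem_filter] at hf
    simp only [mem_univ, true_and, Function.Injective, not_forall] at hf
    obtain ⟨i, j, hij, hne⟩ := hf
    rw [Matrix.det_zero_of_row_eq hne, mul_zero]
    funext l; simp [hij]

/-- `E_p(h)`. -/
def EE (p h : ℕ) : ℚ := (Nat.choose (2*p) (p+h) : ℚ)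
/-- `O_p(h)`. -/
noncomputable def OO (p h : ℕ) : ℚ := (h / p : ℚ) * EE p h

noncomputable def ff (x p : ℕ) : ℚ := ((p:ℚ) + x) * EE p x

lemma EE_step (x p : ℕ) : ((p:ℚ) + x + 1) * EE p (x+1) = ((p:ℚ) - x) * EE p x := by
  unfold EE
  have := Nat.choose_succ_right_eq (2*p) (p+x)
  rcases le_or_gt x p with h | h
  · have h2 : (2*p - (p+x) : ℕ) = p - x := by omega
    rw [h2] at this
    have := congrArg (Nat.cast : ℕ → ℚ) this
    push_cast [Nat.cast_sub h] at this
    rw [show p + (x+1) = p + x + 1 by ring]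
    linear_combination this
  · rw [Nat.choose_eq_zero_of_lt (by omega), Nat.choose_eq_zero_of_lt (by omega)]; simp

lemma ff_succ (x p : ℕ) : ff (x+1) p = ((p:ℚ) - x) * EE p x := by
  rw [← EE_step]; unfold ff; push_cast; ring

lemma EE_zero (x p : ℕ) (h : p < x) : EE p x = 0 := by
  unfold EE; rw [Nat.choose_eq_zero_of_lt (by omega)]; simp

noncomputable def KK (x : ℕ) {r : ℕ} (p : Fin r → ℕ) : ℚ :=
  (∏ i, ff x (p i) / (2 * p i)) * Qp cc (fun i => (p i : ℚ))

lemma sumO {N r : ℕ} (x : ℕ) (p : Fin r → ℕ) (hp : ∀ i, 0 < p i) (hinj : Function.Injective p)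
    (hN : ∀ i, p i < x + N) :
    smSum N r (fun h => (Matrix.of fun i j => OO (p i) (x + h j)).det) = KK x p := by
  induction N generalizing r x with
  | zero =>
    cases r with
    | zero => rw [smSum_zero]; simp [KK, Qp]
    | succ r =>
      rw [smSum_empty, KK, Finset.prod_eq_zero (Finset.mem_univ 0), zero_mul]
      rw [ff, EE_zero _ _ (by simpa using hN 0)]; simp
  | succ N ih =>
    cases r with
    | zero => rw [smSum_zero]; simp [KK, Qp]
    | succ r =>
      rw [smSum_succ]
      have h1 := ih (x+1) p hp hinj (fun i => by have := hN i; omega)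
      have e1 : (fun h : Fin (r+1) → Fin N =>
          (Matrix.of fun i j => OO (p i) (x + ((h j).succ : Fin (N+1)))).det) =
          (fun h => (Matrix.of fun i j => OO (p i) (x + 1 + h j)).det) := by
        funext h; congr 1; ext i j; simp only [Matrix.of_apply, Fin.val_succ]; congr 1; ring
      rw [e1, h1]
      have e2 : smSum N r (fun h : Fin r → Fin N => (Matrix.of fun (i j : Fin (r+1)) => OO (p i)
            (x + ((Fin.cons 0 (fun i => (h i).succ) : Fin (r+1) → Fin (N+1)) j))).det) =
          ∑ i : Fin (r+1), (-1)^(i:ℕ) * OO (p i) x * KK (x+1) (fun j => p (i.succAbove j)) := by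
        have h2 : ∀ i : Fin (r+1), KK (x+1) (fun j => p (i.succAbove j)) = _ := fun i =>
          (ih (x+1) (fun j => p (i.succAbove j)) (fun j => hp _)
            (hinj.comp Fin.succAbove_right_injective) (fun j => by
              have := hN (i.succAbove j); omega)).symm
        simp only [h2]
        unfold smSum
        simp only [Finset.mul_sum]
        rw [Finset.sum_comm]
        refine Finset.sum_congr rfl fun h _ => ?_
        rw [Matrix.det_succ_column_zero]
        refine Finset.sum_congr rfl fun i _ => ?_
        congr 1
        congr 1
        ext k l
        simp only [Matrix.of_apply, Matrix.submatrix_apply, Fin.cons_succ, Fin.val_succ]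
        congr 1; ring
      rw [e2]
      have hq : ∀ i, (0:ℚ) < p i := fun i => by exact_mod_cast hp i
      have hqi : Function.Injective (fun i => (p i : ℚ)) := fun i j h => hinj (Nat.cast_injective h)
      have pf := pf_identity (fun i => (p i : ℚ)) hq hqi x
      have t1 : ∀ y, KK y p = (∏ i, ff y (p i)) * (∏ i, (1 / (2 * (p i:ℚ)))) *
          Qp cc (fun i => (p i : ℚ)) := by
        intro y; unfold KK; rw [← Finset.prod_mul_distrib]; congr 1
        refine Finset.prod_congr rfl fun i _ => by ring
      have t2 : ∀ i : Fin (r+1), (-1)^(i:ℕ) * OO (p i) x * KK (x+1) (fun j => p (i.succAbove j)) =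
          2 * x * (∏ j : Fin r, (((p (i.succAbove j):ℚ) - x) * ((p i:ℚ) + p (i.succAbove j)) /
          ((p (i.succAbove j) : ℚ) - p i))) * ((∏ i, EE (p i) x) * (∏ i, (1 / (2 * (p i:ℚ)))) *
          Qp cc (fun i => (p i : ℚ))) := by
        intro i
        rw [Qp_succAbove cc cc_anti (fun i => (p i : ℚ)) i, Fin.prod_univ_succAbove _ i,
          Fin.prod_univ_succAbove (fun i => 1 / (2 * (p i : ℚ))) i]
        have hone : (∏ j : Fin r, (((p i:ℚ) + p (i.succAbove j)) /
            ((p (i.succAbove j) : ℚ) - p i))) *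
            (∏ j : Fin r, cc (p i) (p (i.succAbove j))) = 1 := by
          rw [← Finset.prod_mul_distrib]
          refine Finset.prod_eq_one fun j _ => ?_
          have a1 := hq i
          have a2 := hq (i.succAbove j)
          have a3 : (p (i.succAbove j) : ℚ) - p i ≠ 0 :=
            sub_ne_zero.2 fun h => Fin.succAbove_ne i j (hqi h)
          unfold cc
          field_simp
          ring
        have s1 : (∏ j : Fin r, (((p (i.succAbove j):ℚ) - x) * ((p i:ℚ) + p (i.succAbove j)) /
          ((p (i.succAbove j) : ℚ) - p i))) = (∏ j : Fin r, ((p (i.succAbove j):ℚ) - x)) *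
           (∏ j : Fin r, (((p i:ℚ) + p (i.succAbove j)) /
            ((p (i.succAbove j) : ℚ) - p i))) := by
          rw [← Finset.prod_mul_distrib]
          exact Finset.prod_congr rfl fun j _ => by ring
        have s2 : KK (x+1) (fun j => p (i.succAbove j)) = (∏ j : Fin r, ((p (i.succAbove j):ℚ) - x)) *
            (∏ j : Fin r, EE (p (i.succAbove j)) x) * (∏ j : Fin r, (1 / (2 * (p (i.succAbove j):ℚ))))
            * Qp cc (fun j => (p (i.succAbove j) : ℚ)) := by
          unfold KK
          rw [← Finset.prod_mul_distrib, ← Finset.prod_mul_distrib]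
          congr 1
          refine Finset.prod_congr rfl fun j _ => ?_
          rw [ff_succ]; ring
        rw [s1, s2]
        have : OO (p i) x = 2 * x * (EE (p i) x * (1 / (2 * (p i : ℚ)))) := by
          have := hq i
          unfold OO; field_simp
        rw [this]
        linear_combination (-(2 * x * (EE (p i) x * (1 / (2 * (p i : ℚ)))) * (-1)^(i:ℕ) *
          (∏ j : Fin r, ((p (i.succAbove j):ℚ) - x)) *
            (∏ j : Fin r, EE (p (i.succAbove j)) x) * (∏ j : Fin r, (1 / (2 * (p (i.succAbove j):ℚ))))
            * Qp cc (fun j => (p (i.succAbove j) : ℚ)))) * hone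
      rw [Finset.sum_congr rfl fun i _ => t2 i, ← Finset.sum_mul, ← Finset.mul_sum, t1, t1]
      have u1 : (∏ i, ff (x+1) (p i)) = (∏ i, ((p i:ℚ) - x)) * ∏ i, EE (p i) x := by
        rw [← Finset.prod_mul_distrib]; exact Finset.prod_congr rfl fun i _ => ff_succ _ _
      have u2 : (∏ i, ff x (p i)) = (∏ i, ((p i:ℚ) + x)) * ∏ i, EE (p i) x := by
        rw [← Finset.prod_mul_distrib]; exact Finset.prod_congr rfl fun i _ => rfl
      rw [u1, u2]
      linear_combination (-((∏ i, EE (p i) x) * (∏ i, (1 / (2 * (p i:ℚ)))) *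
          Qp cc (fun i => (p i : ℚ)))) * pf

lemma telescope (x N p q : ℕ) (hp : 0 < p) (hq : 0 < q) (hN : p < x + N) :
    ∑ k : Fin N, EE p (x + k) * OO q (x + k) = ff x p * ff x q * (1 / (p + q)) * (1 / (2 * q)) := by
  have hp' : (0:ℚ) < p := by exact_mod_cast hp
  have hq' : (0:ℚ) < q := by exact_mod_cast hq
  induction N generalizing x with
  | zero => rw [ff, EE_zero _ _ (by simpa using hN)]; simp
  | succ N ih =>
    rw [Fin.sum_univ_succ]
    have := ih (x+1) (by omega)
    have e : ∑ k : Fin N, EE p (x + (k.succ : Fin (N+1))) * OO q (x + (k.succ : Fin (N+1))) =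
        ∑ k : Fin N, EE p (x + 1 + k) * OO q (x + 1 + k) := by
      refine Finset.sum_congr rfl fun k _ => ?_
      rw [Fin.val_succ, show x + ((k:ℕ)+1) = x + 1 + k by ring]
    rw [e, this, ff_succ, ff_succ]
    simp only [Fin.val_zero, add_zero, OO, ff]
    field_simp
    ring

/-- The core determinantal identity. -/
lemma core_identity {N r : ℕ} (x : ℕ) (p : Fin r → ℕ) (hp : ∀ i, 0 < p i)
    (hinj : Function.Injective p) (hN : ∀ i, p i < x + N) :
    smSum N r (fun h => (Matrix.of fun i j => EE (p i) (x + h j)).det *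
      (Matrix.of fun i j => OO (p i) (x + h j)).det) =
    (smSum N r (fun h => (Matrix.of fun i j => OO (p i) (x + h j)).det))^2 := by
  rw [sumO x p hp hinj hN, cauchyBinet (fun i k => EE (p i) (x + k)) (fun i k => OO (p i) (x + k))]
  simp only [fun i j => telescope x N (p i) (p j) (hp i) (hp j) (hN i)]
  have hq : ∀ i, (0:ℚ) < p i := fun i => by exact_mod_cast hp i
  have : (Matrix.of fun i j => ff x (p i) * ff x (p j) * (1 / ((p i : ℚ) + p j)) * (1 / (2 * p j))) =
      Matrix.of fun i j => ff x (p i) * (Matrix.of fun i j => (ff x (p j) * (1 / (2 * p j))) *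
        (Matrix.of fun i j => 1 / ((p i : ℚ) + p j)) i j) i j := by
    ext i j; simp only [Matrix.of_apply]; ring
  rw [this, Matrix.det_mul_column, Matrix.det_mul_row, cauchy_det (fun i => (p i:ℚ)) hq, KK, mul_pow,
    ← mul_assoc, ← mul_assoc, ← Finset.prod_mul_distrib, ← Finset.prod_mul_distrib,
    ← Finset.prod_pow]
  congr 1
  refine Finset.prod_congr rfl fun i _ => ?_
  ring

end PQ

namespace PQ
open Finset Matrix

/-- `X` is obtained from `Z` by moving every element by `±1`, injectively. -/
def Mt (X Z : Finset ℤ) : Prop :=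
  ∃ f : ℤ → ℤ, (∀ z ∈ Z, f z = z - 1 ∨ f z = z + 1) ∧ Set.InjOn f Z ∧ Z.image f = X

lemma Mt_unique {Z : Finset ℤ} {f g : ℤ → ℤ} (hf : ∀ z ∈ Z, f z = z - 1 ∨ f z = z + 1)
    (hg : ∀ z ∈ Z, g z = z - 1 ∨ g z = z + 1) (fi : Set.InjOn f Z) (gi : Set.InjOn g Z)
    (e : Z.image f = Z.image g) : ∀ z ∈ Z, f z = g z := by
  by_contra hcon
  push Not at hcon
  have hne : (Z.filter fun z => f z ≠ g z).Nonempty := by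
    obtain ⟨z, hz, h⟩ := hcon
    exact ⟨z, by simp [hz, h]⟩
  obtain ⟨z, hz, hmin⟩ := (Z.filter fun z => f z ≠ g z).exists_minimal hne
  rw [mem_filter] at hz
  have hlt : ∀ w ∈ Z, w < z → f w = g w := by
    intro w hw hwz
    by_contra h
    have := hmin (by simp [hw, h] : w ∈ Z.filter fun z => f z ≠ g z) hwz.le
    omega
  have key : ∀ (f g : ℤ → ℤ), (∀ z ∈ Z, f z = z - 1 ∨ f z = z + 1) →
      (∀ z ∈ Z, g z = z - 1 ∨ g z = z + 1) → Set.InjOn f Z →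
      Z.image f = Z.image g → (∀ w ∈ Z, w < z → f w = g w) → f z = z - 1 → g z = z + 1 →
      False := by
    intro f g hf hg fi e hlt h1 h2
    have : z - 1 ∈ Z.image g := by rw [← e, ← h1]; exact mem_image_of_mem _ hz.1
    obtain ⟨w, hw, hwz⟩ := mem_image.1 this
    have hwlt : w < z := by
      rcases hg w hw with h | h
      · have : w = z := by omega
        subst this; omega
      · omega
    have := hlt w hw hwlt
    have : w = z := fi hw hz.1 (by rw [this, hwz, h1])
    omega
  rcases hf z hz.1 with h1 | h1 <;> rcases hg z hz.1 with h2 | h2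
  · exact hz.2 (by omega)
  · exact key f g hf hg fi e hlt h1 h2
  · exact key g f hg hf gi e.symm (fun w hw h => (hlt w hw h).symm) h2 h1
  · exact hz.2 (by omega)

open Classical in
noncomputable def preds (Z : Finset ℤ) : Finset (Finset ℤ) :=
  ((Z.image (· - 1)) ∪ (Z.image (· + 1))).powerset.filter (fun X => Mt X Z)

open Classical in
lemma mem_preds {X Z : Finset ℤ} : X ∈ preds Z ↔ Mt X Z := by
  unfold preds
  rw [mem_filter, and_iff_right_iff_imp, mem_powerset]
  rintro ⟨f, hf, -, rfl⟩ y hy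
  obtain ⟨z, hz, rfl⟩ := mem_image.1 hy
  rw [mem_union, mem_image, mem_image]
  rcases hf z hz with h | h
  · exact Or.inl ⟨z, hz, h.symm⟩
  · exact Or.inr ⟨z, hz, h.symm⟩

lemma Mt.card {X Z : Finset ℤ} (h : Mt X Z) : X.card = Z.card := by
  obtain ⟨f, -, hi, rfl⟩ := h
  exact card_image_of_injOn hi

open Classical in
/-- hole set at time `t` -/
noncomputable def hs (K : Finset ℕ) (t : ℕ) : Finset ℤ :=
  if ∃ κ ∈ K, t = 2 * κ then {-1, 1} else ∅

open Classical in
noncomputable def W (K : Finset ℕ) (Pr : Finset ℤ → Prop) : ℕ → Finset ℤ → ℕ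
  | 0, Y => if Y = ∅ then 1 else 0
  | t+1, Y => if hs K (t+1) ⊆ Y then
      ∑ X ∈ (preds (Y \ hs K (t+1))).filter Pr, W K Pr t X else 0

/-- determinant with functions `u i` at points `h j` -/
noncomputable def FD {n : ℕ} (u : Fin n → ℤ → ℤ) (h : Fin n → ℤ) : ℤ :=
  (Matrix.of fun j i => u i (h j)).det

def DD (u : ℤ → ℤ) (y : ℤ) : ℤ := u (y - 1) + u (y + 1)
def dl (s : ℤ) (y : ℤ) : ℤ := if y = s then 1 else 0
def sg (b : Bool) : ℤ := if b then 1 else -1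

def par (t : ℕ) {n : ℕ} (h : Fin n → ℤ) : Prop := ∀ i, (h i + t) % 2 = 1

lemma par_step {t n : ℕ} {h : Fin n → ℤ} (hp : par (t+1) h) (ε : Fin n → Bool) :
    par t (fun i => h i + sg (ε i)) := by
  intro i
  have := hp i
  push_cast at this
  show (h i + sg (ε i) + (t:ℤ)) % 2 = 1
  unfold sg; split_ifs <;> omega

lemma FD_DD {n : ℕ} (u : Fin n → ℤ → ℤ) (h : Fin n → ℤ) :
    FD (fun i => DD (u i)) h = ∑ ε : Fin n → Bool, FD u (fun j => h j + sg (ε j)) := by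
  unfold FD
  have h1 : (Matrix.of fun j i => DD (u i) (h j)) =
      (fun j => ∑ b : Bool, (fun i => u i (h j + sg b))) := by
    ext j i; simp [DD, sg, Finset.sum_apply, add_comm, sub_eq_add_neg]
  rw [h1]
  exact (Matrix.detRowAlternating (n := Fin n) (R := ℤ)).toMultilinearMap.map_sum
      (fun j b => (fun i => u i (h j + sg b)))

lemma FD_eq_zero {n : ℕ} (u : Fin n → ℤ → ℤ) (h : Fin n → ℤ) (hn : ¬ Function.Injective h) :
    FD u h = 0 := by
  simp only [Function.Injective, not_forall] at hn
  obtain ⟨i, j, hij, hne⟩ := hn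
  refine Matrix.det_zero_of_row_eq hne ?_
  funext l; simp [hij]

lemma mono_step {t n : ℕ} {h : Fin n → ℤ} (hp : par t h) (hm : StrictMono h) (ε : Fin n → Bool) :
    Monotone (fun i => h i + sg (ε i)) := by
  intro i j hij
  rcases hij.eq_or_lt with rfl | hij
  · rfl
  · have := hm hij
    have a := hp i
    have b := hp j
    simp only [sg]
    split_ifs <;> omega

open Classical in
lemma FD_DD' {t n : ℕ} (u : Fin n → ℤ → ℤ) (h : Fin n → ℤ) (hp : par t h) (hm : StrictMono h) :
    FD (fun i => DD (u i)) h = ∑ ε : Fin n → Bool with StrictMono (fun i => h i + sg (ε i)),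
      FD u (fun j => h j + sg (ε j)) := by
  rw [FD_DD, Finset.sum_filter]
  refine Finset.sum_congr rfl fun ε _ => ?_
  by_cases hs : StrictMono (fun i => h i + sg (ε i))
  · rw [if_pos hs]
  · rw [if_neg hs]
    refine FD_eq_zero _ _ fun hi => hs ((mono_step hp hm ε).strictMono_of_injective hi)

lemma sg_inj {a b : Bool} (h : sg a = sg b) : a = b := by
  cases a <;> cases b <;> simp [sg] at h ⊢

open Classical in
lemma sum_preds {t n : ℕ} (h : Fin n → ℤ) (hp : par t h) (hm : StrictMono h)
    (g : Finset ℤ → ℤ) :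
    ∑ X ∈ preds (univ.image h), g X =
    ∑ ε : Fin n → Bool with StrictMono (fun i => h i + sg (ε i)),
      g (univ.image (fun j => h j + sg (ε j))) := by
  classical
  symm
  refine Finset.sum_bij (fun ε _ => univ.image (fun j => h j + sg (ε j))) ?_ ?_ ?_ ?_
  · intro ε hε
    rw [mem_filter] at hε
    rw [mem_preds]
    let f : ℤ → ℤ := fun z => z + sg (decide (∃ i, h i = z ∧ ε i = true))
    have hf : ∀ i, f (h i) = h i + sg (ε i) := by
      intro i
      simp only [f]
      congr 2
      rw [Bool.eq_iff_iff, decide_eq_true_iff]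
      constructor
      · rintro ⟨j, hj, e⟩
        rw [← hm.injective hj, e]
      · intro e; exact ⟨i, rfl, e⟩
    refine ⟨f, ?_, ?_, ?_⟩
    · intro z hz
      simp only [f, sg]
      split_ifs
      · right; rfl
      · left; ring
    · intro z hz w hw e
      obtain ⟨i, -, rfl⟩ := mem_image.1 (mem_coe.1 hz)
      obtain ⟨j, -, rfl⟩ := mem_image.1 (mem_coe.1 hw)
      rw [hf, hf] at e
      rw [hε.2.injective e]
    · rw [image_image]
      exact image_congr (fun i _ => hf i)
  · intro ε hε ε' hε' e
    rw [mem_filter] at hε hε'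
    have := congrArg (fun s : Finset ℤ => (s : Set ℤ)) e
    simp only [coe_image, coe_univ, Set.image_univ] at this
    have := (StrictMono.range_inj hε.2 hε'.2).1 this
    funext i
    have := congrFun this i
    exact sg_inj (by simpa using this)
  · intro X hX
    rw [mem_preds] at hX
    obtain ⟨f, hf, fi, rfl⟩ := hX
    have hf' : ∀ i, h i + sg (decide (f (h i) = h i + 1)) = f (h i) := by
      intro i
      rcases hf (h i) (mem_image_of_mem _ (mem_univ _)) with e | e
      · rw [e]; simp [sg]; split_ifs <;> omega
      · rw [e]; simp [sg]
    refine ⟨fun i => decide (f (h i) = h i + 1), ?_, ?_⟩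
    · rw [mem_filter]
      refine ⟨mem_univ _, (mono_step hp hm _).strictMono_of_injective ?_⟩
      intro i j e
      simp only [hf'] at e
      exact hm.injective (fi (by simp) (by simp) e)
    · simp only [hf', image_image]; rfl
  · intro ε _; rfl

lemma FD_cons {n : ℕ} (s : ℤ) (u : Fin n → ℤ → ℤ) (h : Fin (n+1) → ℤ) (hi : Function.Injective h)
    (j : Fin (n+1)) (hj : h j = s) :
    FD (Fin.cons (dl s) u : Fin (n+1) → ℤ → ℤ) h = (-1)^(j:ℕ) * FD u (fun i => h (j.succAbove i)) := by
  unfold FD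
  rw [Matrix.det_succ_column_zero, Finset.sum_eq_single j]
  · simp only [Matrix.of_apply, Fin.cons_zero, dl, hj, if_true, mul_one]
    rfl
  · intro k _ hk
    have : h k ≠ s := fun e => hk (hi (e.trans hj.symm))
    simp [dl, this]
  · simp

lemma FD_cons_zero {n : ℕ} (s : ℤ) (u : Fin n → ℤ → ℤ) (h : Fin (n+1) → ℤ)
    (hj : ∀ j, h j ≠ s) :
    FD (Fin.cons (dl s) u : Fin (n+1) → ℤ → ℤ) h = 0 := by
  unfold FD
  rw [Matrix.det_succ_column_zero]
  refine Finset.sum_eq_zero fun k _ => ?_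
  simp [dl, hj k]

lemma image_sdiff_succAbove {n : ℕ} (h : Fin (n+1) → ℤ) (hi : Function.Injective h)
    (j : Fin (n+1)) : univ.image (fun i => h (j.succAbove i)) = (univ.image h).erase (h j) := by
  ext y
  simp only [mem_image, mem_univ, true_and, mem_erase]
  constructor
  · rintro ⟨i, rfl⟩
    exact ⟨fun e => Fin.succAbove_ne j i (hi e), _, rfl⟩
  · rintro ⟨hne, i, rfl⟩
    obtain ⟨k, hk⟩ := Fin.exists_succAbove_eq (show i ≠ j from fun e => hne (by rw [e]))
    exact ⟨k, by rw [hk]⟩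

lemma goodA_aux {K : Finset ℕ} {t n : ℕ} {u : Fin n → ℤ → ℤ}
    (H : ∀ h : Fin n → ℤ, StrictMono h → par t h →
      (W K (fun _ => True) t (univ.image h) : ℤ) = FD u h)
    (h : Fin n → ℤ) (hm : StrictMono h) (hp : par (t+1) h) :
    (∑ X ∈ preds (univ.image h), (W K (fun _ => True) t X : ℤ)) = FD (fun i => DD (u i)) h := by
  classical
  rw [FD_DD' u h hp hm, sum_preds h hp hm]
  refine Finset.sum_congr rfl fun ε hε => ?_
  rw [mem_filter] at hε
  exact H _ hε.2 (par_step hp ε)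

lemma goodA_step {K : Finset ℕ} {t n : ℕ} {u : Fin n → ℤ → ℤ} (hh : hs K (t+1) = ∅)
    (H : ∀ h : Fin n → ℤ, StrictMono h → par t h →
      (W K (fun _ => True) t (univ.image h) : ℤ) = FD u h)
    (h : Fin n → ℤ) (hm : StrictMono h) (hp : par (t+1) h) :
    (W K (fun _ => True) (t+1) (univ.image h) : ℤ) = FD (fun i => DD (u i)) h := by
  rw [W, hh, if_pos (empty_subset _), sdiff_empty, filter_true, Nat.cast_sum]
  exact goodA_aux H h hm hp

lemma goodA_hole {K : Finset ℕ} {t n : ℕ} {u : Fin n → ℤ → ℤ} (hh : hs K (t+1) = {-1, 1})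
    (ht : (t+1) % 2 = 0)
    (H : ∀ h : Fin n → ℤ, StrictMono h → par t h →
      (W K (fun _ => True) t (univ.image h) : ℤ) = FD u h)
    (h : Fin (n+2) → ℤ) (hm : StrictMono h) (hp : par (t+1) h) :
    (W K (fun _ => True) (t+1) (univ.image h) : ℤ) =
      FD (Fin.cons (dl (-1)) (Fin.cons (dl 1) (fun i => DD (u i)) : Fin (n+1) → ℤ → ℤ)
        : Fin (n+2) → ℤ → ℤ) h := by
  rw [W, hh]
  by_cases h1 : ∃ j, h j = -1
  swap
  · rw [FD_cons_zero _ _ _ (fun j e => h1 ⟨j, e⟩), if_neg]; · simp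
    intro hsub
    obtain ⟨j, -, hj⟩ := mem_image.1 (hsub (by simp : (-1:ℤ) ∈ _))
    exact h1 ⟨j, hj⟩
  obtain ⟨j, hj⟩ := h1
  rw [FD_cons _ _ _ hm.injective j hj]
  by_cases h2 : ∃ i, h (j.succAbove i) = 1
  swap
  · rw [FD_cons_zero _ _ _ (fun i e => h2 ⟨i, e⟩), if_neg]; · simp
    intro hsub
    obtain ⟨i, -, hi⟩ := mem_image.1 (hsub (by simp : (1:ℤ) ∈ _))
    obtain ⟨k, hk⟩ := Fin.exists_succAbove_eq (show i ≠ j from fun e => by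
      rw [e, hj] at hi; omega)
    exact h2 ⟨k, by rw [hk]; exact hi⟩
  obtain ⟨i, hi⟩ := h2
  have hm' : StrictMono (fun i => h (j.succAbove i)) := hm.comp (Fin.strictMono_succAbove j)
  rw [FD_cons _ _ _ hm'.injective i hi]
  have hij : (i:ℕ) = j := by
    have hlt : j < j.succAbove i := hm.lt_iff_lt.1 (by rw [hj, hi]; norm_num)
    have hle : j ≤ i.castSucc := (Fin.lt_succAbove_iff_le_castSucc j i).1 hlt
    rw [Fin.succAbove_of_le_castSucc _ _ hle] at hi hlt
    by_contra hne
    have hlt2 : j < i.castSucc := lt_of_le_of_ne hle (fun e => hne (by rw [e]; simp))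
    have a1 := hm hlt2
    have a2 := hm (show i.castSucc < i.succ from Fin.castSucc_lt_succ)
    rw [hj] at a1; rw [hi] at a2
    have := hp i.castSucc
    push_cast at this
    omega
  rw [hij, ← mul_assoc, ← pow_add, ← two_mul, pow_mul, neg_one_sq, one_pow, one_mul, if_pos]
  · have e : univ.image h \ {-1, 1} =
        univ.image (fun k => h (j.succAbove (i.succAbove k))) := by
      rw [image_sdiff_succAbove (fun i => h (j.succAbove i)) hm'.injective i,
        image_sdiff_succAbove h hm.injective j, hi, hj]
      ext y; simp only [mem_sdiff, mem_erase, mem_insert, mem_singleton]; tauto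
    rw [e, filter_true, Nat.cast_sum]
    exact goodA_aux H _ (hm'.comp (Fin.strictMono_succAbove i)) (fun k => hp _)
  · intro y hy
    simp only [mem_insert, mem_singleton] at hy
    rcases hy with rfl | rfl
    · rw [← hj]; simp
    · rw [← hi]; simp

end PQ

namespace PQ
open Finset Matrix

def Sy (Y : Finset ℤ) : Prop := ∀ y ∈ Y, -y ∈ Y

def SS {n : ℕ} (h : Fin n → ℤ) : Finset ℤ := univ.image h ∪ univ.image (fun i => - h i)

lemma mem_SS {n : ℕ} {h : Fin n → ℤ} {y : ℤ} : y ∈ SS h ↔ ∃ i, h i = y ∨ h i = -y := by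
  simp only [SS, mem_union, mem_image, mem_univ, true_and, ← exists_or]
  refine exists_congr fun i => ?_
  constructor <;> rintro (h | h) <;> omega

lemma Sy_SS {n : ℕ} (h : Fin n → ℤ) : Sy (SS h) := by
  intro y hy
  rw [mem_SS] at hy ⊢
  obtain ⟨i, hi⟩ := hy
  exact ⟨i, by rw [neg_neg]; exact hi.symm⟩

def SP {n : ℕ} (h : Fin n → ℤ) : Prop := StrictMono h ∧ ∀ i, 0 < h i

lemma SS_inj {n : ℕ} {h g : Fin n → ℤ} (hh : SP h) (hg : SP g) (e : SS h = SS g) : h = g := by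
  refine (StrictMono.range_inj hh.1 hg.1).1 ?_
  have key : ∀ {h : Fin n → ℤ}, SP h → Set.range h = {y | y ∈ SS h ∧ 0 < y} := by
    intro h hh
    ext y
    simp only [Set.mem_range, Set.mem_ofPred_eq, mem_SS]
    constructor
    · rintro ⟨i, rfl⟩; exact ⟨⟨i, Or.inl rfl⟩, hh.2 i⟩
    · rintro ⟨⟨i, hi | hi⟩, hy⟩
      · exact ⟨i, hi⟩
      · have := hh.2 i; omega
  rw [key hh, key hg, e]

open Classical in
lemma FD_DD_odd {t n : ℕ} (u : Fin n → ℤ → ℤ) (hu : ∀ i, u i 0 = 0) (h : Fin n → ℤ)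
    (hp : par t h) (hm : SP h) :
    FD (fun i => DD (u i)) h = ∑ ε : Fin n → Bool with SP (fun i => h i + sg (ε i)),
      FD u (fun j => h j + sg (ε j)) := by
  rw [FD_DD, Finset.sum_filter]
  refine Finset.sum_congr rfl fun ε _ => ?_
  by_cases hs : SP (fun i => h i + sg (ε i))
  · rw [if_pos hs]
  · rw [if_neg hs]
    by_cases hz : ∃ j, h j + sg (ε j) = 0
    · obtain ⟨j, hj⟩ := hz
      refine Matrix.det_eq_zero_of_row_eq_zero j fun i => ?_
      simp [hj, hu]
    · refine FD_eq_zero _ _ fun hi => hs ⟨(mono_step hp hm.1 ε).strictMono_of_injective hi, ?_⟩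
      intro i
      have h1 := hm.2 i
      have h2 : h i + sg (ε i) ≠ 0 := fun e => hz ⟨i, e⟩
      show 0 < h i + sg (ε i)
      have : -1 ≤ sg (ε i) := by unfold sg; split_ifs <;> norm_num
      omega

lemma odd_of_sym {Z : Finset ℤ} {f : ℤ → ℤ} (hf : ∀ z ∈ Z, f z = z - 1 ∨ f z = z + 1)
    (fi : Set.InjOn f Z) (hZ : Sy Z) (hX : Sy (Z.image f)) : ∀ z ∈ Z, f (-z) = - f z := by
  have := Mt_unique (Z := Z) (f := f) (g := fun z => - f (-z)) hf (by
    intro z hz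
    have := hf _ (hZ z hz)
    omega) fi (by
    intro z hz w hw e
    have := fi (hZ z hz) (hZ w hw) (by simpa using e)
    omega) (by
    ext y
    simp only [mem_image]
    constructor
    · rintro ⟨z, hz, rfl⟩
      have := hX _ (mem_image_of_mem f hz)
      obtain ⟨w, hw, e⟩ := mem_image.1 this
      exact ⟨-w, hZ w hw, by rw [neg_neg]; omega⟩
    · rintro ⟨z, hz, rfl⟩
      have := hX _ (mem_image_of_mem f (hZ z hz))
      simpa only [mem_image] using this)
  intro z hz
  have := this z hz
  omega

open Classical in
lemma sum_predsS {t n : ℕ} (h : Fin n → ℤ) (hp : par t h) (hm : SP h)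
    (g : Finset ℤ → ℤ) :
    ∑ X ∈ (preds (SS h)).filter Sy, g X =
    ∑ ε : Fin n → Bool with SP (fun i => h i + sg (ε i)), g (SS (fun j => h j + sg (ε j))) := by
  symm
  refine Finset.sum_bij (fun ε _ => SS (fun j => h j + sg (ε j))) ?_ ?_ ?_ ?_
  · intro ε hε
    rw [mem_filter] at hε
    rw [mem_filter, mem_preds]
    refine ⟨?_, Sy_SS _⟩
    let f : ℤ → ℤ := fun z => if 0 < z then z + sg (decide (∃ i, h i = z ∧ ε i = true))
      else z - sg (decide (∃ i, h i = -z ∧ ε i = true))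
    have hf0 : ∀ i, decide (∃ j, h j = h i ∧ ε j = true) = ε i := by
      intro i
      rw [Bool.eq_iff_iff, decide_eq_true_iff]
      constructor
      · rintro ⟨j, hj, e⟩
        rw [← hm.1.injective hj, e]
      · intro e; exact ⟨i, rfl, e⟩
    have hf : ∀ i, f (h i) = h i + sg (ε i) := by
      intro i
      simp only [f, if_pos (hm.2 i), hf0]
    have hf' : ∀ i, f (-h i) = -(h i + sg (ε i)) := by
      intro i
      have : ¬ (0 < - h i) := by have := hm.2 i; omega
      simp only [f, if_neg this, neg_neg, hf0]; ring
    refine ⟨f, ?_, ?_, ?_⟩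
    · intro z hz
      simp only [f, sg]
      split_ifs <;> omega
    · intro z hz w hw e
      obtain ⟨i, hi⟩ := mem_SS.1 (mem_coe.1 hz)
      obtain ⟨j, hj⟩ := mem_SS.1 (mem_coe.1 hw)
      have pi := hε.2.2 i
      have pj := hε.2.2 j
      simp only at pi pj
      have inj : h i + sg (ε i) = h j + sg (ε j) → i = j := fun e => hε.2.1.injective e
      have hz' : z = h i ∨ z = - h i := by omega
      have hw' : w = h j ∨ w = - h j := by omega
      rcases hz' with rfl | rfl <;> rcases hw' with rfl | rfl <;> simp only [hf, hf'] at e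
      · rw [inj e]
      · omega
      · omega
      · rw [inj (by omega)]
    · rw [SS, image_union, image_image, image_image, SS]
      congr 1
      · exact image_congr (fun i _ => hf i)
      · exact image_congr (fun i _ => hf' i)
  · intro ε hε ε' hε' e
    rw [mem_filter] at hε hε'
    have := SS_inj hε.2 hε'.2 e
    funext i
    have := congrFun this i
    exact sg_inj (by simpa using this)
  · intro X hX
    rw [mem_filter, mem_preds] at hX
    obtain ⟨⟨f, hf, fi, rfl⟩, hs⟩ := hX
    have hodd := odd_of_sym hf fi (Sy_SS h) hs
    have hmem : ∀ i, h i ∈ SS h := fun i => mem_SS.2 ⟨i, Or.inl rfl⟩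
    have hmem' : ∀ i, - h i ∈ SS h := fun i => mem_SS.2 ⟨i, Or.inr (by ring)⟩
    have hf' : ∀ i, h i + sg (decide (f (h i) = h i + 1)) = f (h i) := by
      intro i
      rcases hf (h i) (hmem i) with e | e
      · rw [e]; simp [sg]; split_ifs <;> omega
      · rw [e]; simp [sg]
    refine ⟨fun i => decide (f (h i) = h i + 1), ?_, ?_⟩
    · rw [mem_filter]
      refine ⟨mem_univ _, (mono_step hp hm.1 _).strictMono_of_injective ?_, ?_⟩
      · intro i j e
        simp only [hf'] at e
        exact hm.1.injective (fi (hmem i) (hmem j) e)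
      · intro i
        simp only [hf']
        have h1 := hm.2 i
        have h2 := hf _ (hmem i)
        have h3 : f (h i) ≠ 0 := by
          intro e
          have e2 := hodd _ (hmem i)
          have := fi (hmem i) (hmem' i) (by rw [e2, e]; rfl)
          omega
        omega
    · simp only [hf']
      rw [SS, SS, image_union, image_image, image_image]
      congr 1
      exact image_congr (fun i _ => (hodd _ (hmem i)).symm)
  · intro ε _; rfl

open Classical in
lemma goodS_aux {K : Finset ℕ} {t n : ℕ} {u : Fin n → ℤ → ℤ} (hu : ∀ i, u i 0 = 0)
    (H : ∀ h : Fin n → ℤ, SP h → par t h → (W K Sy t (SS h) : ℤ) = FD u h)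
    (h : Fin n → ℤ) (hm : SP h) (hp : par (t+1) h) :
    (∑ X ∈ (preds (SS h)).filter Sy, (W K Sy t X : ℤ)) = FD (fun i => DD (u i)) h := by
  rw [FD_DD_odd u hu h hp hm]
  have := sum_predsS h hp hm (fun X => (W K Sy t X : ℤ))
  convert this using 1
  · refine Finset.sum_congr (by congr) fun ε hε => ?_
    rw [mem_filter] at hε
    exact (H _ hε.2 (par_step hp ε)).symm

lemma goodS_step {K : Finset ℕ} {t n : ℕ} {u : Fin n → ℤ → ℤ} (hu : ∀ i, u i 0 = 0)
    (hh : hs K (t+1) = ∅)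
    (H : ∀ h : Fin n → ℤ, SP h → par t h → (W K Sy t (SS h) : ℤ) = FD u h)
    (h : Fin n → ℤ) (hm : SP h) (hp : par (t+1) h) :
    (W K Sy (t+1) (SS h) : ℤ) = FD (fun i => DD (u i)) h := by
  rw [W, hh, if_pos (empty_subset _), sdiff_empty, Nat.cast_sum]
  convert goodS_aux hu H h hm hp

lemma FD_congr {n : ℕ} {u v : Fin n → ℤ → ℤ} {h : Fin n → ℤ} (e : ∀ i j, u i (h j) = v i (h j)) :
    FD u h = FD v h := by
  unfold FD; congr 1; ext j i; exact e i j

lemma goodS_hole {K : Finset ℕ} {t n : ℕ} {u : Fin n → ℤ → ℤ} (hu : ∀ i, u i 0 = 0)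
    (hh : hs K (t+1) = {-1, 1})
    (H : ∀ h : Fin n → ℤ, SP h → par t h → (W K Sy t (SS h) : ℤ) = FD u h)
    (h : Fin (n+1) → ℤ) (hm : SP h) (hp : par (t+1) h) :
    (W K Sy (t+1) (SS h) : ℤ) =
      FD (Fin.cons (fun y => dl 1 y - dl (-1) y) (fun i => DD (u i)) : Fin (n+1) → ℤ → ℤ) h := by
  have e0 : FD (Fin.cons (fun y => dl 1 y - dl (-1) y) (fun i => DD (u i)) : Fin (n+1) → ℤ → ℤ) h
     = FD (Fin.cons (dl 1) (fun i => DD (u i)) : Fin (n+1) → ℤ → ℤ) h := by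
    refine FD_congr fun i j => ?_
    refine Fin.cases ?_ (fun i => ?_) i
    · have := hm.2 j
      have : h j ≠ -1 := by omega
      simp [dl, this]
    · simp
  rw [e0, W, hh]
  by_cases h1 : ∃ j, h j = 1
  swap
  · rw [FD_cons_zero _ _ _ (fun j e => h1 ⟨j, e⟩), if_neg]; · simp
    intro hsub
    obtain ⟨j, hj⟩ := mem_SS.1 (hsub (by simp : (1:ℤ) ∈ _))
    have := hm.2 j
    exact h1 ⟨j, by omega⟩
  obtain ⟨j, hj⟩ := h1
  have hj0 : j = 0 := by
    by_contra hne
    have h2 := hm.1 (Fin.pos_of_ne_zero hne)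
    have := hm.2 0
    omega
  subst hj0
  rw [FD_cons _ _ _ hm.1.injective 0 hj, if_pos]
  · have e : SS h \ {-1, 1} = SS (fun k => h ((0 : Fin (n+1)).succAbove k)) := by
      ext y
      simp only [mem_sdiff, mem_SS, mem_insert, mem_singleton, Fin.zero_succAbove]
      constructor
      · rintro ⟨⟨i, hi⟩, hy⟩
        have : i ≠ 0 := by rintro rfl; omega
        obtain ⟨k, rfl⟩ := Fin.exists_succ_eq.2 this
        exact ⟨k, hi⟩
      · rintro ⟨k, hk⟩
        have := hm.1 (Fin.succ_pos k)
        exact ⟨⟨_, hk⟩, by omega⟩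
    rw [e, Nat.cast_sum]
    simp only [Fin.val_zero, pow_zero, one_mul]
    convert goodS_aux hu H (fun k => h ((0 : Fin (n+1)).succAbove k))
      ⟨hm.1.comp (Fin.strictMono_succAbove 0), fun k => hm.2 _⟩ (fun k => hp _)
  · intro y hy
    simp only [mem_insert, mem_singleton] at hy
    rw [mem_SS]
    exact ⟨0, by omega⟩

end PQ

namespace PQ
open Finset Matrix

def walk : ℕ → ℤ → ℤ → ℤ
  | 0, s => dl s
  | n+1, s => DD (walk n s)

lemma walk_shift (n : ℕ) : ∀ s y, walk n s y = walk n 0 (y - s) := by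
  induction n with
  | zero => intro s y; simp only [walk, dl, sub_eq_zero]
  | succ n ih =>
    intro s y
    simp only [walk, DD]
    rw [ih s, ih s]
    congr 2 <;> ring

lemma walk_neg (n : ℕ) : ∀ y, walk n 0 (-y) = walk n 0 y := by
  induction n with
  | zero => intro y; simp only [walk, dl, neg_eq_zero]
  | succ n ih =>
    intro y
    simp only [walk, DD]
    rw [← ih (-y-1), ← ih (-y+1), add_comm]
    congr 2 <;> ring

lemma walk_neg_small (n : ℕ) : ∀ y : ℤ, y < -n → walk n 0 y = 0 := by
  induction n with
  | zero => intro y hy; simp only [walk, dl]; rw [if_neg]; rintro rfl; simp at hy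
  | succ n ih =>
    intro y hy
    simp only [walk, DD]
    push_cast at hy
    rw [ih _ (by omega), ih _ (by omega)]; rfl

lemma walk_choose (n : ℕ) : ∀ j : ℕ, walk n 0 (2 * j - n) = (n.choose j : ℤ) := by
  induction n with
  | zero =>
    intro j
    cases j <;> simp [walk, dl]
    omega
  | succ n ih =>
    intro j
    simp only [walk, DD]
    cases j with
    | zero =>
      rw [walk_neg_small n _ (by push_cast; omega)]
      have := ih 0
      simp only [Nat.choose_zero_right] at this ⊢
      rw [zero_add, ← this]; congr 1; push_cast; ring
    | succ j =>
      rw [Nat.choose_succ_succ, Nat.cast_add (n.choose j), ← ih j, ← ih (j+1)]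
      congr 2 <;> push_cast <;> ring

def hv {r : ℕ} (i : Fin (2*r)) : Fin r := ⟨i.1 / 2, by omega⟩

def rowsA (t : ℕ) {r : ℕ} (κ : Fin r → ℕ) : Fin (2*r) → ℤ → ℤ :=
  fun i => walk (t - 2 * κ (hv i)) (if i.1 % 2 = 0 then -1 else 1)

def rowsO (t : ℕ) {r : ℕ} (κ : Fin r → ℕ) : Fin r → ℤ → ℤ :=
  fun i y => walk (t - 2 * κ i) 1 y - walk (t - 2 * κ i) (-1) y

def Good (K : Finset ℕ) (t : ℕ) : Prop := ∃ (r : ℕ) (κ : Fin r → ℕ), Function.Injective κ ∧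
  (∀ i, 2 * κ i ≤ t) ∧
  (∀ h : Fin (2*r) → ℤ, StrictMono h → par t h →
      (W K (fun _ => True) t (univ.image h) : ℤ) = FD (rowsA t κ) h) ∧
  (∀ h : Fin r → ℤ, SP h → par t h → (W K Sy t (SS h) : ℤ) = FD (rowsO t κ) h) ∧
  (∀ Y, W K (fun _ => True) t Y ≠ 0 → Y.card = 2 * r ∧ ∀ y ∈ Y, (y + t) % 2 = 1)

lemma rowsO_zero (t : ℕ) {r : ℕ} (κ : Fin r → ℕ) (i) : rowsO t κ i 0 = 0 := by
  simp only [rowsO]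
  rw [walk_shift _ 1, walk_shift _ (-1), ← walk_neg _ (0 - -1)]; simp

lemma rowsA_succ {t : ℕ} {r : ℕ} {κ : Fin r → ℕ} (h : ∀ i, 2 * κ i ≤ t) :
    (fun i => DD (rowsA t κ i)) = rowsA (t+1) κ := by
  funext i
  simp only [rowsA]
  rw [Nat.succ_sub (h _)]; rfl

lemma rowsO_succ {t : ℕ} {r : ℕ} {κ : Fin r → ℕ} (h : ∀ i, 2 * κ i ≤ t) :
    (fun i => DD (rowsO t κ i)) = rowsO (t+1) κ := by
  funext i y
  simp only [rowsO]
  rw [Nat.succ_sub (h _)]; simp only [walk, DD, rowsO]; ring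

lemma preds_parity {X Z : Finset ℤ} (h : Mt X Z) {t : ℕ} (hX : ∀ y ∈ X, (y + t) % 2 = 1) :
    ∀ y ∈ Z, (y + (t + 1 : ℕ)) % 2 = 1 := by
  obtain ⟨f, hf, -, rfl⟩ := h
  intro y hy
  have := hX _ (mem_image_of_mem f hy)
  have := hf y hy
  push_cast
  omega

open Classical in
lemma W_ne {K : Finset ℕ} {Pr} {t : ℕ} {Y : Finset ℤ} (h : W K Pr (t+1) Y ≠ 0) :
    hs K (t+1) ⊆ Y ∧ ∃ X, Mt X (Y \ hs K (t+1)) ∧ Pr X ∧ W K Pr t X ≠ 0 := by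
  rw [W] at h
  by_cases h1 : hs K (t+1) ⊆ Y
  · rw [if_pos h1] at h
    obtain ⟨X, hX, h2⟩ := Finset.exists_ne_zero_of_sum_ne_zero h
    rw [mem_filter, mem_preds] at hX
    exact ⟨h1, X, hX.1, hX.2, h2⟩
  · rw [if_neg h1] at h; exact absurd rfl h

lemma good (K : Finset ℕ) (hK : ∀ κ ∈ K, 0 < κ) (t : ℕ) : Good K t := by
  induction t with
  | zero =>
    refine ⟨0, Fin.elim0, fun i => i.elim0, fun i => i.elim0, ?_, ?_, ?_⟩
    · intro h _ _
      have : univ.image h = ∅ := by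
        ext y; simp
      simp [W, FD, this]
    · intro h _ _
      simp [W, FD, SS]
    · intro Y hY
      by_cases e : Y = ∅
      · subst e; simp
      · simp [W, e] at hY
  | succ t ih =>
    obtain ⟨r, κ, hi, hle, hA, hS, hC⟩ := ih
    by_cases hk : ∃ q ∈ K, t + 1 = 2 * q
    · have hh : hs K (t+1) = {-1, 1} := by rw [hs, if_pos hk]
      obtain ⟨q, hq, hqt⟩ := hk
      refine ⟨r+1, Fin.cons q κ, ?_, ?_, ?_, ?_, ?_⟩
      · rw [Fin.cons_injective_iff]
        refine ⟨?_, hi⟩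
        rintro ⟨i, hi⟩
        have := hle i
        omega
      · intro i
        refine Fin.cases ?_ (fun i => ?_) i
        · simp [hqt]
        · simp only [Fin.cons_succ]; have := hle i; omega
      · intro h hm hp
        have := goodA_hole hh (by omega) hA h hm hp
        rw [rowsA_succ hle] at this
        rw [this]
        congr 1
        funext i
        refine Fin.cases ?_ (fun i => Fin.cases ?_ (fun i => ?_) i) i
        · show dl (-1) = rowsA (t+1) (Fin.cons q κ : Fin (r+1) → ℕ) ⟨0, by omega⟩
          have e1 : hv (⟨0, by omega⟩ : Fin (2*(r+1))) = 0 := by ext; simp [hv]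
          simp only [rowsA, e1, Fin.cons_zero, hqt, Nat.sub_self, Nat.zero_mod, if_true]; rfl
        · show dl 1 = rowsA (t+1) (Fin.cons q κ : Fin (r+1) → ℕ) ⟨1, by omega⟩
          have e1 : hv (⟨1, by omega⟩ : Fin (2*(r+1))) = 0 := by ext; simp [hv]
          have e2 : ¬ (1 % 2 = 0) := by norm_num
          simp only [rowsA, e1, if_neg e2, Fin.cons_zero, hqt, Nat.sub_self]; rfl
        · show rowsA (t+1) κ i = rowsA (t+1) (Fin.cons q κ : Fin (r+1) → ℕ) ⟨i.1 + 1 + 1, by omega⟩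
          have e1 : hv (⟨i.1+1+1, by omega⟩ : Fin (2*(r+1))) = (hv i).succ := by
            ext; simp [hv]; omega
          have e2 : (i.1+1+1) % 2 = i.1 % 2 := by omega
          simp only [rowsA, e1, e2, Fin.cons_succ]
      · intro h hm hp
        have := goodS_hole (rowsO_zero t κ) hh hS h hm hp
        rw [rowsO_succ hle] at this
        rw [this]
        congr 1
        funext i
        refine Fin.cases ?_ (fun i => ?_) i
        · funext y
          simp only [rowsO, Fin.cons_zero, hqt, Nat.sub_self]; rfl
        · funext y; simp only [rowsO, Fin.cons_succ]
      · intro Y hY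
        obtain ⟨hsub, X, hM, -, hX⟩ := W_ne hY
        rw [hh] at hsub hM
        obtain ⟨hc, hpar⟩ := hC X hX
        constructor
        · rw [hM.card, card_sdiff_of_subset hsub] at hc
          have := card_le_card hsub
          have e : ({-1, 1} : Finset ℤ).card = 2 := by decide
          omega
        · intro y hy
          by_cases hy2 : y ∈ ({-1, 1} : Finset ℤ)
          · simp only [mem_insert, mem_singleton] at hy2; push_cast; omega
          · exact preds_parity hM hpar y (mem_sdiff.2 ⟨hy, hy2⟩)
    · have hh : hs K (t+1) = ∅ := by rw [hs, if_neg hk]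
      refine ⟨r, κ, hi, fun i => (hle i).trans (Nat.le_succ t), ?_, ?_, ?_⟩
      · intro h hm hp
        rw [goodA_step hh hA h hm hp, rowsA_succ hle]
      · intro h hm hp
        rw [goodS_step (rowsO_zero t κ) hh hS h hm hp, rowsO_succ hle]
      · intro Y hY
        obtain ⟨hsub, X, hM, -, hX⟩ := W_ne hY
        rw [hh, sdiff_empty] at hM
        obtain ⟨hc, hpar⟩ := hC X hX
        exact ⟨hM.card ▸ hc, preds_parity hM hpar⟩

lemma W_sy_ne {K : Finset ℕ} {t : ℕ} : ∀ {Y : Finset ℤ}, W K Sy t Y ≠ 0 →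
    W K (fun _ => True) t Y ≠ 0 := by
  induction t with
  | zero => intro Y h; exact h
  | succ t ih =>
    intro Y h
    obtain ⟨hsub, X, hM, -, hX⟩ := W_ne h
    rw [W, if_pos hsub]
    have := ih hX
    have hm : X ∈ (preds (Y \ hs K (t+1))).filter (fun _ => True) := by
      rw [mem_filter, mem_preds]; exact ⟨hM, trivial⟩
    exact fun e => this (Finset.sum_eq_zero_iff.1 e X (by convert hm))

end PQ

namespace PQ
open Finset Matrix

lemma det_blocks {r : ℕ} (A B : Matrix (Fin r) (Fin r) ℤ) :
    (Matrix.fromBlocks A B B A).det = (A + B).det * (A - B).det := by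
  have h : Matrix.fromBlocks 1 1 0 1 * Matrix.fromBlocks A B B A * Matrix.fromBlocks 1 (-1) 0 1
      = Matrix.fromBlocks (A + B) 0 B (A - B) := by
    rw [Matrix.fromBlocks_multiply, Matrix.fromBlocks_multiply]
    congr 1 <;> simp <;> abel
  have := congrArg Matrix.det h
  rw [Matrix.det_mul, Matrix.det_mul, Matrix.det_fromBlocks_zero₁₂, Matrix.det_fromBlocks_zero₂₁,
    Matrix.det_fromBlocks_zero₂₁] at this
  simpa using this

noncomputable def eC (r : ℕ) : Fin r ⊕ Fin r ≃ Fin (2*r) := by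
  refine Equiv.ofBijective (Sum.elim (fun j => ⟨r + j, by omega⟩) (fun j => ⟨r - 1 - j, by omega⟩)) ?_
  rw [Fintype.bijective_iff_injective_and_card]
  refine ⟨?_, by simp; ring⟩
  rintro (i | i) (j | j) h <;> simp only [Sum.elim_inl, Sum.elim_inr, Fin.mk.injEq] at h
  · congr 1; ext; omega
  · omega
  · omega
  · congr 1; ext; omega

noncomputable def eR (r : ℕ) : Fin r ⊕ Fin r ≃ Fin (2*r) := by
  refine Equiv.ofBijective (Sum.elim (fun j => ⟨2*j+1, by omega⟩) (fun j => ⟨2*j, by omega⟩)) ?_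
  rw [Fintype.bijective_iff_injective_and_card]
  refine ⟨?_, by simp; ring⟩
  rintro (i | i) (j | j) h <;> simp only [Sum.elim_inl, Sum.elim_inr, Fin.mk.injEq] at h
  · congr 1; ext; omega
  · omega
  · omega
  · congr 1; ext; omega

lemma eC_inl {r : ℕ} (j : Fin r) : (eC r (Sum.inl j)).1 = r + j := rfl
lemma eC_inr {r : ℕ} (j : Fin r) : (eC r (Sum.inr j)).1 = r - 1 - j := rfl
lemma eR_inl {r : ℕ} (j : Fin r) : (eR r (Sum.inl j)).1 = 2*j+1 := rfl
lemma eR_inr {r : ℕ} (j : Fin r) : (eR r (Sum.inr j)).1 = 2*j := rfl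

noncomputable def sgn (r : ℕ) : ℤ := (Equiv.Perm.sign ((eR r).symm.trans (eC r)) : ℤ)

lemma det_reindex {r : ℕ} (M : Matrix (Fin (2*r)) (Fin (2*r)) ℤ) :
    (M.submatrix (eC r) (eR r)).det = sgn r * M.det := by
  have : M.submatrix (eC r) (eR r) =
      (M.submatrix ((eR r).symm.trans (eC r)) id).submatrix (eR r) (eR r) := by
    ext i j; simp
  rw [this, Matrix.det_submatrix_equiv_self, Matrix.det_permute, sgn]
  rfl

def hT {r : ℕ} (h : Fin r → ℤ) (i : Fin (2*r)) : ℤ :=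
  if hi : i.1 < r then - h ⟨r - 1 - i.1, by omega⟩ else h ⟨i.1 - r, by omega⟩

lemma hT_inl {r : ℕ} (h : Fin r → ℤ) (j : Fin r) : hT h (eC r (Sum.inl j)) = h j := by
  have : ¬ (eC r (Sum.inl j)).1 < r := by rw [eC_inl]; omega
  rw [hT, dif_neg this]; congr 1; ext; simp only [eC_inl]; omega

lemma hT_inr {r : ℕ} (h : Fin r → ℤ) (j : Fin r) : hT h (eC r (Sum.inr j)) = - h j := by
  have : (eC r (Sum.inr j)).1 < r := by rw [eC_inr]; omega
  rw [hT, dif_pos this]; congr 2; ext; simp only [eC_inr]; omega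

lemma hT_mono {r : ℕ} {h : Fin r → ℤ} (hm : SP h) : StrictMono (hT h) := by
  intro i j hij
  have hij' : i.1 < j.1 := hij
  unfold hT
  split_ifs with h1 h2 h2
  · have := hm.1 (show (⟨r - 1 - j.1, by omega⟩ : Fin r) < ⟨r - 1 - i.1, by omega⟩ by
      rw [Fin.mk_lt_mk]; omega)
    omega
  · have a1 := hm.2 ⟨r - 1 - i.1, by omega⟩
    have a2 := hm.2 ⟨j.1 - r, by omega⟩
    omega
  · omega
  · exact hm.1 (by rw [Fin.mk_lt_mk]; omega)

lemma hT_image {r : ℕ} (h : Fin r → ℤ) : univ.image (hT h) = SS h := by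
  ext y
  rw [mem_SS, mem_image]
  constructor
  · rintro ⟨i, -, rfl⟩
    obtain ⟨e, rfl⟩ := (eC r).surjective i
    rcases e with j | j
    · exact ⟨j, Or.inl (hT_inl h j).symm⟩
    · exact ⟨j, Or.inr (by rw [hT_inr]; ring)⟩
  · rintro ⟨j, hj | hj⟩
    · exact ⟨_, mem_univ _, (hT_inl h j).trans hj⟩
    · exact ⟨_, mem_univ _, (hT_inr h j).trans (by omega)⟩

lemma FD_rowsA {t r : ℕ} (κ : Fin r → ℕ) (h : Fin r → ℤ) :
    sgn r * FD (rowsA t κ) (hT h) =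
     (Matrix.of fun j i => walk (t - 2 * κ i) 1 (h j) + walk (t - 2 * κ i) (-1) (h j)).det *
     FD (rowsO t κ) h := by
  unfold FD
  rw [← det_reindex]
  have e1 : (Matrix.of fun j i => rowsA t κ i (hT h j)).submatrix (eC r) (eR r) =
    Matrix.fromBlocks (Matrix.of fun j i => walk (t - 2 * κ i) 1 (h j))
      (Matrix.of fun j i => walk (t - 2 * κ i) (-1) (h j))
      (Matrix.of fun j i => walk (t - 2 * κ i) (-1) (h j))
      (Matrix.of fun j i => walk (t - 2 * κ i) 1 (h j)) := by
    have v1 : ∀ i : Fin r, hv (eR r (Sum.inl i)) = i := by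
      intro i; ext; simp only [hv, eR_inl]; omega
    have v2 : ∀ i : Fin r, hv (eR r (Sum.inr i)) = i := by
      intro i; ext; simp only [hv, eR_inr]; omega
    have m1 : ∀ i : Fin r, ¬ (eR r (Sum.inl i)).1 % 2 = 0 := by
      intro i; rw [eR_inl]; omega
    have m2 : ∀ i : Fin r, (eR r (Sum.inr i)).1 % 2 = 0 := by
      intro i; rw [eR_inr]; omega
    have w : ∀ n y, walk n 1 (-y) = walk n (-1) y := by
      intro n y; rw [walk_shift, walk_shift n (-1), ← walk_neg]; congr 1; ring
    have w' : ∀ n y, walk n (-1) (-y) = walk n 1 y := by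
      intro n y; rw [← w, neg_neg]
    ext (j | j) (i | i) <;>
    simp [rowsA, hT_inl, hT_inr, v1, v2, m1, m2, w, w']
  rw [e1, det_blocks]
  rfl

lemma walk_plus {p h : ℕ} (hp : 0 < p) : ((walk (2*p-1) 1 (2*h) + walk (2*p-1) (-1) (2*h) : ℤ) : ℚ)
    = EE p h := by
  have : walk (2*p-1) 1 (2*h) + walk (2*p-1) (-1) (2*h) = walk (2*p) 0 (2*h) := by
    obtain ⟨q, rfl⟩ : ∃ q, p = q + 1 := ⟨p - 1, by omega⟩
    show _ = walk (2*q+1+1) 0 (2*h)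
    rw [walk_shift, walk_shift _ (-1)]
    simp only [walk, DD]
    rw [show 2 * (q+1) - 1 = 2*q+1 by omega, sub_neg_eq_add]; simp only [walk, DD]
  rw [this]
  have e := walk_choose (2*p) (p+h)
  rw [show (2 * ((p + h : ℕ):ℤ) - ((2 * p : ℕ) : ℤ)) = 2 * h by push_cast; ring] at e
  rw [e, EE]; simp

lemma walk_minus {p h : ℕ} (hp : 0 < p) (hh : 0 < h) :
    ((walk (2*p-1) 1 (2*h) - walk (2*p-1) (-1) (2*h) : ℤ) : ℚ) = OO p h := by
  obtain ⟨q, rfl⟩ : ∃ q, p = q + 1 := ⟨p - 1, by omega⟩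
  obtain ⟨g, rfl⟩ : ∃ g, h = g + 1 := ⟨h - 1, by omega⟩
  rw [walk_shift, walk_shift _ (-1), show 2 * (q+1) - 1 = 2*q+1 by omega]
  have e1 := walk_choose (2*q+1) (q+g+1)
  have e2 := walk_choose (2*q+1) (q+g+2)
  rw [show (2 * ((q + g + 1 : ℕ):ℤ) - ((2 * q + 1 : ℕ) : ℤ)) = 2 * ((g+1 : ℕ):ℤ) - 1 by push_cast; ring] at e1
  rw [show (2 * ((q + g + 2 : ℕ):ℤ) - ((2 * q + 1 : ℕ) : ℤ)) = 2 * ((g+1 : ℕ):ℤ) - -1 by push_cast; ring] at e2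
  rw [e1, e2, OO, EE]
  have k1 : (2*(q+1)).choose (q+1+(g+1)) = (2*q+1).choose (q+g+1) + (2*q+1).choose (q+g+2) := by
    rw [show 2*(q+1) = (2*q+1)+1 by ring, show q+1+(g+1) = (q+g+1)+1 by ring, Nat.choose_succ_succ]
  rw [k1]
  have k2 : ((2*q+1).choose (q+g+2) : ℚ) * (q+g+2) = (2*q+1).choose (q+g+1) * (q - g) := by
    have := Nat.choose_succ_right_eq (2*q+1) (q+g+1)
    by_cases hl : q + g + 1 ≤ 2*q+1
    · rw [show 2*q+1-(q+g+1) = q - g by omega] at this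
      have h2 := congrArg (Nat.cast : ℕ → ℚ) this
      push_cast [Nat.cast_sub (show g ≤ q by omega)] at h2
      rw [show (q:ℚ)+g+2 = q+g+1+1 by ring, h2]
    · rw [Nat.choose_eq_zero_of_lt (by omega), Nat.choose_eq_zero_of_lt (by omega)]; simp
  push_cast
  have : (q:ℚ) + 1 ≠ 0 := by positivity
  field_simp
  linear_combination (-1) * k2

open Classical in
noncomputable def FF (x L : ℕ) : Finset (Finset ℤ) :=
  ((Icc (-(L:ℤ)) L).powerset).filter (fun Y => Sy Y ∧ ∀ y ∈ Y, 2 * (x:ℤ) - 2 < |y|)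

def tw (x : ℕ) {N r : ℕ} (h : Fin r → Fin N) : Fin r → ℤ := fun j => 2 * ((x + (h j).1 : ℕ) : ℤ)

lemma tw_SP {x N r : ℕ} (hx : 0 < x) {h : Fin r → Fin N} (hm : StrictMono h) : SP (tw x h) := by
  refine ⟨fun i j hij => ?_, fun i => ?_⟩
  · have : (h i).1 < (h j).1 := hm hij
    simp only [tw]; push_cast; omega
  · simp only [tw]; push_cast; omega

lemma sum_conv {x N r : ℕ} (hx : 0 < x) (g : Finset ℤ → ℚ)
    (hg : ∀ Y, g Y ≠ 0 → Y.card = 2 * r ∧ ∀ y ∈ Y, y % 2 = 0) :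
    ∑ Y ∈ FF x (2*(x+N)-1), g Y = smSum N r (fun h => g (SS (tw x h))) := by
  classical
  unfold smSum
  rw [← Finset.sum_image (s := univ.filter fun h : Fin r → Fin N => StrictMono h)
    (g := fun h => SS (tw x h)) (f := g)]
  · symm
    apply Finset.sum_subset
    · intro Y hY
      obtain ⟨h, hh, rfl⟩ := mem_image.1 hY
      rw [mem_filter] at hh
      rw [FF, mem_filter, mem_powerset]
      have key : ∀ y ∈ SS (tw x h), (|y| < 2*((x:ℤ)+N) ∧ 2*(x:ℤ)-2 < |y|) := by
        intro y hy
        obtain ⟨i, hi⟩ := mem_SS.1 hy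
        have : |y| = 2 * ((x + (h i).1 : ℕ) : ℤ) := by
          rw [show (2 * ((x + (h i).1 : ℕ) : ℤ)) = tw x h i from rfl]
          have := (tw_SP hx hh.2).2 i
          rcases hi with hi | hi
          · rw [← hi, abs_of_pos this]
          · rw [hi] at this ⊢; rw [← abs_neg, abs_of_pos this]
        have := (h i).2
        push_cast at *
        constructor <;> omega
      refine ⟨?_, Sy_SS _, fun y hy => (key y hy).2⟩
      intro y hy
      have := (key y hy).1
      rw [abs_lt] at this
      rw [mem_Icc]
      push_cast [show 1 ≤ 2 * (x+N) by omega]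
      omega
    · intro Y hY hn
      by_contra hne
      obtain ⟨hc, he⟩ := hg Y hne
      rw [FF, mem_filter, mem_powerset] at hY
      obtain ⟨hsub, hsy, hab⟩ := hY
      apply hn
      set P := Y.filter (0 < ·) with hP
      have hYP : Y = P ∪ P.image (fun y => -y) := by
        ext y
        simp only [hP, mem_union, mem_image, mem_filter]
        constructor
        · intro hy
          have h0 := hab y hy
          rcases lt_trichotomy y 0 with h | h | h
          · right; exact ⟨-y, ⟨hsy y hy, by omega⟩, by ring⟩
          · subst h; simp at h0; omega
          · left; exact ⟨hy, h⟩
        · rintro (h | ⟨z, hz, rfl⟩)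
          · exact h.1
          · exact hsy z hz.1
      have hPc : P.card = r := by
        have h1 : Disjoint P (P.image (fun y => -y)) := by
          rw [Finset.disjoint_left]
          intro y hy hy2
          obtain ⟨z, hz, rfl⟩ := mem_image.1 hy2
          have a1 := (mem_filter.1 hy).2
          have a2 := (mem_filter.1 hz).2
          omega
        have h2 := card_union_of_disjoint h1
        rw [← hYP, card_image_of_injective _ neg_injective, hc] at h2
        omega
      let o := P.orderEmbOfFin hPc
      have ho : ∀ i, o i ∈ P := fun i => P.orderEmbOfFin_mem hPc i
      have hb : ∀ i, o i % 2 = 0 ∧ 2 * (x:ℤ) ≤ o i ∧ o i < 2 * (x + N) := by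
        intro i
        have h1 := mem_filter.1 (ho i)
        have h2 := hab _ h1.1
        rw [abs_of_pos h1.2] at h2
        have h3 := he _ h1.1
        have h4 := mem_Icc.1 (hsub h1.1)
        push_cast [show 1 ≤ 2 * (x+N) by omega] at h4
        omega
      let h : Fin r → Fin N := fun i => ⟨(o i / 2 - x).toNat, by have := hb i; omega⟩
      have hto : tw x h = o := by
        funext i
        have := hb i
        simp only [tw, h]
        push_cast
        rw [Int.toNat_of_nonneg (by omega)]; omega
      refine mem_image.2 ⟨h, mem_filter.2 ⟨mem_univ _, ?_⟩, ?_⟩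
      · intro i j hij
        have h1 : o i < o j := o.strictMono hij
        have := hb i
        have := hb j
        show (o i / 2 - x).toNat < (o j / 2 - x).toNat
        omega
      · rw [hto]
        have h1 : univ.image (fun i => o i) = P := by
          apply coe_injective
          rw [coe_image, coe_univ, Set.image_univ]
          exact P.range_orderEmbOfFin hPc
        rw [SS, hYP, h1]
        congr 1
        rw [← h1, image_image]; rfl
  · intro h hh g hg' e
    have h1 := SS_inj (tw_SP hx (mem_filter.1 hh).2) (tw_SP hx (mem_filter.1 hg').2) e
    funext i
    have := congrFun h1 i
    simp only [tw] at this
    ext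
    omega

theorem final_count (K : Finset ℕ) (hK : ∀ κ ∈ K, 0 < κ) (c x N : ℕ) (hc : 0 < c) (hx : 0 < x)
    (hN : c ≤ N) :
    ∑ Y ∈ FF x (2*(x+N)-1), W K (fun _ => True) (2*c-1) Y =
      (∑ Y ∈ FF x (2*(x+N)-1), W K Sy (2*c-1) Y)^2 := by
  obtain ⟨r, κ, hi, hle, hA, hS, hC⟩ := good K hK (2*c-1)
  let p : Fin r → ℕ := fun i => c - κ i
  have hp : ∀ i, 0 < p i := by intro i; have := hle i; simp only [p]; omega
  have hpi : Function.Injective p := by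
    intro i j e
    have h1 := hle i
    have h2 := hle j
    simp only [p] at e
    exact hi (by omega)
  have htp : ∀ i, 2*c-1 - 2 * κ i = 2 * p i - 1 := by intro i; simp only [p]; omega
  have core := core_identity (N := N) x p hp hpi (by intro i; simp only [p]; omega)
  have hpar : ∀ h : Fin r → Fin N, par (2*c-1) (tw x h) := by
    intro h i; simp only [tw]; push_cast [show 1 ≤ 2*c by omega]; omega
  have hparT : ∀ h : Fin r → Fin N, par (2*c-1) (hT (tw x h)) := by
    intro h i
    obtain ⟨e, rfl⟩ := (eC r).surjective i
    rcases e with j | j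
    · rw [hT_inl]; exact hpar h j
    · rw [hT_inr]; have := hpar h j; omega
  have hOm : ∀ h : Fin r → Fin N, ((FD (rowsO (2*c-1) κ) (tw x h) : ℤ) : ℚ) =
      (Matrix.of fun i j => OO (p i) (x + h j)).det := by
    intro h
    rw [FD, ← Matrix.det_transpose, ← eq_intCast (Int.castRingHom ℚ), RingHom.map_det]
    congr 1
    ext i j
    simp only [RingHom.mapMatrix_apply, Matrix.map_apply, Matrix.transpose_apply, Matrix.of_apply,
      rowsO, tw, htp]
    exact walk_minus (hp i) (by omega)
  have hEm : ∀ h : Fin r → Fin N, (((Matrix.of fun j i => walk (2*c-1 - 2 * κ i) 1 (tw x h j) +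
      walk (2*c-1 - 2 * κ i) (-1) (tw x h j)).det : ℤ) : ℚ) =
      (Matrix.of fun i j => EE (p i) (x + h j)).det := by
    intro h
    rw [← Matrix.det_transpose, ← eq_intCast (Int.castRingHom ℚ), RingHom.map_det]
    congr 1
    ext i j
    simp only [RingHom.mapMatrix_apply, Matrix.map_apply, Matrix.transpose_apply, Matrix.of_apply,
      tw, htp]
    exact walk_plus (hp i)
  have hC' : ∀ Y, W K (fun _ => True) (2*c-1) Y ≠ 0 → Y.card = 2 * r ∧ ∀ y ∈ Y, y % 2 = 0 := by
    intro Y hY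
    obtain ⟨h1, h2⟩ := hC Y hY
    refine ⟨h1, fun y hy => ?_⟩
    have := h2 y hy
    push_cast [show 1 ≤ 2*c by omega] at this
    omega
  have s1 := sum_conv (N := N) (r := r) hx (fun Y => (W K (fun _ => True) (2*c-1) Y : ℚ))
    (fun Y hY => hC' Y (by exact_mod_cast hY))
  have s2 := sum_conv (N := N) (r := r) hx (fun Y => (W K Sy (2*c-1) Y : ℚ))
    (fun Y hY => hC' Y (W_sy_ne (by exact_mod_cast hY)))
  have s1' : (sgn r : ℚ) * ∑ Y ∈ FF x (2*(x+N)-1), (W K (fun _ => True) (2*c-1) Y : ℚ) =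
      smSum N r (fun h => (Matrix.of fun i j => EE (p i) (x + h j)).det *
        (Matrix.of fun i j => OO (p i) (x + h j)).det) := by
    rw [s1]
    unfold smSum
    rw [Finset.mul_sum]
    refine Finset.sum_congr rfl fun h hh => ?_
    rw [mem_filter] at hh
    beta_reduce
    rw [← hT_image]
    have a1 := hA _ (hT_mono (tw_SP hx hh.2)) (hparT h)
    have a2 : (W K (fun _ => True) (2*c-1) (univ.image (hT (tw x h))) : ℚ) =
      ((FD (rowsA (2*c-1) κ) (hT (tw x h)) : ℤ) : ℚ) := by exact_mod_cast a1
    rw [a2, ← hOm, ← hEm, ← Int.cast_mul, ← Int.cast_mul, FD_rowsA]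
  have s2' : ∑ Y ∈ FF x (2*(x+N)-1), (W K Sy (2*c-1) Y : ℚ) =
      smSum N r (fun h => (Matrix.of fun i j => OO (p i) (x + h j)).det) := by
    rw [s2]
    unfold smSum
    refine Finset.sum_congr rfl fun h hh => ?_
    rw [mem_filter] at hh
    have a1 := hS _ (tw_SP hx hh.2) (hpar h)
    beta_reduce
    rw [← hOm]; exact_mod_cast a1
  rw [core, ← s2'] at s1'
  have s3 : sgn r * (∑ Y ∈ FF x (2*(x+N)-1), W K (fun _ => True) (2*c-1) Y : ℕ) =
      ((∑ Y ∈ FF x (2*(x+N)-1), W K Sy (2*c-1) Y : ℕ) : ℤ) ^ 2 := by exact_mod_cast s1'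
  have hs : sgn r = 1 ∨ sgn r = -1 := by
    unfold sgn
    rcases Int.units_eq_one_or (Equiv.Perm.sign ((eR r).symm.trans (eC r))) with h | h <;> simp [h]
  rcases hs with h | h
  · rw [h, one_mul] at s3; exact_mod_cast s3
  · rw [h] at s3
    generalize (∑ Y ∈ FF x (2*(x+N)-1), W K (fun _ => True) (2*c-1) Y) = A at *
    generalize (∑ Y ∈ FF x (2*(x+N)-1), W K Sy (2*c-1) Y) = B at *
    have h1 : (0:ℤ) ≤ (B:ℤ)^2 := sq_nonneg _
    have h2 : (B:ℤ)^2 = 0 := by omega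
    have h3 : A = 0 := by omega
    have h4 : B ^ 2 = 0 := by exact_mod_cast h2
    rw [h3, h4]

end PQ

namespace PQ
open Finset

abbrev Cell := ℤ × ℤ

def AdjC (c d : Cell) : Prop :=
  (d.1 = c.1 ∧ (d.2 = c.2 + 1 ∨ d.2 = c.2 - 1)) ∨
  (d.2 = c.2 ∧ ((d.1 = c.1 + 1 ∧ (c.2 - c.1) % 2 = 0) ∨ (d.1 = c.1 - 1 ∧ (c.2 - c.1) % 2 = 1)))

structure PM (D : Cell → Prop) (M : Cell → Cell → Prop) : Prop where
  adj : ∀ c d, M c d → AdjC c d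
  symm : ∀ c d, M c d → M d c
  mem : ∀ c d, M c d → D c
  ex : ∀ c, D c → ∃ d, M c d
  uniq : ∀ c d e, M c d → M c e → d = e

structure Dat where
  A : ℕ
  Bk : ℕ → Finset ℤ
  Wt : ℕ → Finset ℤ
  H : ℕ → Finset ℤ
  A_pos : 0 < A
  parB : ∀ m Y, Y ∈ Bk m → (Y - m) % 2 = 0
  parW : ∀ m Y, Y ∈ Wt m → (Y - m) % 2 = 1
  step : ∀ m, m + 1 < A → Wt (m+1) = Bk m ∪ H (m+1)
  disj : ∀ m, m < A → Disjoint (Bk m) (H (m+1))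
  HA : H A = ∅
  symB : ∀ m, Sy (Bk m)
  symW : ∀ m, Sy (Wt m)
  symH : ∀ m, Sy (H m)

namespace Dat
variable (S : Dat)

def rho (c : Cell) : Cell := (2 * S.A - 1 - c.1, - c.2)

lemma rho_rho (c : Cell) : S.rho (S.rho c) = c := by
  ext <;> simp [rho]

def Lf (c : Cell) : Prop := c.2 ∈ S.Bk c.1.toNat ∨ c.2 ∈ S.Wt c.1.toNat

def D (c : Cell) : Prop :=
  (0 ≤ c.1 ∧ c.1 < S.A ∧ S.Lf c) ∨ (S.A ≤ c.1 ∧ c.1 ≤ 2 * S.A - 1 ∧ S.Lf (S.rho c))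

lemma D_rho {c : Cell} (h : S.D c) : S.D (S.rho c) := by
  rcases h with ⟨h1, h2, h3⟩ | ⟨h1, h2, h3⟩
  · right
    rw [rho_rho]
    refine ⟨?_, ?_, h3⟩ <;> simp only [rho] <;> omega
  · left
    refine ⟨?_, ?_, h3⟩ <;> simp only [rho] <;> omega

lemma D_left {m : ℕ} {Y : ℤ} (hm : m < S.A) :
    S.D ((m:ℤ), Y) ↔ Y ∈ S.Bk m ∨ Y ∈ S.Wt m := by
  constructor
  · rintro (⟨h1, h2, h3⟩ | ⟨h1, h2, h3⟩)
    · simpa [Lf] using h3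
    · simp at h1; omega
  · intro h
    left
    exact ⟨by simp, by simpa using hm, by simpa [Lf] using h⟩

lemma D_nonneg {c : Cell} (h : S.D c) : 0 ≤ c.1 := by
  have := S.A_pos
  rcases h with ⟨h1, h2, h3⟩ | ⟨h1, h2, h3⟩ <;> omega

/-- black left cells -/
lemma D_left_black {m : ℕ} {Y : ℤ} (hm : m < S.A) (hp : (Y - m) % 2 = 0) :
    S.D ((m:ℤ), Y) ↔ Y ∈ S.Bk m := by
  rw [S.D_left hm]
  constructor
  · rintro (h | h)
    · exact h
    · have := S.parW _ _ h; omega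
  · exact Or.inl

lemma D_left_white {m : ℕ} {Y : ℤ} (hm : m < S.A) (hp : (Y - m) % 2 = 1) :
    S.D ((m:ℤ), Y) ↔ Y ∈ S.Wt m := by
  rw [S.D_left hm]
  constructor
  · rintro (h | h)
    · have := S.parB _ _ h; omega
    · exact h
  · exact Or.inr

def Rot (M : Cell → Cell → Prop) : Prop := ∀ c d, M c d → M (S.rho c) (S.rho d)

/-- state sequences -/
structure V (X : ℕ → Finset ℤ) : Prop where
  zero : X 0 = S.Wt 0
  hole : ∀ m < S.A, S.H (m+1) ⊆ X (m+1)
  mt : ∀ m < S.A, Mt (X m) (X (m+1) \ S.H (m+1))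
  sub : ∀ m < S.A, X m ⊆ S.Wt m
  subB : ∀ m < S.A, X (m+1) \ S.H (m+1) ⊆ S.Bk m
  sy : Sy (X S.A)
  gt : ∀ m, S.A < m → X m = ∅

section construct
variable {S} {X : ℕ → Finset ℤ}

def Z (S : Dat) (X : ℕ → Finset ℤ) (m : ℕ) : Finset ℤ := X (m+1) \ S.H (m+1)

open Classical in
noncomputable def F (S : Dat) (X : ℕ → Finset ℤ) (m : ℕ) : ℤ → ℤ :=
  if h : Mt (X m) (S.Z X m) then h.choose else id

noncomputable def G (S : Dat) (X : ℕ → Finset ℤ) (m : ℕ) : ℤ → ℤ :=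
  Function.invFunOn (S.F X m) (S.Z X m)

lemma F_spec (hX : S.V X) {m : ℕ} (hm : m < S.A) : (∀ z ∈ S.Z X m, S.F X m z = z - 1 ∨ S.F X m z = z + 1) ∧
    Set.InjOn (S.F X m) (S.Z X m) ∧ (S.Z X m).image (S.F X m) = X m := by
  have h : Mt (X m) (S.Z X m) := hX.mt m hm
  rw [F, dif_pos h]
  exact h.choose_spec

lemma GF (hX : S.V X) {m : ℕ} (hm : m < S.A) {z : ℤ} (hz : z ∈ S.Z X m) : S.G X m (S.F X m z) = z :=
  (F_spec hX hm).2.1.leftInvOn_invFunOn (mem_coe.2 hz)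

lemma G_mem (hX : S.V X) {m : ℕ} (hm : m < S.A) {y : ℤ} (hy : y ∈ X m) :
    S.G X m y ∈ S.Z X m ∧ S.F X m (S.G X m y) = y := by
  rw [← (F_spec hX hm).2.2] at hy
  obtain ⟨z, hz, rfl⟩ := mem_image.1 hy
  rw [GF hX hm hz]; exact ⟨hz, rfl⟩


open Classical in
noncomputable def g0 (S : Dat) (X : ℕ → Finset ℤ) (c : Cell) : Cell :=
  if c.2 ∈ S.Bk c.1.toNat then
    if c.2 ∈ S.Z X c.1.toNat then (c.1, S.F X c.1.toNat c.2) else (c.1 + 1, c.2)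
  else if c.2 ∈ X c.1.toNat then (c.1, S.G X c.1.toNat c.2) else (c.1 - 1, c.2)

noncomputable def g (S : Dat) (X : ℕ → Finset ℤ) (c : Cell) : Cell :=
  if c.1 < S.A then S.g0 X c else S.rho (S.g0 X (S.rho c))

lemma g_rho {c : Cell} : S.g X (S.rho c) = S.rho (S.g X c) := by
  unfold g
  by_cases h : c.1 < S.A
  · rw [if_pos h, if_neg (by simp only [rho]; omega), rho_rho]
  · rw [if_neg h, if_pos (by simp only [rho]; omega), rho_rho]

lemma g_b1 {m : ℕ} (hm : m < S.A) {Y : ℤ} (h : Y ∈ S.Bk m) (hz : Y ∈ S.Z X m) :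
    S.g X ((m:ℤ), Y) = ((m:ℤ), S.F X m Y) := by
  rw [g, if_pos (by simpa using hm), g0]; simp [h, hz]

lemma g_b2 {m : ℕ} (hm : m < S.A) {Y : ℤ} (h : Y ∈ S.Bk m) (hz : Y ∉ S.Z X m) :
    S.g X ((m:ℤ), Y) = ((m:ℤ)+1, Y) := by
  rw [g, if_pos (by simpa using hm), g0]; simp [h, hz]

lemma g_w1 {m : ℕ} (hm : m < S.A) {Y : ℤ} (h : Y ∈ S.Wt m) (hz : Y ∈ X m) :
    S.g X ((m:ℤ), Y) = ((m:ℤ), S.G X m Y) := by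
  have : Y ∉ S.Bk m := fun h' => by have := S.parB _ _ h'; have := S.parW _ _ h; omega
  rw [g, if_pos (by simpa using hm), g0]; simp [this, hz]

lemma g_w2 {m : ℕ} (hm : m < S.A) {Y : ℤ} (h : Y ∈ S.Wt m) (hz : Y ∉ X m) :
    S.g X ((m:ℤ), Y) = ((m:ℤ)-1, Y) := by
  have : Y ∉ S.Bk m := fun h' => by have := S.parB _ _ h'; have := S.parW _ _ h; omega
  rw [g, if_pos (by simpa using hm), g0]; simp [this, hz]

lemma Z_last : S.Z X (S.A - 1) = X S.A := by
  have := S.A_pos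
  rw [Z, show S.A - 1 + 1 = S.A by omega, S.HA, sdiff_empty]

lemma g_left (hX : S.V X) {m : ℕ} (hm : m < S.A) {Y : ℤ} (h : S.D ((m:ℤ), Y)) :
    AdjC ((m:ℤ), Y) (S.g X ((m:ℤ), Y)) ∧ S.D (S.g X ((m:ℤ), Y)) ∧ S.g X (S.g X ((m:ℤ), Y)) = ((m:ℤ), Y) := by
  rw [S.D_left hm] at h
  rcases h with h | h
  · have hp := S.parB _ _ h
    by_cases hz : Y ∈ S.Z X m
    · have hF := F_spec hX hm
      have h2 : S.F X m Y ∈ X m := by rw [← hF.2.2]; exact mem_image_of_mem _ hz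
      rw [g_b1 hm h hz]
      refine ⟨Or.inl ⟨rfl, (hF.1 Y hz).symm⟩, (S.D_left hm).2 (Or.inr (hX.sub m hm h2)), ?_⟩
      rw [g_w1 hm (hX.sub m hm h2) h2, GF hX hm hz]
    · rw [g_b2 hm h hz]
      refine ⟨Or.inr ⟨rfl, Or.inl ⟨rfl, hp⟩⟩, ?_⟩
      by_cases hm1 : m + 1 < S.A
      · have hw : Y ∈ S.Wt (m+1) := by rw [S.step m hm1]; exact mem_union_left _ h
        have hn : Y ∉ X (m+1) := by
          intro h'
          exact hz (mem_sdiff.2 ⟨h', fun h2 => (Finset.disjoint_left.1 (S.disj m hm)) h h2⟩)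
        have e : ((m:ℤ)+1, Y) = (((m+1 : ℕ):ℤ), Y) := by push_cast; rfl
        rw [e]
        refine ⟨(S.D_left hm1).2 (Or.inr hw), ?_⟩
        rw [g_w2 hm1 hw hn]; push_cast; simp
      · have hmA : m = S.A - 1 := by omega
        have e : ((m:ℤ)+1, Y) = S.rho (m, -Y) := by
          simp only [rho, neg_neg]; ext
          · simp only; omega
          · rfl
        have h' : -Y ∈ S.Bk m := S.symB m Y h
        have hz' : -Y ∉ S.Z X m := by
          rw [hmA, Z_last] at hz ⊢
          intro h2; exact hz (by simpa using hX.sy _ h2)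
        rw [e]
        refine ⟨S.D_rho ((S.D_left hm).2 (Or.inl h')), ?_⟩
        rw [g_rho, g_b2 hm h' hz']
        simp only [rho, neg_neg]; ext
        · simp only; omega
        · rfl
  · have hp := S.parW _ _ h
    by_cases hz : Y ∈ X m
    · obtain ⟨h1, h2⟩ := G_mem hX hm hz
      have h3 := hX.subB m hm h1
      have := (F_spec hX hm).1 _ h1
      rw [h2] at this
      rw [g_w1 hm h hz]
      refine ⟨Or.inl ⟨rfl, ?_⟩, (S.D_left hm).2 (Or.inl h3), ?_⟩
      · simp only; omega
      · rw [g_b1 hm h3 h1, h2]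
    · rw [g_w2 hm h hz]
      have hm0 : m ≠ 0 := by rintro rfl; rw [hX.zero] at hz; exact hz h
      obtain ⟨n, rfl⟩ : ∃ n, m = n + 1 := ⟨m - 1, by omega⟩
      have e : (((n+1 : ℕ):ℤ)-1, Y) = ((n:ℤ), Y) := by push_cast; simp
      rw [e]
      have hn : Y ∉ S.Z X n := fun h' => hz (mem_sdiff.1 h').1
      have hb : Y ∈ S.Bk n := by
        rw [S.step n hm, mem_union] at h
        rcases h with h | h
        · exact h
        · exact absurd (hX.hole n (by omega) h) hz
      refine ⟨Or.inr ⟨rfl, Or.inr ⟨by simp, hp⟩⟩, (S.D_left (by omega)).2 (Or.inl hb), ?_⟩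
      rw [g_b2 (by omega) hb hn]; push_cast; simp

lemma AdjC_rho {c d : Cell} (h : AdjC c d) : AdjC (S.rho c) (S.rho d) := by
  simp only [AdjC, rho] at *
  omega

lemma g_all (hX : S.V X) {c : Cell} (h : S.D c) :
    AdjC c (S.g X c) ∧ S.D (S.g X c) ∧ S.g X (S.g X c) = c := by
  have key : ∀ c : Cell, c.1 < S.A → S.D c →
      AdjC c (S.g X c) ∧ S.D (S.g X c) ∧ S.g X (S.g X c) = c := by
    intro c hc h
    have h0 := S.D_nonneg h
    obtain ⟨m, hm⟩ := Int.eq_ofNat_of_zero_le h0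
    obtain ⟨c1, c2⟩ := c
    simp only at hm hc
    subst hm
    exact g_left hX (by omega) h
  by_cases hc : c.1 < S.A
  · exact key c hc h
  · have := key (S.rho c) (by simp only [rho]; omega) (S.D_rho h)
    rw [g_rho, g_rho] at this
    obtain ⟨h1, h2, h3⟩ := this
    refine ⟨?_, ?_, ?_⟩
    · simpa [rho_rho] using AdjC_rho (S := S) h1
    · simpa [rho_rho] using S.D_rho h2
    · have := congrArg S.rho h3
      simpa [rho_rho] using this

lemma PM_g (hX : S.V X) : PM S.D (fun c d => S.D c ∧ S.g X c = d) where
  adj := by rintro c d ⟨h, rfl⟩; exact (g_all hX h).1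
  symm := by rintro c d ⟨h, rfl⟩; exact (g_all hX h).2
  mem := fun c d h => h.1
  ex := fun c h => ⟨_, h, rfl⟩
  uniq := by rintro c d e ⟨-, rfl⟩ ⟨-, rfl⟩; rfl

lemma Rot_g : S.Rot (fun c d => S.D c ∧ S.g X c = d) := by
  rintro c d ⟨h, rfl⟩; exact ⟨S.D_rho h, g_rho⟩

end construct

section extract
variable {S} {M : Cell → Cell → Prop}

open Classical in
noncomputable def Zof (S : Dat) (M : Cell → Cell → Prop) (m : ℕ) : Finset ℤ :=
  (S.Bk m).filter (fun Y => ∃ y : ℤ, M ((m:ℤ), Y) ((m:ℤ), y))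

lemma mem_Zof {m : ℕ} {Y : ℤ} :
    Y ∈ S.Zof M m ↔ Y ∈ S.Bk m ∧ ∃ y : ℤ, M ((m:ℤ), Y) ((m:ℤ), y) := by
  classical
  rw [Zof, mem_filter]

open Classical in
noncomputable def Xof (S : Dat) (M : Cell → Cell → Prop) : ℕ → Finset ℤ
  | 0 => S.Wt 0
  | m+1 => if m < S.A then S.Zof M m ∪ S.H (m+1) else ∅

lemma Xof_succ {m : ℕ} (hm : m < S.A) : S.Xof M (m+1) = S.Zof M m ∪ S.H (m+1) := by
  rw [Xof, if_pos hm]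

lemma Zof_eq {m : ℕ} (hm : m < S.A) : S.Xof M (m+1) \ S.H (m+1) = S.Zof M m := by
  rw [Xof_succ hm]
  refine union_sdiff_cancel_right ?_
  exact (S.disj m hm).mono_left (fun Y h => (mem_Zof.1 h).1)

lemma Xof_sub {m : ℕ} (hm : m < S.A) : S.Xof M m ⊆ S.Wt m := by
  cases m with
  | zero => exact subset_refl _
  | succ n =>
    rw [Xof_succ (by omega), S.step n hm]
    exact union_subset_union (fun Y h => (mem_Zof.1 h).1) (subset_refl _)

lemma part_black (hM : PM S.D M) {m : ℕ} {Y : ℤ} (h : (Y - m) % 2 = 0) {d : Cell}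
    (hd : M ((m:ℤ), Y) d) : (∃ y, d = ((m:ℤ), y) ∧ (y = Y + 1 ∨ y = Y - 1)) ∨ d = ((m:ℤ)+1, Y) := by
  obtain ⟨d1, d2⟩ := d
  have := hM.adj _ _ hd
  simp only [AdjC] at this
  rcases this with ⟨h1, h2⟩ | ⟨h1, ⟨h2, h3⟩ | ⟨h2, h3⟩⟩
  · left; exact ⟨d2, by rw [h1], h2⟩
  · right; rw [h1, h2]
  · omega

lemma part_white (hM : PM S.D M) {m : ℕ} {Y : ℤ} (h : (Y - m) % 2 = 1) {d : Cell}
    (hd : M ((m:ℤ), Y) d) : (∃ y, d = ((m:ℤ), y) ∧ (y = Y + 1 ∨ y = Y - 1)) ∨ d = ((m:ℤ)-1, Y) := by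
  obtain ⟨d1, d2⟩ := d
  have := hM.adj _ _ hd
  simp only [AdjC] at this
  rcases this with ⟨h1, h2⟩ | ⟨h1, ⟨h2, h3⟩ | ⟨h2, h3⟩⟩
  · left; exact ⟨d2, by rw [h1], h2⟩
  · omega
  · right; rw [h1, h2]

lemma mem_Xof (hM : PM S.D M) {m : ℕ} (hm : m < S.A) {Y : ℤ} (hY : Y ∈ S.Wt m) :
    Y ∈ S.Xof M m ↔ ∃ y : ℤ, M ((m:ℤ), Y) ((m:ℤ), y) := by
  have hp := S.parW _ _ hY
  obtain ⟨d, hd⟩ := hM.ex _ ((S.D_left hm).2 (Or.inr hY))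
  cases m with
  | zero =>
    refine iff_of_true hY ?_
    rcases part_white hM hp hd with ⟨y, rfl, -⟩ | rfl
    · exact ⟨y, hd⟩
    · have := S.D_nonneg (hM.mem _ _ (hM.symm _ _ hd))
      simp at this
  | succ n =>
    have e : (((n+1 : ℕ):ℤ) - 1, Y) = ((n:ℤ), Y) := by push_cast; simp
    rw [Xof_succ (by omega), mem_union, mem_Zof]
    rw [S.step n hm, mem_union] at hY
    have hne : ∀ y : ℤ, ((n:ℤ), y) ≠ (((n+1 : ℕ):ℤ), Y) := by
      intro y e; have := congrArg Prod.fst e; simp at this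
    constructor
    · intro h
      rcases part_white hM hp hd with ⟨y, rfl, -⟩ | rfl
      · exact ⟨y, hd⟩
      · exfalso
        rw [e] at hd
        have hd' := hM.symm _ _ hd
        rcases h with ⟨h, y, hy⟩ | h
        · exact hne _ (hM.uniq _ _ _ hy hd')
        · have h2 := (S.D_left_black (by omega) (by push_cast at hp; omega)).1 (hM.mem _ _ hd')
          exact Finset.disjoint_left.1 (S.disj n (by omega)) h2 h
    · rintro ⟨y, hy⟩
      rcases hY with hB | hH
      · left
        refine ⟨hB, ?_⟩
        obtain ⟨d', hd'⟩ := hM.ex _ ((S.D_left (show n < S.A by omega)).2 (Or.inl hB))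
        rcases part_black hM (S.parB _ _ hB) hd' with ⟨z, rfl, -⟩ | rfl
        · exact ⟨z, hd'⟩
        · exfalso
          have h3 := hM.symm _ _ hd'
          have e2 : ((n:ℤ)+1, Y) = (((n+1 : ℕ):ℤ), Y) := by push_cast; rfl
          rw [e2] at h3
          have := congrArg Prod.fst (hM.uniq _ _ _ hy h3)
          simp at this
      · exact Or.inr hH

open Classical in
noncomputable def pf (M : Cell → Cell → Prop) (m : ℕ) (z : ℤ) : ℤ :=
  if h : ∃ y : ℤ, M ((m:ℤ), z) ((m:ℤ), y) then h.choose else 0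

lemma pf_spec {m : ℕ} {z : ℤ} (h : z ∈ S.Zof M m) : M ((m:ℤ), z) ((m:ℤ), pf M m z) := by
  have h := (mem_Zof.1 h).2
  rw [pf, dif_pos h]; exact h.choose_spec

lemma pf_props (hM : PM S.D M) {m : ℕ} (hm : m < S.A) :
    (∀ z ∈ S.Zof M m, pf M m z = z - 1 ∨ pf M m z = z + 1) ∧ Set.InjOn (pf M m) (S.Zof M m) ∧
    (S.Zof M m).image (pf M m) = S.Xof M m := by
  have h1 : ∀ z ∈ S.Zof M m, pf M m z = z - 1 ∨ pf M m z = z + 1 := by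
    intro z hz
    rcases part_black hM (S.parB _ _ (mem_Zof.1 hz).1) (pf_spec hz) with ⟨y, h, h'⟩ | h
    · have := congrArg Prod.snd h
      simp only at this
      omega
    · have := congrArg Prod.fst h
      simp at this
  refine ⟨h1, ?_, ?_⟩
  · intro z hz w hw e
    have a1 := hM.symm _ _ (pf_spec (mem_coe.1 hz))
    have a2 := hM.symm _ _ (pf_spec (mem_coe.1 hw))
    rw [e] at a1
    exact congrArg Prod.snd (hM.uniq _ _ _ a1 a2)
  · ext y
    rw [mem_image]
    constructor
    · rintro ⟨z, hz, rfl⟩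
      have a1 := hM.symm _ _ (pf_spec hz)
      have hp := S.parB _ _ (mem_Zof.1 hz).1
      have hw := (S.D_left_white hm (by have := h1 z hz; omega)).1 (hM.mem _ _ a1)
      exact (mem_Xof hM hm hw).2 ⟨z, a1⟩
    · intro hy
      have hw := Xof_sub hm hy
      obtain ⟨z, hz⟩ := (mem_Xof hM hm hw).1 hy
      have hz' := hM.symm _ _ hz
      have hp := S.parW _ _ hw
      have hb : z ∈ S.Bk m := by
        refine (S.D_left_black hm ?_).1 (hM.mem _ _ hz')
        rcases part_white hM hp hz with ⟨y, h, h'⟩ | h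
        · have := congrArg Prod.snd h
          simp only at this
          omega
        · have := congrArg Prod.fst h
          simp only at this
          omega
      have hzz : z ∈ S.Zof M m := mem_Zof.2 ⟨hb, y, hz'⟩
      exact ⟨z, hzz, congrArg Prod.snd (hM.uniq _ _ _ (pf_spec hzz) hz')⟩

lemma Xof_A : S.Xof M S.A = S.Zof M (S.A - 1) := by
  have := S.A_pos
  have := Xof_succ (S := S) (M := M) (show S.A - 1 < S.A by omega)
  rwa [show S.A - 1 + 1 = S.A by omega, S.HA, union_empty] at this

lemma V_Xof (hM : PM S.D M) (hR : S.Rot M) : S.V (S.Xof M) where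
  zero := rfl
  hole := fun m hm => by rw [Xof_succ hm]; exact subset_union_right
  mt := fun m hm => by rw [Zof_eq hm]; exact ⟨_, pf_props hM hm⟩
  sub := fun m hm => Xof_sub hm
  subB := fun m hm => by rw [Zof_eq hm]; exact fun Y h => (mem_Zof.1 h).1
  gt := fun m hm => by
    obtain ⟨n, rfl⟩ : ∃ n, m = n + 1 := ⟨m - 1, by omega⟩
    rw [Xof, if_neg (by omega)]
  sy := by
    have hA := S.A_pos
    rw [Xof_A]
    intro Y hY
    obtain ⟨hB, y, hy⟩ := mem_Zof.1 hY
    have hB' := S.symB _ _ hB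
    refine mem_Zof.2 ⟨hB', ?_⟩
    obtain ⟨d, hd⟩ := hM.ex _ ((S.D_left (show S.A - 1 < S.A by omega)).2 (Or.inl hB'))
    rcases part_black hM (S.parB _ _ hB') hd with ⟨z, rfl, -⟩ | rfl
    · exact ⟨z, hd⟩
    · exfalso
      have h1 := hM.symm _ _ (hR _ _ hd)
      have e1 : S.rho (((S.A - 1 : ℕ):ℤ)+1, -Y) = (((S.A - 1 : ℕ):ℤ), Y) := by
        simp only [rho, neg_neg]; ext
        · simp only; omega
        · rfl
      rw [e1] at h1
      have := congrArg Prod.fst (hM.uniq _ _ _ hy h1)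
      simp only [rho] at this
      omega

lemma key_b (hM : PM S.D M) (hR : S.Rot M) {m : ℕ} (hm : m < S.A) {Y : ℤ} (hY : Y ∈ S.Bk m)
    {d : Cell} (hd : M ((m:ℤ), Y) d) : S.g (S.Xof M) ((m:ℤ), Y) = d := by
  have hV := V_Xof hM hR
  have hZ : S.Z (S.Xof M) m = S.Zof M m := Zof_eq hm
  by_cases hz : Y ∈ S.Zof M m
  · rw [g_b1 hm hY (by rw [hZ]; exact hz)]
    have h1 := F_spec hV hm
    have h2 := pf_props hM hm
    rw [hZ] at h1
    have := Mt_unique h1.1 h2.1 h1.2.1 h2.2.1 (h1.2.2.trans h2.2.2.symm) Y hz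
    rw [this]
    exact hM.uniq _ _ _ (pf_spec hz) hd
  · rw [g_b2 hm hY (by rw [hZ]; exact hz)]
    rcases part_black hM (S.parB _ _ hY) hd with ⟨y, rfl, -⟩ | rfl
    · exact absurd (mem_Zof.2 ⟨hY, y, hd⟩) hz
    · rfl

lemma key_all (hM : PM S.D M) (hR : S.Rot M) {c d : Cell} (hd : M c d) :
    S.g (S.Xof M) c = d := by
  have hV := V_Xof hM hR
  have left : ∀ c d : Cell, c.1 < S.A → M c d → S.g (S.Xof M) c = d := by
    intro c d hc hd
    have hD := hM.mem _ _ hd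
    obtain ⟨m, hm⟩ := Int.eq_ofNat_of_zero_le (S.D_nonneg hD)
    obtain ⟨c1, Y⟩ := c
    simp only at hm hc
    subst hm
    have hm : m < S.A := by omega
    rcases (S.D_left hm).1 hD with hB | hW
    · exact key_b hM hR hm hB hd
    · have hd' := hM.symm _ _ hd
      have hp := S.parW _ _ hW
      have hgd : S.g (S.Xof M) d = ((m:ℤ), Y) := by
        rcases part_white hM hp hd with ⟨y, rfl, hy⟩ | rfl
        · exact key_b hM hR hm ((S.D_left_black hm (by omega)).1 (hM.mem _ _ hd')) hd'
        · have h0 := S.D_nonneg (hM.mem _ _ hd')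
          simp only at h0
          obtain ⟨n, rfl⟩ : ∃ n, m = n + 1 := ⟨m - 1, by omega⟩
          have e : (((n+1 : ℕ):ℤ) - 1, Y) = ((n:ℤ), Y) := by push_cast; simp
          rw [e] at hd' ⊢
          exact key_b hM hR (by omega) ((S.D_left_black (by omega)
            (by push_cast at hp; omega)).1 (hM.mem _ _ hd')) hd'
      rw [← hgd]
      exact (g_all hV (hM.mem _ _ hd')).2.2
  by_cases hc : c.1 < S.A
  · exact left c d hc hd
  · have := left _ _ (by simp only [rho]; omega) (hR _ _ hd)
    rw [g_rho] at this
    have := congrArg S.rho this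
    simpa [rho_rho] using this

lemma M_eq (hM : PM S.D M) (hR : S.Rot M) :
    (fun c d => S.D c ∧ S.g (S.Xof M) c = d) = M := by
  funext c d
  apply propext
  constructor
  · rintro ⟨h, rfl⟩
    obtain ⟨d, hd⟩ := hM.ex _ h
    rw [key_all hM hR hd]; exact hd
  · intro h; exact ⟨hM.mem _ _ h, key_all hM hR h⟩

lemma Xof_g {X : ℕ → Finset ℤ} (hX : S.V X) : S.Xof (fun c d => S.D c ∧ S.g X c = d) = X := by
  funext m
  cases m with
  | zero => exact hX.zero.symm
  | succ m =>
    by_cases hm : m < S.A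
    · rw [Xof_succ hm]
      have : S.Zof (fun c d => S.D c ∧ S.g X c = d) m = X (m+1) \ S.H (m+1) := by
        ext Y
        rw [mem_Zof]
        constructor
        · rintro ⟨hB, y, -, hy⟩
          by_contra hn
          rw [g_b2 hm hB hn] at hy
          have := congrArg Prod.fst hy
          simp at this
        · intro h
          have hB := hX.subB m hm h
          exact ⟨hB, _, (S.D_left hm).2 (Or.inl hB), g_b1 hm hB h⟩
      rw [this, sdiff_union_of_subset (hX.hole m hm)]
    · rw [Xof, if_neg hm, hX.gt _ (by omega)]

end extract

def nu (c : Cell) : Cell := (2 * S.A - 1 - c.1, c.2)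
def sig (c : Cell) : Cell := (c.1, - c.2)
def Refl (M : Cell → Cell → Prop) : Prop := ∀ c d, M c d → M (S.nu c) (S.nu d)

lemma D_sig {c : Cell} (h : S.D c) : S.D (sig c) := by
  have key : ∀ c, S.Lf c → S.Lf (sig c) := by
    rintro c (h | h)
    · exact Or.inl (S.symB _ _ h)
    · exact Or.inr (S.symW _ _ h)
  rcases h with ⟨h1, h2, h3⟩ | ⟨h1, h2, h3⟩
  · exact Or.inl ⟨h1, h2, key _ h3⟩
  · exact Or.inr ⟨h1, h2, key _ h3⟩

lemma sig_sig (c : Cell) : sig (sig c) = c := by ext <;> simp [sig]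

lemma refl_iff {M : Cell → Cell → Prop} (hM : PM S.D M) (hR : S.Rot M) :
    S.Refl M ↔ ∀ m, Sy (S.Xof M m) := by
  have e1 : ∀ c, S.rho (S.nu c) = sig c := by intro c; ext <;> simp [rho, nu, sig]
  have e2 : ∀ c, S.rho (sig c) = S.nu c := by intro c; ext <;> simp [rho, nu, sig]
  constructor
  · intro h m
    have hs : ∀ c d, M c d → M (sig c) (sig d) := by
      intro c d hcd
      have := hR _ _ (h _ _ hcd)
      rwa [e1, e1] at this
    cases m with
    | zero => exact S.symW 0
    | succ m =>
      by_cases hm : m < S.A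
      · rw [Xof_succ hm]
        intro y hy
        rw [mem_union] at hy ⊢
        rcases hy with hy | hy
        · left
          rw [mem_Zof] at hy ⊢
          obtain ⟨h1, z, h2⟩ := hy
          exact ⟨S.symB _ _ h1, -z, hs _ _ h2⟩
        · exact Or.inr (S.symH _ _ hy)
      · rw [Xof, if_neg hm]; intro y hy; simp at hy
  · intro h
    have hPM : PM S.D (fun c d => M (sig c) (sig d)) :=
      { adj := by
          intro c d h
          have := hM.adj _ _ h
          simp only [AdjC, sig] at *
          omega
        symm := fun c d h => hM.symm _ _ h
        mem := by
          intro c d h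
          have := S.D_sig (hM.mem _ _ h)
          rwa [sig_sig] at this
        ex := by
          intro c hc
          obtain ⟨d, hd⟩ := hM.ex _ (S.D_sig hc)
          exact ⟨sig d, by rwa [sig_sig]⟩
        uniq := by
          intro c d e h1 h2
          have := hM.uniq _ _ _ h1 h2
          rw [← sig_sig d, this, sig_sig] }
    have hRR : S.Rot (fun c d => M (sig c) (sig d)) := by
      intro c d h
      exact hR _ _ h
    have hX : S.Xof (fun c d => M (sig c) (sig d)) = S.Xof M := by
      funext m
      cases m with
      | zero => rfl
      | succ m =>
        by_cases hm : m < S.A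
        · rw [Xof_succ hm, Xof_succ hm]
          congr 1
          have hsy : ∀ Y, Y ∈ S.Zof M m → -Y ∈ S.Zof M m := by
            intro Y hY
            rw [← Zof_eq hm, mem_sdiff] at hY ⊢
            refine ⟨h _ _ hY.1, fun h' => hY.2 ?_⟩
            have := S.symH _ _ h'
            rwa [neg_neg] at this
          have key : ∀ Y, Y ∈ S.Zof (fun c d => M (sig c) (sig d)) m ↔ -Y ∈ S.Zof M m := by
            intro Y
            rw [mem_Zof, mem_Zof]
            constructor
            · rintro ⟨h1, y, h2⟩
              exact ⟨S.symB _ _ h1, -y, h2⟩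
            · rintro ⟨h1, y, h2⟩
              refine ⟨by simpa using S.symB _ _ h1, -y, ?_⟩
              simp only [sig, neg_neg]; exact h2
          ext Y
          rw [key]
          exact ⟨fun h' => by simpa using hsy _ h', hsy Y⟩
        · rw [Xof, Xof, if_neg hm, if_neg hm]
    have hE := M_eq hPM hRR
    rw [hX, M_eq hM hR] at hE
    intro c d hcd
    rw [hE] at hcd
    have := hR _ _ hcd
    rwa [e2, e2] at this

lemma card_rot : Nat.card {M // PM S.D M ∧ S.Rot M} = Nat.card {X // S.V X ∧ ∀ _m : ℕ, True} :=
  Nat.card_congr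
    { toFun := fun M => ⟨S.Xof M.1, V_Xof M.2.1 M.2.2, fun _ => trivial⟩
      invFun := fun X => ⟨_, PM_g X.2.1, Rot_g⟩
      left_inv := fun M => Subtype.ext (M_eq M.2.1 M.2.2)
      right_inv := fun X => Subtype.ext (Xof_g X.2.1) }

lemma card_refl : Nat.card {M // PM S.D M ∧ S.Rot M ∧ S.Refl M} =
    Nat.card {X // S.V X ∧ ∀ m : ℕ, Sy (X m)} :=
  Nat.card_congr
    { toFun := fun M => ⟨S.Xof M.1, V_Xof M.2.1 M.2.2.1, (S.refl_iff M.2.1 M.2.2.1).1 M.2.2.2⟩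
      invFun := fun X => ⟨_, PM_g X.2.1, Rot_g,
        (S.refl_iff (PM_g X.2.1) Rot_g).2 (by rw [Xof_g X.2.1]; exact X.2.2)⟩
      left_inv := fun M => Subtype.ext (M_eq M.2.1 M.2.2.1)
      right_inv := fun X => Subtype.ext (Xof_g X.2.1) }

end Dat
end PQ

namespace PQ
open Finset

noncomputable def od (j : ℕ) : Finset ℤ := (Icc (-(2*j:ℤ)) (2*j)).filter (fun y => y % 2 = 1)
noncomputable def ev (j : ℕ) : Finset ℤ := (Icc (-(2*j:ℤ)) (2*j)).filter (fun y => y % 2 = 0 ∧ y ≠ 0)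

lemma mem_od {j : ℕ} {y : ℤ} : y ∈ od j ↔ (-(2*j:ℤ) ≤ y ∧ y ≤ 2*j) ∧ y % 2 = 1 := by
  simp [od]
lemma mem_ev {j : ℕ} {y : ℤ} : y ∈ ev j ↔ (-(2*j:ℤ) ≤ y ∧ y ≤ 2*j) ∧ y % 2 = 0 ∧ y ≠ 0 := by
  simp [ev]

lemma sy_od (j : ℕ) : Sy (od j) := by
  intro y; rw [mem_od, mem_od]; omega
lemma sy_ev (j : ℕ) : Sy (ev j) := by
  intro y; rw [mem_ev, mem_ev]; omega

lemma od_card (j : ℕ) : (od j).card = 2 * j := by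
  have : od j = (range (2*j)).image (fun i : ℕ => (2*i - 2*j + 1 : ℤ)) := by
    ext y
    rw [mem_od, mem_image]
    constructor
    · rintro h
      refine ⟨((y + 2*j - 1)/2).toNat, ?_, ?_⟩
      · rw [mem_range]; omega
      · omega
    · rintro ⟨i, hi, rfl⟩
      rw [mem_range] at hi
      omega
  rw [this, card_image_of_injective, card_range]
  intro i k h
  simp only at h
  omega

lemma mt_od_ev (j : ℕ) : Mt (od j) (ev j) := by
  refine ⟨fun z => if 0 < z then z - 1 else z + 1, ?_, ?_, ?_⟩
  · intro z hz; dsimp only; split_ifs <;> simp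
  · intro z hz w hw h
    have hz := mem_ev.1 (mem_coe.1 hz)
    have hw := mem_ev.1 (mem_coe.1 hw)
    dsimp only at h
    split_ifs at h <;> omega
  · ext y
    rw [mem_image, mem_od]
    constructor
    · rintro ⟨z, hz, rfl⟩
      have hz := mem_ev.1 hz
      split_ifs <;> omega
    · intro h
      by_cases h0 : 0 < y
      · exact ⟨y + 1, mem_ev.2 (by omega), by rw [if_pos (by omega)]; omega⟩
      · exact ⟨y - 1, mem_ev.2 (by omega), by rw [if_neg (by omega)]; omega⟩

lemma mt_ev_od (j : ℕ) : Mt (ev j) (od (j+1) \ {-1, 1}) := by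
  have key : ∀ z, z ∈ od (j+1) \ {-1, 1} ↔
      ((-(2*j+2:ℤ) ≤ z ∧ z ≤ 2*j+2) ∧ z % 2 = 1) ∧ z ≠ -1 ∧ z ≠ 1 := by
    intro z
    rw [mem_sdiff, mem_od]
    push_cast
    simp only [mem_insert, mem_singleton, not_or]
    omega
  refine ⟨fun z => if 0 < z then z - 1 else z + 1, ?_, ?_, ?_⟩
  · intro z hz; dsimp only; split_ifs <;> simp
  · intro z hz w hw h
    have hz := (key _).1 (mem_coe.1 hz)
    have hw := (key _).1 (mem_coe.1 hw)
    dsimp only at h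
    split_ifs at h <;> omega
  · ext y
    rw [mem_image, mem_ev]
    constructor
    · rintro ⟨z, hz, rfl⟩
      have hz := (key _).1 hz
      split_ifs <;> omega
    · intro h
      by_cases h0 : 0 < y
      · exact ⟨y + 1, (key _).2 (by omega), by rw [if_pos (by omega)]; omega⟩
      · exact ⟨y - 1, (key _).2 (by omega), by rw [if_neg (by omega)]; omega⟩

lemma ev_card (j : ℕ) : (ev j).card = 2 * j := by
  rw [← (mt_od_ev j).card, od_card]

lemma forced {j : ℕ} {X Y : Finset ℤ} (h1 : Mt (od j) X) (h2 : Mt X (Y \ {-1, 1}))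
    (h3 : ({-1, 1} : Finset ℤ) ⊆ Y) : X = ev j ∧ Y = od (j+1) := by
  have c1 := h1.card
  have c2 := h2.card
  rw [od_card] at c1
  have hX : X = ev j := by
    apply eq_of_subset_of_card_le
    · obtain ⟨f, hf, -, he⟩ := h1
      obtain ⟨g, hg, -, rfl⟩ := h2
      intro y hy
      have a1 : f y ∈ od j := by rw [← he]; exact mem_image_of_mem _ hy
      have a2 := hf y hy
      obtain ⟨z, hz, rfl⟩ := mem_image.1 hy
      have a3 := hg z hz
      rw [mem_sdiff, mem_insert, mem_singleton] at hz
      rw [mem_od] at a1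
      rw [mem_ev]
      omega
    · rw [ev_card]; omega
  refine ⟨hX, ?_⟩
  have : Y \ {-1,1} = od (j+1) \ {-1, 1} := by
    apply eq_of_subset_of_card_le
    · obtain ⟨g, hg, -, he⟩ := h2
      intro z hz
      have a1 : g z ∈ ev j := by rw [← hX, ← he]; exact mem_image_of_mem _ hz
      have a2 := hg z hz
      rw [mem_sdiff] at hz ⊢
      refine ⟨?_, hz.2⟩
      rw [mem_ev] at a1
      rw [mem_od]
      push_cast
      omega
    · rw [← (mt_ev_od j).card, ev_card, ← c2, c1]
  have h4 : ({-1, 1} : Finset ℤ) ⊆ od (j+1) := by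
    intro y hy
    rw [mem_insert, mem_singleton] at hy
    rw [mem_od]; push_cast; omega
  rw [← sdiff_union_of_subset h3, this, sdiff_union_of_subset h4]

lemma hs_odd (K : Finset ℕ) (t : ℕ) : hs K (2*t+1) = ∅ := by
  rw [hs, if_neg]; rintro ⟨κ, -, h⟩; omega
lemma hs_even {K : Finset ℕ} {t : ℕ} (h : t ∈ K) : hs K (2*t) = {-1, 1} := by
  rw [hs, if_pos ⟨t, h, rfl⟩]

open Classical in
lemma W_forced {K : Finset ℕ} {Pr : Finset ℤ → Prop} (hPr : ∀ Y, Sy Y → Pr Y) (b : ℕ)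
    (hK : ∀ j, 0 < j → j ≤ b → j ∈ K) : ∀ j, j ≤ b → ∀ Y,
    W K Pr (2*j) Y = if Y = od j then 1 else 0 := by
  intro j
  induction j with
  | zero =>
    intro _ Y
    have : od 0 = ∅ := by rw [← card_eq_zero, od_card]
    rw [this, Nat.mul_zero, W]
  | succ j ih =>
    intro hj Y
    have ih := ih (by omega)
    have h1 : ∀ X, W K Pr (2*j+1) X = if Mt (od j) X then 1 else 0 := by
      intro X
      rw [W, hs_odd, if_pos (empty_subset _), sdiff_empty]
      simp only [ih]
      rw [sum_ite_eq']
      simp only [mem_filter, mem_preds, hPr _ (sy_od j), and_true]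
    rw [show 2*(j+1) = 2*j+1+1 by ring, W, show 2*j+1+1 = 2*(j+1) by ring,
      hs_even (hK (j+1) (by omega) hj)]
    simp only [h1]
    by_cases hY : Y = od (j+1)
    · subst hY
      rw [if_pos rfl, if_pos, sum_eq_single (ev j), if_pos (mt_od_ev j)]
      · intro X hX hne
        rw [mem_filter, mem_preds] at hX
        rw [if_neg]
        intro h
        exact hne (forced h hX.1 (by
          intro y hy
          rw [mem_insert, mem_singleton] at hy
          rw [mem_od]; push_cast; omega)).1
      · intro h
        exact absurd (mem_filter.2 ⟨mem_preds.2 (mt_ev_od j), hPr _ (sy_ev j)⟩) h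
      · intro y hy
        rw [mem_insert, mem_singleton] at hy
        rw [mem_od]; push_cast; omega
    · rw [if_neg hY]
      split_ifs with h
      · apply sum_eq_zero
        intro X hX
        rw [mem_filter, mem_preds] at hX
        rw [if_neg]
        intro h'
        exact hY (forced h' hX.1 h).2
      · rfl

/-- sequences -/
structure Ch (K : Finset ℕ) (Pr : Finset ℤ → Prop) (b n : ℕ) (Y : Finset ℤ) (X : ℕ → Finset ℤ) :
    Prop where
  zero : X 0 = od b
  hole : ∀ m < n, hs K (2*b+(m+1)) ⊆ X (m+1)
  mt : ∀ m < n, Mt (X m) (X (m+1) \ hs K (2*b+(m+1)))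
  pr : ∀ m < n, Pr (X m)
  last : X n = Y
  gt : ∀ m, n < m → X m = ∅

open Classical in
noncomputable def SF (K : Finset ℕ) (Pr : Finset ℤ → Prop) (b : ℕ) :
    ℕ → Finset ℤ → Finset (ℕ → Finset ℤ)
  | 0, Y => if Y = od b then {fun m => if m = 0 then Y else ∅} else ∅
  | n+1, Y => if hs K (2*b+(n+1)) ⊆ Y then
      ((preds (Y \ hs K (2*b+(n+1)))).filter Pr).biUnion
        (fun X => (SF K Pr b n X).image (fun s => Function.update s (n+1) Y)) else ∅

lemma mem_SF {K : Finset ℕ} {Pr : Finset ℤ → Prop} {b : ℕ} : ∀ {n : ℕ} {Y : Finset ℤ}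
    {X : ℕ → Finset ℤ}, X ∈ SF K Pr b n Y ↔ Ch K Pr b n Y X := by
  classical
  intro n
  induction n with
  | zero =>
    intro Y X
    rw [SF]
    constructor
    · intro h
      split_ifs at h with h1
      · rw [mem_singleton] at h
        subst h
        exact ⟨by simp [h1], by simp, by simp, by simp, by simp, by
          intro m hm; exact if_neg (by omega)⟩
      · simp at h
    · intro h
      rw [if_pos (by rw [← h.last, h.zero]), mem_singleton]
      funext m
      split_ifs with hm
      · rw [hm, h.last]
      · exact h.gt m (by omega)
  | succ n ih =>
    intro Y X
    rw [SF]
    constructor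
    · intro h
      split_ifs at h with h1
      · rw [mem_biUnion] at h
        obtain ⟨X', h2, h3⟩ := h
        rw [mem_filter, mem_preds] at h2
        obtain ⟨s, h4, rfl⟩ := mem_image.1 h3
        have h5 := ih.1 h4
        have u1 : ∀ m, m < n+1 → Function.update s (n+1) Y m = s m := by
          intro m hm
          rw [Function.update_of_ne (by omega)]
        have u2 : Function.update s (n+1) Y (n+1) = Y := Function.update_self ..
        constructor
        · rw [u1 _ (by omega), h5.zero]
        · intro m hm
          rcases Nat.lt_succ_iff_lt_or_eq.1 hm with h | rfl
          · rw [u1 _ (by omega)]; exact h5.hole m h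
          · rw [u2]; exact h1
        · intro m hm
          rcases Nat.lt_succ_iff_lt_or_eq.1 hm with h | rfl
          · rw [u1 _ (by omega), u1 _ (by omega)]; exact h5.mt m h
          · rw [u2, u1 _ (by omega), h5.last]; exact h2.1
        · intro m hm
          rw [u1 _ hm]
          rcases Nat.lt_succ_iff_lt_or_eq.1 hm with h | rfl
          · exact h5.pr m h
          · rw [h5.last]; exact h2.2
        · exact u2
        · intro m hm
          rw [Function.update_of_ne (by omega)]
          exact h5.gt m (by omega)
      · simp at h
    · intro h
      have hl := h.last
      have h1 := h.hole n (by omega)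
      rw [hl] at h1
      rw [if_pos h1, mem_biUnion]
      refine ⟨X n, ?_, ?_⟩
      · rw [mem_filter, mem_preds]
        refine ⟨?_, h.pr n (by omega)⟩
        have := h.mt n (by omega)
        rwa [hl] at this
      · rw [mem_image]
        refine ⟨Function.update X (n+1) ∅, ih.2 ?_, ?_⟩
        · have u1 : ∀ m, m < n+1 → Function.update X (n+1) ∅ m = X m := by
            intro m hm
            rw [Function.update_of_ne (by omega)]
          constructor
          · rw [u1 _ (by omega), h.zero]
          · intro m hm
            rw [u1 _ (by omega)]; exact h.hole m (by omega)
          · intro m hm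
            rw [u1 _ (by omega), u1 _ (by omega)]; exact h.mt m (by omega)
          · intro m hm
            rw [u1 _ (by omega)]; exact h.pr m (by omega)
          · exact u1 _ (by omega)
          · intro m hm
            by_cases hmn : m = n+1
            · rw [hmn, Function.update_self]
            · rw [Function.update_of_ne hmn]; exact h.gt m (by omega)
        · rw [Function.update_idem, ← hl, Function.update_eq_self]

lemma card_SF {K : Finset ℕ} {Pr : Finset ℤ → Prop} (hPr : ∀ Y, Sy Y → Pr Y) (b : ℕ)
    (hK : ∀ j, 0 < j → j ≤ b → j ∈ K) : ∀ (n : ℕ) (Y : Finset ℤ),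
    (SF K Pr b n Y).card = W K Pr (2*b+n) Y := by
  classical
  intro n
  induction n with
  | zero =>
    intro Y
    rw [SF, Nat.add_zero, W_forced hPr b hK b le_rfl]
    split_ifs <;> simp
  | succ n ih =>
    intro Y
    rw [SF, ← Nat.add_assoc, W, Nat.add_assoc]
    split_ifs with h
    · rw [card_biUnion]
      · apply sum_congr rfl
        intro X hX
        rw [card_image_of_injOn, ih]
        intro s hs t ht e
        have h1 := mem_SF.1 (mem_coe.1 hs)
        have h2 := mem_SF.1 (mem_coe.1 ht)
        funext m
        by_cases hm : m = n+1
        · rw [hm, h1.gt _ (by omega), h2.gt _ (by omega)]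
        · have := congrFun e m
          simpa only [Function.update_of_ne hm] using this
      · intro X hX X' hX' hne
        rw [Function.onFun, disjoint_left]
        intro r hr hr'
        obtain ⟨s, hs, rfl⟩ := mem_image.1 hr
        obtain ⟨t, ht, e⟩ := mem_image.1 hr'
        have h1 := mem_SF.1 hs
        have h2 := mem_SF.1 ht
        apply hne
        have := congrFun e n
        rw [Function.update_of_ne (by omega), Function.update_of_ne (by omega), h1.last,
          h2.last] at this
        exact this.symm
    · rfl

lemma Ch.bound {K Pr b n Y X} (h : Ch K Pr b n Y X) : ∀ m ≤ n, ∀ y ∈ X m, |y| ≤ 2*b+m := by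
  intro m
  induction m with
  | zero =>
    intro _ y hy
    rw [h.zero, mem_od] at hy
    rw [abs_le]; push_cast; omega
  | succ m ih =>
    intro hm y hy
    by_cases hh : y ∈ hs K (2*b+(m+1))
    · rw [hs] at hh
      split_ifs at hh with h1
      · rw [mem_insert, mem_singleton] at hh
        rw [abs_le]; push_cast; omega
      · simp at hh
    · obtain ⟨f, hf, -, he⟩ := h.mt m (by omega)
      have hz := mem_sdiff.2 ⟨hy, hh⟩
      have a1 := hf y hz
      have a2 := ih (by omega) (f y) (by rw [← he]; exact mem_image_of_mem _ hz)
      rw [abs_le] at a2 ⊢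
      push_cast
      omega

/-- abstract sequences -/
structure V2 (K : Finset ℕ) (b A x : ℕ) (X : ℕ → Finset ℤ) : Prop where
  zero : X 0 = od b
  hole : ∀ m < A, hs K (2*b+(m+1)) ⊆ X (m+1)
  mt : ∀ m < A, Mt (X m) (X (m+1) \ hs K (2*b+(m+1)))
  avoid : ∀ y ∈ X A, 2 * (x:ℤ) - 2 < |y|
  sy : Sy (X A)
  gt : ∀ m, A < m → X m = ∅

lemma card_V2 {K : Finset ℕ} {Pr : Finset ℤ → Prop} (hPr : ∀ Y, Sy Y → Pr Y) (b A x L : ℕ)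
    (hK : ∀ j, 0 < j → j ≤ b → j ∈ K) (hL : 2*b+A ≤ L) :
    Nat.card {X // V2 K b A x X ∧ ∀ m : ℕ, Pr (X m)} = ∑ Y ∈ FF x L, W K Pr (2*b+A) Y := by
  classical
  have h1 : ∀ X, (V2 K b A x X ∧ ∀ m : ℕ, Pr (X m)) ↔ X ∈ (FF x L).biUnion (SF K Pr b A) := by
    intro X
    rw [mem_biUnion]
    constructor
    · rintro ⟨h, h'⟩
      have hc : Ch K Pr b A (X A) X := ⟨h.zero, h.hole, h.mt, fun m _ => h' m, rfl, h.gt⟩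
      refine ⟨X A, ?_, mem_SF.2 hc⟩
      rw [FF, mem_filter, mem_powerset]
      refine ⟨?_, h.sy, h.avoid⟩
      intro y hy
      have := hc.bound A le_rfl y hy
      rw [abs_le] at this
      rw [mem_Icc]
      omega
    · rintro ⟨Y, hY, hX⟩
      have h := mem_SF.1 hX
      rw [FF, mem_filter] at hY
      refine ⟨⟨h.zero, h.hole, h.mt, by rw [h.last]; exact hY.2.2, by rw [h.last]; exact hY.2.1,
        h.gt⟩, ?_⟩
      intro m
      rcases lt_trichotomy m A with hm | rfl | hm
      · exact h.pr m hm
      · rw [h.last]; exact hPr _ hY.2.1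
      · rw [h.gt m hm]; exact hPr _ (by intro y hy; simp at hy)
  rw [Nat.card_congr (Equiv.subtypeEquivRight h1), Nat.card_eq_fintype_card, Fintype.card_coe,
    card_biUnion]
  · exact sum_congr rfl fun Y _ => card_SF hPr b hK A Y
  · intro Y _ Y' _ hne
    rw [Function.onFun, disjoint_left]
    intro s hs hs'
    exact hne ((mem_SF.1 hs).last.symm.trans (mem_SF.1 hs').last)

theorem count_V2 (K : Finset ℕ) (hK0 : ∀ κ ∈ K, 0 < κ) (a b x : ℕ) (ha : 0 < a) (hx : 0 < x)
    (hK : ∀ j, 0 < j → j ≤ b → j ∈ K) :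
    Nat.card {X // V2 K b (2*a-1) x X ∧ ∀ _m : ℕ, True} =
      (Nat.card {X // V2 K b (2*a-1) x X ∧ ∀ m : ℕ, Sy (X m)})^2 := by
  have e : 2*b+(2*a-1) = 2*(a+b)-1 := by omega
  have h1 := card_V2 (Pr := fun _ => True) (K := K) (fun _ _ => trivial) b (2*a-1) x
    (2*(x+(a+b))-1) hK (by omega)
  have h2 := card_V2 (Pr := Sy) (K := K) (fun _ h => h) b (2*a-1) x
    (2*(x+(a+b))-1) hK (by omega)
  rw [h1, h2, e]
  exact final_count K hK0 (a+b) x (a+b) (by omega) hx le_rfl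

end PQ

namespace PQ
open Finset

/-- removed cells in the left half -/
def Rem (ks : Finset ℕ) (a x : ℕ) (m Y : ℤ) : Prop :=
  (∃ k ∈ ks, (m = 2*k-2 ∧ Y = 0) ∨ (m = 2*k-1 ∧ -1 ≤ Y ∧ Y ≤ 1)) ∨
    (Y + 2*a - 2 - m ≤ 2*x-2 ∧ -Y + 2*a - 2 - m ≤ 2*x-2)

open Classical in
noncomputable def Bc (ks : Finset ℕ) (a b x m : ℕ) : Finset ℤ :=
  (Icc (-(2*b+m:ℤ)) (2*b+m)).filter (fun Y => (Y-m)%2=0 ∧ ¬ Rem ks a x m Y)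

open Classical in
noncomputable def Wc (ks : Finset ℕ) (a b x m : ℕ) : Finset ℤ :=
  (Icc (-(2*b+m:ℤ)) (2*b+m)).filter (fun Y => (Y-m)%2=1 ∧ ¬ Rem ks a x m Y)

open Classical in
lemma mem_Bc {ks : Finset ℕ} {a b x m : ℕ} {Y : ℤ} : Y ∈ Bc ks a b x m ↔
    (-(2*b+m:ℤ) ≤ Y ∧ Y ≤ 2*b+m) ∧ (Y-m)%2=0 ∧ ¬ Rem ks a x m Y := by
  rw [Bc, mem_filter, mem_Icc]
open Classical in
lemma mem_Wc {ks : Finset ℕ} {a b x m : ℕ} {Y : ℤ} : Y ∈ Wc ks a b x m ↔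
    (-(2*b+m:ℤ) ≤ Y ∧ Y ≤ 2*b+m) ∧ (Y-m)%2=1 ∧ ¬ Rem ks a x m Y := by
  rw [Wc, mem_filter, mem_Icc]

def Kset (ks : Finset ℕ) (b : ℕ) : Finset ℕ := Icc 1 b ∪ ks.image (fun k => b + k)

lemma mem_hsK {ks : Finset ℕ} {b m : ℕ} {Y : ℤ} : Y ∈ hs (Kset ks b) (2*b+(m+1)) ↔
    (∃ k ∈ ks, m + 1 = 2 * k) ∧ (Y = -1 ∨ Y = 1) := by
  rw [hs]
  split_ifs with h
  · rw [mem_insert, mem_singleton, iff_and_self]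
    intro _
    obtain ⟨κ, h1, h2⟩ := h
    rw [Kset, mem_union, mem_image, mem_Icc] at h1
    rcases h1 with h1 | ⟨k, hk, h1⟩
    · omega
    · exact ⟨k, hk, by omega⟩
  · simp only [notMem_empty, false_iff, not_and]
    rintro ⟨k, hk, h1⟩
    exact absurd ⟨b+k, by rw [Kset, mem_union, mem_image]; exact Or.inr ⟨k, hk, rfl⟩, by omega⟩ h

lemma Rem_neg {ks : Finset ℕ} {a x : ℕ} {m Y : ℤ} (h : Rem ks a x m (-Y)) : Rem ks a x m Y := by
  rcases h with ⟨k, hk, h⟩ | h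
  · exact Or.inl ⟨k, hk, by omega⟩
  · exact Or.inr (by omega)

lemma sy_hs (K : Finset ℕ) (t : ℕ) : Sy (hs K t) := by
  intro y hy
  rw [hs] at hy ⊢
  split_ifs at hy ⊢ with h
  · rw [mem_insert, mem_singleton] at hy ⊢; omega
  · simp at hy

noncomputable def Dat0 (ks : Finset ℕ) (a b x : ℕ) (ha : 0 < a) (_hb : 0 < b)
    (hk : ∀ k ∈ ks, 0 < k ∧ k + x ≤ a) : Dat where
  A := 2*a-1
  Bk := Bc ks a b x
  Wt := Wc ks a b x
  H := fun m => hs (Kset ks b) (2*b+m)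
  A_pos := by omega
  parB := fun m Y h => (mem_Bc.1 h).2.1
  parW := fun m Y h => (mem_Wc.1 h).2.1
  step := by
    intro m hm
    ext Y
    rw [mem_union, mem_Wc, mem_Bc, mem_hsK]
    push_cast
    constructor
    · rintro ⟨h1, h2, h3⟩
      by_cases hh : (∃ k ∈ ks, m + 1 = 2 * k) ∧ (Y = -1 ∨ Y = 1)
      · exact Or.inr hh
      · refine Or.inl ⟨by omega, by omega, ?_⟩
        rintro (⟨k, hk', h4⟩ | h4)
        · have := hk k hk'
          rcases h4 with h4 | h4
          · exact h3 (Or.inl ⟨k, hk', Or.inr (by omega)⟩)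
          · exact hh ⟨⟨k, hk', by omega⟩, by omega⟩
        · exact h3 (Or.inr (by omega))
    · rintro (⟨h1, h2, h3⟩ | ⟨⟨k, hk', h1⟩, h2⟩)
      · refine ⟨by omega, by omega, ?_⟩
        rintro (⟨k, hk', h4⟩ | h4)
        · have := hk k hk'
          exact h3 (Or.inl ⟨k, hk', by omega⟩)
        · exact h3 (Or.inr (by omega))
      · have := hk k hk'
        refine ⟨by omega, by omega, ?_⟩
        rintro (⟨k', hk', h4⟩ | h4) <;> omega
  disj := by
    intro m hm
    rw [disjoint_left]
    intro Y h1 h2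
    rw [mem_hsK] at h2
    obtain ⟨⟨k, hk', h3⟩, h4⟩ := h2
    exact (mem_Bc.1 h1).2.2 (Or.inl ⟨k, hk', Or.inr (by omega)⟩)
  HA := by
    rw [show 2*b+(2*a-1) = 2*(b+a-1)+1 by omega, hs_odd]
  symB := by
    intro m Y h
    rw [mem_Bc] at h ⊢
    exact ⟨by omega, by omega, fun h' => h.2.2 (Rem_neg h')⟩
  symW := by
    intro m Y h
    rw [mem_Wc] at h ⊢
    exact ⟨by omega, by omega, fun h' => h.2.2 (Rem_neg h')⟩
  symH := fun m => sy_hs _ _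

lemma V2.bound {K b A x X} (h : V2 K b A x X) : ∀ m ≤ A, ∀ y ∈ X m, -(2*b+m:ℤ) ≤ y ∧ y ≤ 2*b+m := by
  have hc : Ch K (fun _ => True) b A (X A) X := ⟨h.zero, h.hole, h.mt, fun _ _ => trivial, rfl, h.gt⟩
  intro m hm y hy
  exact abs_le.1 (hc.bound m hm y hy)

lemma V2.par {K b A x X} (h : V2 K b A x X) : ∀ m ≤ A, ∀ y ∈ X m, (y-m)%2=1 := by
  intro m
  induction m with
  | zero =>
    intro _ y hy
    rw [h.zero, mem_od] at hy
    push_cast; omega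
  | succ m ih =>
    intro hm y hy
    by_cases hh : y ∈ hs K (2*b+(m+1))
    · rw [hs] at hh
      split_ifs at hh with h1
      · rw [mem_insert, mem_singleton] at hh
        obtain ⟨κ, -, h1⟩ := h1
        push_cast; omega
      · simp at hh
    · obtain ⟨f, hf, -, he⟩ := h.mt m (by omega)
      have hz := mem_sdiff.2 ⟨hy, hh⟩
      have a1 := hf y hz
      have a2 := ih (by omega) (f y) (by rw [← he]; exact mem_image_of_mem _ hz)
      push_cast
      omega

lemma V2.av {K b A x X} (h : V2 K b A x X) : ∀ i m, m + i = A → ∀ y ∈ X m,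
    2*(x:ℤ)-2 < |y| + i := by
  intro i
  induction i with
  | zero =>
    intro m hm y hy
    obtain rfl : m = A := by omega
    have := h.avoid y hy
    simpa using this
  | succ i ih =>
    intro m hm y hy
    obtain ⟨f, hf, -, he⟩ := h.mt m (by omega)
    rw [← he] at hy
    obtain ⟨z, hz, rfl⟩ := mem_image.1 hy
    have a1 := hf z hz
    have a2 := ih (m+1) (by omega) z (mem_sdiff.1 hz).1
    have a3 : |z| ≤ |f z| + 1 := by
      rw [abs_le]
      have := neg_abs_le (f z)
      have := le_abs_self (f z)
      omega
    push_cast; omega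

lemma V_iff (ks : Finset ℕ) (a b x : ℕ) (ha : 0 < a) (hb : 0 < b) (hxa : x ≤ a)
    (hk : ∀ k ∈ ks, 0 < k ∧ k + x ≤ a) (hx : 0 < x) (X : ℕ → Finset ℤ) :
    (Dat0 ks a b x ha hb hk).V X ↔ V2 (Kset ks b) b (2*a-1) x X := by
  have h0 : Wc ks a b x 0 = od b := by
    ext Y
    rw [mem_Wc, mem_od]
    push_cast
    constructor
    · rintro ⟨h1, h2, h3⟩; omega
    · rintro ⟨h1, h2⟩
      refine ⟨by omega, by omega, ?_⟩
      rintro (⟨k', hk', h4⟩ | h4)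
      · have := hk _ hk'; omega
      · omega
  constructor
  · intro h
    refine ⟨h.zero.trans h0, h.hole, h.mt, ?_, h.sy, h.gt⟩
    intro y hy
    have h1 := h.subB (2*a-2) (show 2*a-2 < 2*a-1 by omega)
    have h2 : (Dat0 ks a b x ha hb hk).H (2*a-2+1) = ∅ := by
      rw [show 2*a-2+1 = 2*a-1 by omega]; exact (Dat0 ks a b x ha hb hk).HA
    rw [h2, sdiff_empty, show 2*a-2+1 = 2*a-1 by omega] at h1
    have h3 := (mem_Bc.1 (h1 hy)).2.2
    by_contra hc
    apply h3
    right
    have h4 : |y| ≤ 2*x-2 := by omega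
    rw [abs_le] at h4
    omega
  · intro h
    have z0 : ∀ k ∈ ks, 0 ∉ X (2*k-1) := by
      intro k hk' h1
      have h2 := hk k hk'
      obtain ⟨f, hf, -, he⟩ := h.mt (2*k-1) (by omega)
      rw [← he] at h1
      obtain ⟨z, hz, h3⟩ := mem_image.1 h1
      have := hf z hz
      rw [mem_sdiff, mem_hsK] at hz
      exact hz.2 ⟨⟨k, hk', by omega⟩, by omega⟩
    refine ⟨h.zero.trans h0.symm, h.hole, h.mt, ?_, ?_, h.sy, h.gt⟩
    · intro m (hm : m < 2*a-1) y hy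
      have h1 := h.par m hm.le y hy
      refine mem_Wc.2 ⟨h.bound m hm.le y hy, h1, ?_⟩
      rintro (⟨k, hk', h4⟩ | h4)
      · have := hk _ hk'
        apply z0 k hk'
        obtain rfl : y = 0 := by omega
        rwa [show 2*k-1 = m by omega]
      · have := h.av (2*a-1-m) m (by omega) y hy
        rcases abs_cases y with ⟨e, _⟩ | ⟨e, _⟩ <;> rw [e] at this <;> omega
    · intro m (hm : m < 2*a-1) z (hz : z ∈ X (m+1) \ hs (Kset ks b) (2*b+(m+1)))
      have h0 := (mem_sdiff.1 hz)
      have h1 := h.par (m+1) hm z h0.1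
      have h2 := h.bound (m+1) hm z h0.1
      push_cast at h1 h2
      refine mem_Bc.2 ⟨by omega, by omega, ?_⟩
      rintro (⟨k, hk', h4⟩ | h4)
      · have := hk _ hk'
        rcases h4 with h4 | h4
        · apply z0 k hk'
          obtain rfl : z = 0 := by omega
          rw [show 2*k-1 = m+1 by omega]
          exact h0.1
        · exact h0.2 (mem_hsK.2 ⟨⟨k, hk', by omega⟩, by omega⟩)
      · have := h.av (2*a-1-(m+1)) (m+1) (by omega) z h0.1
        rcases abs_cases z with ⟨e, _⟩ | ⟨e, _⟩ <;> rw [e] at this <;> omega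

theorem count_PM (ks : Finset ℕ) (a b x : ℕ) (ha : 0 < a) (hb : 0 < b) (hx : 0 < x) (hxa : x ≤ a)
    (hk : ∀ k ∈ ks, 0 < k ∧ k + x ≤ a) :
    Nat.card {M // PM (Dat0 ks a b x ha hb hk).D M ∧ (Dat0 ks a b x ha hb hk).Rot M} =
    (Nat.card {M // PM (Dat0 ks a b x ha hb hk).D M ∧ (Dat0 ks a b x ha hb hk).Rot M ∧
      (Dat0 ks a b x ha hb hk).Refl M})^2 := by
  rw [Dat.card_rot, Dat.card_refl]
  have h := count_V2 (Kset ks b) (by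
    intro κ h
    rw [Kset, mem_union, mem_image, mem_Icc] at h
    rcases h with h | ⟨k, hk', rfl⟩
    · omega
    · omega) a b x ha hx (by
    intro j h1 h2
    rw [Kset, mem_union, mem_Icc]; left; omega)
  have e1 : ∀ X, (Dat0 ks a b x ha hb hk).V X ↔ V2 (Kset ks b) b (2*a-1) x X :=
    V_iff ks a b x ha hb hxa hk hx
  simp only [e1]
  exact h

end PQ

namespace PQ
open Finset

lemma s3_pos : 0 < PP.s3 := by unfold PP.s3; positivity

noncomputable def cX (p : Pt) : ℝ := 2 * p.1 / PP.s3
noncomputable def cU (b : ℝ) (p : Pt) : ℝ := p.2 - b - p.1 / PP.s3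
noncomputable def cV (b : ℝ) (p : Pt) : ℝ := p.2 - b + p.1 / PP.s3

lemma cV_eq (b : ℝ) (p : Pt) : cV b p = cU b p + cX p := by
  unfold cV cU cX; ring

noncomputable def pnt (b X U : ℝ) : Pt := (X * PP.s3 / 2, U + X / 2 + b)

lemma cX_pnt (b X U : ℝ) : cX (pnt b X U) = X := by
  have := s3_pos
  unfold cX pnt; field_simp
lemma cU_pnt (b X U : ℝ) : cU b (pnt b X U) = U := by
  have := s3_pos
  unfold cU pnt; field_simp; ring
lemma cV_pnt (b X U : ℝ) : cV b (pnt b X U) = U + X := by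
  rw [cV_eq, cX_pnt, cU_pnt]

lemma pnt_self (b : ℝ) (p : Pt) : pnt b (cX p) (cU b p) = p := by
  have := s3_pos
  unfold pnt cX cU
  ext
  · dsimp only; field_simp
  · dsimp only; field_simp; ring

lemma cont_X : Continuous cX := by unfold cX; fun_prop
lemma cont_U (b : ℝ) : Continuous (cU b) := by unfold cU; fun_prop
lemma cont_V (b : ℝ) : Continuous (cV b) := by unfold cV; fun_prop
lemma cont_pnt (b : ℝ) {f g : ℝ → ℝ} (hf : Continuous f) (hg : Continuous g) :
    Continuous (fun t => pnt b (f t) (g t)) := by unfold pnt; fun_prop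

structure Bx where
  x1 : ℤ
  x2 : ℤ
  u1 : ℤ
  u2 : ℤ
  v1 : ℤ
  v2 : ℤ

def Bx.S (b : ℝ) (B : Bx) : Set Pt :=
  {p | ((B.x1:ℝ) ≤ cX p ∧ cX p ≤ B.x2) ∧ ((B.u1:ℝ) ≤ cU b p ∧ cU b p ≤ B.u2) ∧
    ((B.v1:ℝ) ≤ cV b p ∧ cV b p ≤ B.v2)}

def ii (c : Cell) : ℤ := (c.2 - c.1 - 1) / 2
def jj (c : Cell) : ℤ := (c.2 + c.1) / 2

def Bx.In (B : Bx) (c : Cell) : Prop :=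
  (B.x1 ≤ c.1 ∧ c.1 < B.x2) ∧ (B.u1 ≤ ii c ∧ ii c < B.u2) ∧ (B.v1 ≤ jj c ∧ jj c < B.v2)

def Gen (b : ℝ) (p : Pt) (c : Cell) : Prop :=
  ((c.1:ℝ) < cX p ∧ cX p < c.1 + 1) ∧ ((ii c:ℝ) < cU b p ∧ cU b p < ii c + 1) ∧
    ((jj c:ℝ) < cV b p ∧ cV b p < jj c + 1)

lemma aux1 {c : ℤ} {r : ℝ} (h1 : (c:ℝ) < r) (h2 : r < c + 1) (n : ℤ) : (n:ℝ) ≤ r ↔ n ≤ c := by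
  constructor
  · intro h
    have : (n:ℝ) < (c:ℝ) + 1 := lt_of_le_of_lt h h2
    have : n < c + 1 := by exact_mod_cast this
    omega
  · intro h
    have : (n:ℝ) ≤ c := by exact_mod_cast h
    linarith

lemma aux2 {c : ℤ} {r : ℝ} (h1 : (c:ℝ) < r) (h2 : r < c + 1) (n : ℤ) : r ≤ (n:ℝ) ↔ c < n := by
  constructor
  · intro h
    have : (c:ℝ) < n := lt_of_lt_of_le h1 h
    exact_mod_cast this
  · intro h
    have : (c:ℝ) + 1 ≤ n := by exact_mod_cast h
    linarith

lemma gen_mem {b : ℝ} {p : Pt} {c : Cell} (h : Gen b p c) (B : Bx) : p ∈ B.S b ↔ B.In c := by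
  obtain ⟨⟨h1, h2⟩, ⟨h3, h4⟩, h5, h6⟩ := h
  unfold Bx.S Bx.In
  rw [Set.mem_ofPred_eq, aux1 h1 h2, aux2 h1 h2, aux1 h3 h4, aux2 h3 h4, aux1 h5 h6, aux2 h5 h6]

lemma gen_int {b : ℝ} {p : Pt} {c : Cell} (h : Gen b p c) {B : Bx} (hB : B.In c) :
    p ∈ interior (B.S b) := by
  have ho : IsOpen {q : Pt | Gen b q c} := by
    unfold Gen
    refine IsOpen.inter ?_ (IsOpen.inter ?_ ?_)
    · exact (isOpen_lt continuous_const cont_X).inter (isOpen_lt cont_X continuous_const)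
    · exact (isOpen_lt continuous_const (cont_U b)).inter (isOpen_lt (cont_U b) continuous_const)
    · exact (isOpen_lt continuous_const (cont_V b)).inter (isOpen_lt (cont_V b) continuous_const)
  exact mem_interior.2 ⟨_, fun q hq => (gen_mem hq B).2 hB, ho, h⟩

lemma cen (b : ℝ) (c : Cell) : ∃ p, Gen b p c := by
  rcases Int.emod_two_eq_zero_or_one (c.2 - c.1) with h | h
  · have e : jj c = ii c + c.1 + 1 := by unfold ii jj; omega
    refine ⟨pnt b (c.1 + 2/3) (ii c + 2/3), ?_⟩
    unfold Gen
    rw [cX_pnt, cU_pnt, cV_pnt, e]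
    push_cast
    refine ⟨⟨?_, ?_⟩, ⟨?_, ?_⟩, ?_, ?_⟩ <;> linarith
  · have e : jj c = ii c + c.1 := by unfold ii jj; omega
    refine ⟨pnt b (c.1 + 1/3) (ii c + 1/3), ?_⟩
    unfold Gen
    rw [cX_pnt, cU_pnt, cV_pnt, e]
    push_cast
    refine ⟨⟨?_, ?_⟩, ⟨?_, ?_⟩, ?_, ?_⟩ <;> linarith

lemma gen_of_nonint {b : ℝ} {p : Pt} (h1 : ∀ n : ℤ, (n:ℝ) ≠ cX p) (h2 : ∀ n : ℤ, (n:ℝ) ≠ cU b p)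
    (h3 : ∀ n : ℤ, (n:ℝ) ≠ cV b p) : ∃ c, Gen b p c := by
  have a1 := lt_of_le_of_ne (Int.floor_le (cX p)) (h1 _)
  have a2 := lt_of_le_of_ne (Int.floor_le (cU b p)) (h2 _)
  have a3 := lt_of_le_of_ne (Int.floor_le (cV b p)) (h3 _)
  have b1 := Int.lt_floor_add_one (cX p)
  have b2 := Int.lt_floor_add_one (cU b p)
  have b3 := Int.lt_floor_add_one (cV b p)
  set m := ⌊cX p⌋
  set i := ⌊cU b p⌋
  set j := ⌊cV b p⌋
  have e := cV_eq b p
  have k1 : i + m < j + 1 := by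
    have : ((i:ℝ) + m) < j + 1 := by linarith
    exact_mod_cast this
  have k2 : j < i + m + 2 := by
    have : (j:ℝ) < i + m + 2 := by linarith
    exact_mod_cast this
  have hi : ii (m, i+j+1) = i := by unfold ii; dsimp only; omega
  have hj : jj (m, i+j+1) = j := by unfold jj; dsimp only; omega
  refine ⟨(m, i + j + 1), ?_⟩
  unfold Gen
  rw [hi, hj]
  exact ⟨⟨a1, b1⟩, ⟨a2, b2⟩, a3, b3⟩

lemma gen_dense (b : ℝ) {O : Set Pt} (hO : IsOpen O) (hne : O.Nonempty) :
    ∃ p ∈ O, ∃ c, Gen b p c := by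
  obtain ⟨p, hp⟩ := hne
  let q : ℝ → Pt := fun t => pnt b (cX p + t) (cU b p + t)
  have hq : Continuous q := cont_pnt b (by fun_prop) (by fun_prop)
  let bad : Set ℝ := (Set.range fun n : ℤ => (n:ℝ) - cX p) ∪ (Set.range fun n : ℤ => (n:ℝ) - cU b p) ∪
    (Set.range fun n : ℤ => ((n:ℝ) - cV b p)/2)
  have hb : bad.Countable :=
    ((Set.countable_range _).union (Set.countable_range _)).union (Set.countable_range _)
  have hd := hb.dense_compl ℝ
  obtain ⟨t, ht, htb⟩ := hd.inter_open_nonempty (q ⁻¹' O) (hO.preimage hq)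
    ⟨0, by simp only [Set.mem_preimage, q, add_zero, pnt_self]; exact hp⟩
  refine ⟨q t, ht, gen_of_nonint ?_ ?_ ?_⟩
  · intro n hn
    refine htb (Or.inl (Or.inl ⟨n, ?_⟩))
    simp only [q, cX_pnt] at hn
    simp only; linarith
  · intro n hn
    refine htb (Or.inl (Or.inr ⟨n, ?_⟩))
    simp only [q, cU_pnt] at hn
    simp only; linarith
  · intro n hn
    refine htb (Or.inr ⟨n, ?_⟩)
    simp only [q, cV_pnt] at hn
    have := cV_eq b p
    simp only; linarith

def LB (c d : Cell) : Bx where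
  x1 := min c.1 d.1
  x2 := max c.1 d.1 + 1
  u1 := min (ii c) (ii d)
  u2 := max (ii c) (ii d) + 1
  v1 := min (jj c) (jj d)
  v2 := max (jj c) (jj d) + 1

lemma LB_symm (c d : Cell) : LB c d = LB d c := by
  unfold LB; simp only [min_comm, max_comm]

lemma In_LB {c d e : Cell} (h : AdjC c d) : (LB c d).In e ↔ e = c ∨ e = d := by
  obtain ⟨c1, c2⟩ := c
  obtain ⟨d1, d2⟩ := d
  obtain ⟨e1, e2⟩ := e
  simp only [AdjC] at h
  simp only [Bx.In, LB, ii, jj, Prod.mk.injEq]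
  omega

lemma In_tri {c e : Cell} : (LB c c).In e ↔ e = c := by
  obtain ⟨c1, c2⟩ := c
  obtain ⟨e1, e2⟩ := e
  simp only [Bx.In, LB, ii, jj, Prod.mk.injEq, min_self, max_self]
  omega

lemma AdjC.symm {c d : Cell} (h : AdjC c d) : AdjC d c := by
  unfold AdjC at *; omega

lemma AdjC.ne {c d : Cell} (h : AdjC c d) : c ≠ d := by
  rintro rfl
  unfold AdjC at h; omega

lemma split_aux {c d : ℤ} (h : d = c ∨ d = c + 1 ∨ d = c - 1) (r : ℝ) :
    (((min c d : ℤ):ℝ) ≤ r ∧ r ≤ ((max c d + 1 : ℤ):ℝ)) ↔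
      ((c:ℝ) ≤ r ∧ r ≤ c + 1) ∨ ((d:ℝ) ≤ r ∧ r ≤ d + 1) := by
  rcases h with rfl | rfl | rfl
  · simp
  · rw [min_eq_left (by omega), max_eq_right (by omega)]
    push_cast
    constructor
    · rintro ⟨h1, h2⟩
      rcases le_total r (c+1) with h | h
      · exact Or.inl ⟨h1, h⟩
      · exact Or.inr ⟨h, h2⟩
    · rintro (⟨h1, h2⟩ | ⟨h1, h2⟩) <;> constructor <;> linarith
  · rw [min_eq_right (by omega), max_eq_left (by omega)]
    push_cast
    constructor
    · rintro ⟨h1, h2⟩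
      rcases le_total r c with h | h
      · exact Or.inr ⟨h1, by linarith⟩
      · exact Or.inl ⟨h, h2⟩
    · rintro (⟨h1, h2⟩ | ⟨h1, h2⟩) <;> constructor <;> linarith

lemma mem_LB {b : ℝ} {c d : Cell} {p : Pt} (h : AdjC c d) :
    p ∈ (LB c d).S b ↔ p ∈ (LB c c).S b ∨ p ∈ (LB d d).S b := by
  have key : (d.1 = c.1 ∧ ii d = ii c ∧ (jj d = jj c + 1 ∨ jj d = jj c - 1)) ∨
      (d.1 = c.1 ∧ jj d = jj c ∧ (ii d = ii c + 1 ∨ ii d = ii c - 1)) ∨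
      (ii d = ii c ∧ jj d = jj c ∧ (d.1 = c.1 + 1 ∨ d.1 = c.1 - 1)) := by
    unfold AdjC at h; unfold ii jj; omega
  unfold Bx.S LB
  simp only [Set.mem_ofPred_eq]
  rw [split_aux (by omega), split_aux (by omega), split_aux (by omega)]
  simp only [min_self, max_self]
  push_cast
  rcases key with ⟨h1, h2, -⟩ | ⟨h1, h2, -⟩ | ⟨h1, h2, -⟩ <;> rw [h1, h2] <;> tauto

end PQ

namespace PQ
open Finset

lemma pnt_comb (b x u x' u' α β : ℝ) (h : α + β = 1) :
    α • pnt b x u + β • pnt b x' u' = pnt b (α*x+β*x') (α*u+β*u') := by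
  obtain rfl : β = 1 - α := by linarith
  unfold pnt
  ext
  · simp only [Prod.smul_mk, Prod.mk_add_mk, smul_eq_mul]; ring
  · simp only [Prod.smul_mk, Prod.mk_add_mk, smul_eq_mul]; ring

lemma trap (b : ℝ) {S : Set Pt} (hS : Convex ℝ S) {x1 l1 h1 x2 l2 h2 : ℝ}
    (p1 : pnt b x1 l1 ∈ S) (p2 : pnt b x1 h1 ∈ S) (p3 : pnt b x2 l2 ∈ S) (p4 : pnt b x2 h2 ∈ S)
    {p : Pt} {t : ℝ} (ht0 : 0 ≤ t) (ht1 : t ≤ 1) (hX : cX p = (1-t)*x1+t*x2)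
    (hl : (1-t)*l1+t*l2 ≤ cU b p) (hh : cU b p ≤ (1-t)*h1+t*h2) : p ∈ S := by
  have q1 := hS p1 p3 (by linarith : 0 ≤ 1 - t) ht0 (by ring)
  have q2 := hS p2 p4 (by linarith : 0 ≤ 1 - t) ht0 (by ring)
  rw [pnt_comb _ _ _ _ _ _ _ (by ring)] at q1 q2
  have hU : cU b p ∈ segment ℝ ((1-t)*l1+t*l2) ((1-t)*h1+t*h2) := by
    rw [segment_eq_Icc (hl.trans hh)]; exact ⟨hl, hh⟩
  obtain ⟨α, β, hα, hβ, hs, e⟩ := hU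
  have q3 := hS q1 q2 hα hβ hs
  rw [pnt_comb _ _ _ _ _ _ _ hs, ← hX] at q3
  simp only [smul_eq_mul] at e
  rw [e, ← add_mul, hs, one_mul, pnt_self] at q3
  exact q3

lemma lin_aux {α β c r s : ℝ} (hα : 0 ≤ α) (hβ : 0 ≤ β) (h : α + β = 1) (h1 : c ≤ r) (h2 : c ≤ s) :
    c ≤ α * r + β * s := by
  obtain rfl : β = 1 - α := by linarith
  nlinarith [mul_le_mul_of_nonneg_left h1 hα, mul_le_mul_of_nonneg_left h2 hβ]
lemma lin_aux2 {α β c r s : ℝ} (hα : 0 ≤ α) (hβ : 0 ≤ β) (h : α + β = 1) (h1 : r ≤ c) (h2 : s ≤ c) :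
    α * r + β * s ≤ c := by
  obtain rfl : β = 1 - α := by linarith
  nlinarith [mul_le_mul_of_nonneg_left h1 hα, mul_le_mul_of_nonneg_left h2 hβ]

lemma Bx.convex (b : ℝ) (B : Bx) : Convex ℝ (B.S b) := by
  intro p hp q hq α β hα hβ h
  obtain ⟨⟨a1, a2⟩, ⟨a3, a4⟩, a5, a6⟩ := hp
  obtain ⟨⟨b1, b2⟩, ⟨b3, b4⟩, b5, b6⟩ := hq
  have e := pnt_comb b (cX p) (cU b p) (cX q) (cU b q) α β h
  rw [pnt_self, pnt_self] at e
  have e3 : cV b (pnt b (α * cX p + β * cX q) (α * cU b p + β * cU b q)) =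
      α * cV b p + β * cV b q := by
    rw [cV_pnt, cV_eq, cV_eq]; ring
  rw [e]
  unfold Bx.S
  rw [Set.mem_ofPred_eq, cX_pnt, cU_pnt, e3]
  exact ⟨⟨lin_aux hα hβ h a1 b1, lin_aux2 hα hβ h a2 b2⟩,
    ⟨lin_aux hα hβ h a3 b3, lin_aux2 hα hβ h a4 b4⟩,
    lin_aux hα hβ h a5 b5, lin_aux2 hα hβ h a6 b6⟩

lemma pnt_mem {b X U : ℝ} {B : Bx} : pnt b X U ∈ B.S b ↔
    ((B.x1:ℝ) ≤ X ∧ X ≤ B.x2) ∧ ((B.u1:ℝ) ≤ U ∧ U ≤ B.u2) ∧ ((B.v1:ℝ) ≤ U + X ∧ U + X ≤ B.v2) := by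
  unfold Bx.S
  rw [Set.mem_ofPred_eq, cX_pnt, cU_pnt, cV_pnt]

lemma pt_eq {b u v X U : ℝ} (h1 : u = X * PP.s3 / 2) (h2 : v = U + X / 2 + b) :
    ((u, v) : Pt) = pnt b X U := Prod.ext h1 h2

lemma ins_eq {p q : Pt} {s t : Set Pt} (h : p = q) (h' : s = t) : insert p s = insert q t := by
  rw [h, h']

lemma sin_eq {p q : Pt} (h : p = q) : ({p} : Set Pt) = {q} := by rw [h]

def hexB (A b : ℕ) : Bx := ⟨0, 2*A, -A-b, b, -b, A+b⟩
def leftB (k : ℕ) : Bx := ⟨2*k-2, 2*k, -k-1, 1-k, k-1, k+1⟩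
def rightB (A k : ℕ) : Bx := ⟨2*(A-k), 2*(A-k)+2, -(A-k)-1, 1-(A-k), (A-k)-1, (A-k)+1⟩
def rhB (a x : ℕ) : Bx := ⟨2*(a-x), 2*(a+x-1), -(a+x-1), -(a-x), a-x, a+x-1⟩

lemma hex_eq (A b : ℕ) (hA : 0 < A) : PP.hexagon A b = (hexB A b).S b := by
  have hA' : (0:ℝ) < A := by exact_mod_cast hA
  have hb' : (0:ℝ) ≤ b := by positivity
  have e : PP.hexagon A b = convexHull ℝ {pnt b 0 (-b), pnt b 0 b, pnt b A b,
      pnt b (2*A) (b-A), pnt b (2*A) (-A-b), pnt b A (-A-b)} := by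
    unfold PP.hexagon
    exact congrArg _ <| ins_eq (pt_eq (by ring) (by ring)) <|
      ins_eq (pt_eq (by ring) (by ring)) <|
      ins_eq (pt_eq (by ring) (by ring)) <|
      ins_eq (pt_eq (by ring) (by ring)) <|
      ins_eq (pt_eq (by ring) (by ring)) <|
      sin_eq (pt_eq (by ring) (by ring))
  rw [e]
  apply Set.Subset.antisymm
  · apply convexHull_min _ (Bx.convex _ _)
    simp only [Set.insert_subset_iff, Set.singleton_subset_iff, pnt_mem, hexB]
    push_cast
    refine ⟨?_, ?_, ?_, ?_, ?_, ?_⟩ <;> refine ⟨⟨?_, ?_⟩, ⟨?_, ?_⟩, ?_, ?_⟩ <;> linarith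
  · intro p hp
    have hc := convex_convexHull ℝ ({pnt b 0 (-b), pnt b 0 b, pnt b A b,
      pnt b (2*A) (b-A), pnt b (2*A) (-A-b), pnt b A (-A-b)} : Set Pt)
    have hs := subset_convexHull ℝ ({pnt b 0 (-b), pnt b 0 b, pnt b A b,
      pnt b (2*A) (b-A), pnt b (2*A) (-A-b), pnt b A (-A-b)} : Set Pt)
    simp only [Set.insert_subset_iff, Set.singleton_subset_iff] at hs
    obtain ⟨s1, s2, s3, s4, s5, s6⟩ := hs
    unfold Bx.S hexB at hp
    simp only [Set.mem_ofPred_eq] at hp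
    push_cast at hp
    obtain ⟨⟨a1, a2⟩, ⟨a3, a4⟩, a5, a6⟩ := hp
    rw [cV_eq] at a5 a6
    rcases le_total (cX p) A with h | h
    · refine trap b hc s1 s2 s6 s3 (t := cX p / A) (by positivity) (by rw [div_le_one hA']; exact h)
        (by field_simp; ring) ?_ ?_
      · have : (1 - cX p / A) * (-b) + cX p / A * (-A-b) = -b - cX p := by field_simp; ring
        rw [this]; linarith
      · have : (1 - cX p / A) * b + cX p / A * b = b := by ring
        rw [this]; exact a4
    · refine trap b hc s6 s3 s5 s4 (t := (cX p - A) / A)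
        (div_nonneg (by linarith) hA'.le) (by rw [div_le_one hA']; linarith)
        (by field_simp; ring) ?_ ?_
      · have : (1 - (cX p - A) / A) * (-A-b) + (cX p - A) / A * (-A-b) = -A-b := by ring
        rw [this]; exact a3
      · have : (1 - (cX p - A) / A) * b + (cX p - A) / A * (b-A) = b + A - cX p := by field_simp; ring
        rw [this]; linarith

lemma left_eq (b k : ℕ) : PP.leftHole b k = (leftB k).S b := by
  have e : PP.leftHole b k = convexHull ℝ {pnt b (2*k) (-1-k), pnt b (2*k) (1-k),
      pnt b (2*k-2) (1-k)} := by
    unfold PP.leftHole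
    exact congrArg _ <| ins_eq (pt_eq (by ring) (by ring)) <|
      ins_eq (pt_eq (by ring) (by ring)) <|
      sin_eq (pt_eq (by ring) (by ring))
  rw [e]
  apply Set.Subset.antisymm
  · apply convexHull_min _ (Bx.convex _ _)
    simp only [Set.insert_subset_iff, Set.singleton_subset_iff, pnt_mem, leftB]
    push_cast
    refine ⟨?_, ?_, ?_⟩ <;> refine ⟨⟨?_, ?_⟩, ⟨?_, ?_⟩, ?_, ?_⟩ <;> linarith
  · intro p hp
    have hc := convex_convexHull ℝ ({pnt b (2*k) (-1-k), pnt b (2*k) (1-k),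
      pnt b (2*k-2) (1-k)} : Set Pt)
    have hs := subset_convexHull ℝ ({pnt b (2*k) (-1-k), pnt b (2*k) (1-k),
      pnt b (2*k-2) (1-k)} : Set Pt)
    simp only [Set.insert_subset_iff, Set.singleton_subset_iff] at hs
    obtain ⟨s1, s2, s3⟩ := hs
    unfold Bx.S leftB at hp
    simp only [Set.mem_ofPred_eq] at hp
    push_cast at hp
    obtain ⟨⟨a1, a2⟩, ⟨a3, a4⟩, a5, a6⟩ := hp
    rw [cV_eq] at a5 a6
    refine trap b hc s3 s3 s1 s2 (t := (cX p - (2*k-2))/2) ?_ ?_ ?_ ?_ ?_ <;> linarith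

lemma right_eq (A b k : ℕ) : PP.rightHole A b k = (rightB A k).S b := by
  have e : PP.rightHole A b k = convexHull ℝ {pnt b (2*(A-k)) (-1-(A-k)), pnt b (2*(A-k)) (1-(A-k)),
      pnt b (2*(A-k)+2) (-(A-k)-1)} := by
    unfold PP.rightHole
    exact congrArg _ <| ins_eq (pt_eq (by ring) (by ring)) <|
      ins_eq (pt_eq (by ring) (by ring)) <|
      sin_eq (pt_eq (by ring) (by ring))
  rw [e]
  apply Set.Subset.antisymm
  · apply convexHull_min _ (Bx.convex _ _)
    simp only [Set.insert_subset_iff, Set.singleton_subset_iff, pnt_mem, rightB]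
    push_cast
    refine ⟨?_, ?_, ?_⟩ <;> refine ⟨⟨?_, ?_⟩, ⟨?_, ?_⟩, ?_, ?_⟩ <;> linarith
  · intro p hp
    have hc := convex_convexHull ℝ ({pnt b (2*(A-k)) (-1-(A-k)), pnt b (2*(A-k)) (1-(A-k)),
      pnt b (2*(A-k)+2) (-(A-k)-1)} : Set Pt)
    have hs := subset_convexHull ℝ ({pnt b (2*(A-k)) (-1-(A-k)), pnt b (2*(A-k)) (1-(A-k)),
      pnt b (2*(A-k)+2) (-(A-k)-1)} : Set Pt)
    simp only [Set.insert_subset_iff, Set.singleton_subset_iff] at hs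
    obtain ⟨s1, s2, s3⟩ := hs
    unfold Bx.S rightB at hp
    simp only [Set.mem_ofPred_eq] at hp
    push_cast at hp
    obtain ⟨⟨a1, a2⟩, ⟨a3, a4⟩, a5, a6⟩ := hp
    rw [cV_eq] at a5 a6
    refine trap b hc s1 s2 s3 s3 (t := (cX p - (2*(A-k)))/2) ?_ ?_ ?_ ?_ ?_ <;> linarith

lemma rh_eq (a b x : ℕ) (ha : 0 < a) (hx : 0 < x) :
    PP.centralRhombus (2*a-1) b (2*x-1) = (rhB a x).S b := by
  have c1 : ((2*a-1:ℕ):ℝ) = 2*a-1 := by push_cast [Nat.cast_sub (show 1 ≤ 2*a by omega)]; ring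
  have c2 : ((2*x-1:ℕ):ℝ) = 2*x-1 := by push_cast [Nat.cast_sub (show 1 ≤ 2*x by omega)]; ring
  have hx' : (1:ℝ) ≤ x := by exact_mod_cast hx
  have e : PP.centralRhombus (2*a-1) b (2*x-1) = convexHull ℝ {pnt b (2*(a-x)) (-(a-x)),
      pnt b (2*(a+x-1)) (-(a+x-1)), pnt b (2*a-1) (-(a+x-1)), pnt b (2*a-1) (-(a-x))} := by
    unfold PP.centralRhombus
    rw [c1, c2]
    exact congrArg _ <| ins_eq (pt_eq (by ring) (by ring)) <|
      ins_eq (pt_eq (by ring) (by ring)) <|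
      ins_eq (pt_eq (by ring) (by ring)) <|
      sin_eq (pt_eq (by ring) (by ring))
  rw [e]
  have d : (0:ℝ) < 2*x-1 := by linarith
  apply Set.Subset.antisymm
  · apply convexHull_min _ (Bx.convex _ _)
    simp only [Set.insert_subset_iff, Set.singleton_subset_iff, pnt_mem, rhB]
    push_cast
    refine ⟨?_, ?_, ?_, ?_⟩ <;> refine ⟨⟨?_, ?_⟩, ⟨?_, ?_⟩, ?_, ?_⟩ <;> linarith
  · intro p hp
    have hc := convex_convexHull ℝ ({pnt b (2*(a-x)) (-(a-x)),
      pnt b (2*(a+x-1)) (-(a+x-1)), pnt b (2*a-1) (-(a+x-1)), pnt b (2*a-1) (-(a-x))} : Set Pt)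
    have hs := subset_convexHull ℝ ({pnt b (2*(a-x)) (-(a-x)),
      pnt b (2*(a+x-1)) (-(a+x-1)), pnt b (2*a-1) (-(a+x-1)), pnt b (2*a-1) (-(a-x))} : Set Pt)
    simp only [Set.insert_subset_iff, Set.singleton_subset_iff] at hs
    obtain ⟨s1, s2, s3, s4⟩ := hs
    unfold Bx.S rhB at hp
    simp only [Set.mem_ofPred_eq] at hp
    push_cast at hp
    obtain ⟨⟨a1, a2⟩, ⟨a3, a4⟩, a5, a6⟩ := hp
    rw [cV_eq] at a5 a6
    rcases le_total (cX p) (2*a-1) with h | h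
    · refine trap b hc s1 s1 s3 s4 (t := (cX p - 2*(a-x)) / (2*x-1))
        (div_nonneg (by linarith) d.le) (by rw [div_le_one d]; linarith)
        (by field_simp; ring) ?_ ?_
      · have : (1 - (cX p - 2*(a-x)) / (2*x-1)) * (-(a-x)) + (cX p - 2*(a-x)) / (2*x-1) * (-(a+x-1))
          = a - x - cX p := by field_simp; ring
        rw [this]; linarith
      · have : (1 - (cX p - 2*(a-x)) / (2*x-1)) * (-(a-x)) + (cX p - 2*(a-x)) / (2*x-1) * (-(a-x))
          = -(a-x:ℝ) := by ring
        rw [this]; exact a4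
    · refine trap b hc s3 s4 s2 s2 (t := (cX p - (2*a-1)) / (2*x-1))
        (div_nonneg (by linarith) d.le) (by rw [div_le_one d]; linarith)
        (by field_simp; ring) ?_ ?_
      · have : (1 - (cX p - (2*a-1)) / (2*x-1)) * (-(a+x-1)) + (cX p - (2*a-1)) / (2*x-1) * (-(a+x-1))
          = -(a+x-1:ℝ) := by ring
        rw [this]; exact a3
      · have : (1 - (cX p - (2*a-1)) / (2*x-1)) * (-(a-x)) + (cX p - (2*a-1)) / (2*x-1) * (-(a+x-1))
          = a + x - 1 - cX p := by field_simp; ring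
        rw [this]; linarith

end PQ

namespace PQ
open Finset

def para (p u v : Pt) : Set Pt :=
  {q | ∃ s t : ℝ, (0 ≤ s ∧ s ≤ 1) ∧ (0 ≤ t ∧ t ≤ 1) ∧ q = p + s • u + t • v}

lemma hull_para (p u v : Pt) : convexHull ℝ {p, p + u, p + v, p + u + v} = para p u v := by
  apply Set.Subset.antisymm
  · apply convexHull_min
    · simp only [Set.insert_subset_iff, Set.singleton_subset_iff]
      refine ⟨⟨0, 0, ?_, ?_, ?_⟩, ⟨1, 0, ?_, ?_, ?_⟩, ⟨0, 1, ?_, ?_, ?_⟩, ⟨1, 1, ?_, ?_, ?_⟩⟩ <;>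
        simp
    · rintro q ⟨s, t, hs, ht, rfl⟩ r ⟨s', t', hs', ht', rfl⟩ α β hα hβ h
      refine ⟨α * s + β * s', α * t + β * t', ⟨?_, ?_⟩, ⟨?_, ?_⟩, ?_⟩
      · exact lin_aux hα hβ h hs.1 hs'.1
      · exact lin_aux2 hα hβ h hs.2 hs'.2
      · exact lin_aux hα hβ h ht.1 ht'.1
      · exact lin_aux2 hα hβ h ht.2 ht'.2
      · obtain rfl : β = 1 - α := by linarith
        module
  · rintro q ⟨s, t, hs, ht, rfl⟩
    have hc := convex_convexHull ℝ ({p, p + u, p + v, p + u + v} : Set Pt)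
    have hS := subset_convexHull ℝ ({p, p + u, p + v, p + u + v} : Set Pt)
    simp only [Set.insert_subset_iff, Set.singleton_subset_iff] at hS
    obtain ⟨s1, s2, s3, s4⟩ := hS
    have h1 := hc s1 s2 (by linarith : 0 ≤ 1 - s) hs.1 (by ring)
    have h2 := hc s3 s4 (by linarith : 0 ≤ 1 - s) hs.1 (by ring)
    have h3 := hc h1 h2 (by linarith : 0 ≤ 1 - t) ht.1 (by ring)
    convert h3 using 1
    module

lemma para_swap (p u v : Pt) : para p u v = para p v u := by
  ext q
  constructor
  · rintro ⟨s, t, hs, ht, rfl⟩; exact ⟨t, s, ht, hs, by module⟩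
  · rintro ⟨s, t, hs, ht, rfl⟩; exact ⟨t, s, ht, hs, by module⟩

lemma para_neg (p u v : Pt) : para p (-u) v = para (p - u) u v := by
  ext q
  constructor
  · rintro ⟨s, t, hs, ht, rfl⟩
    exact ⟨1 - s, t, ⟨by linarith, by linarith⟩, ht, by module⟩
  · rintro ⟨s, t, hs, ht, rfl⟩
    exact ⟨1 - s, t, ⟨by linarith, by linarith⟩, ht, by module⟩

noncomputable def e1 : Pt := (0, 1)
noncomputable def e2 : Pt := (PP.s3/2, 1/2)
noncomputable def e3 : Pt := (PP.s3/2, -(1/2))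

lemma unit_iff (u : Pt) : u ∈ PP.unitVecs ↔ u = e1 ∨ u = -e1 ∨ u = e2 ∨ u = -e2 ∨ u = e3 ∨ u = -e3 := by
  unfold PP.unitVecs e1 e2 e3
  simp only [Set.mem_insert_iff, Set.mem_singleton_iff, Prod.neg_mk, neg_zero, neg_neg]

lemma lat_iff (b : ℕ) (p : Pt) : p ∈ PP.triLattice ↔ ∃ m i : ℤ, p = pnt b m i := by
  unfold PP.triLattice
  constructor
  · rintro ⟨m, n, rfl⟩
    refine ⟨m, n - b, pt_eq (by ring) (by push_cast; ring)⟩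
  · rintro ⟨m, i, rfl⟩
    refine ⟨m, i + b, ?_⟩
    symm
    exact pt_eq (by ring) (by push_cast; ring)

lemma pnt_add1 (b X U s : ℝ) : pnt b X U + s • e1 = pnt b X (U + s) := by
  unfold pnt e1
  ext <;> simp only [Prod.smul_mk, Prod.mk_add_mk, smul_eq_mul] <;> ring
lemma pnt_add2 (b X U s : ℝ) : pnt b X U + s • e2 = pnt b (X + s) U := by
  unfold pnt e2
  ext <;> simp only [Prod.smul_mk, Prod.mk_add_mk, smul_eq_mul] <;> ring
lemma pnt_add3 (b X U s : ℝ) : pnt b X U + s • e3 = pnt b (X + s) (U - s) := by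
  unfold pnt e3
  ext <;> simp only [Prod.smul_mk, Prod.mk_add_mk, smul_eq_mul] <;> ring

lemma lat_sub (b : ℕ) {p u : Pt} (hp : p ∈ PP.triLattice) (hu : u = e1 ∨ u = e2 ∨ u = e3) :
    p - u ∈ PP.triLattice := by
  rw [lat_iff b] at hp ⊢
  obtain ⟨m, i, rfl⟩ := hp
  have : ∀ u : Pt, pnt b m i - u = pnt b m i + (-1:ℝ) • u := by intro u; module
  rw [this]
  rcases hu with rfl | rfl | rfl
  · exact ⟨m, i - 1, by rw [pnt_add1]; push_cast; ring_nf⟩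
  · exact ⟨m - 1, i, by rw [pnt_add2]; push_cast; ring_nf⟩
  · exact ⟨m - 1, i + 1, by rw [pnt_add3]; push_cast; ring_nf⟩

lemma para12 (b : ℝ) (m i : ℤ) : para (pnt b m i) e1 e2 = (LB (m, 2*i+m+1) (m, 2*i+m+2)).S b := by
  have h : LB (m, 2*i+m+1) (m, 2*i+m+2) = ⟨m, m+1, i, i+1, i+m, i+m+2⟩ := by
    simp only [LB, ii, jj, Bx.mk.injEq]; omega
  rw [h]
  ext q
  rw [← pnt_self b q, pnt_mem]
  push_cast
  constructor
  · rintro ⟨s, t, hs, ht, e⟩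
    rw [pnt_add1, pnt_add2] at e
    have x1 := congrArg cX e
    have x2 := congrArg (cU b) e
    rw [cX_pnt, cX_pnt] at x1
    rw [cU_pnt, cU_pnt] at x2
    rw [x1, x2]
    refine ⟨⟨?_, ?_⟩, ⟨?_, ?_⟩, ?_, ?_⟩ <;> linarith
  · rintro ⟨⟨h1, h2⟩, ⟨h3, h4⟩, h5, h6⟩
    refine ⟨cU b q - i, cX q - m, ⟨by linarith, by linarith⟩, ⟨by linarith, by linarith⟩, ?_⟩
    rw [pnt_add1, pnt_add2]
    ring_nf

lemma para13 (b : ℝ) (m i : ℤ) : para (pnt b m i) e1 e3 = (LB (m, 2*i+m) (m, 2*i+m+1)).S b := by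
  have h : LB (m, 2*i+m) (m, 2*i+m+1) = ⟨m, m+1, i-1, i+1, i+m, i+m+1⟩ := by
    simp only [LB, ii, jj, Bx.mk.injEq]; omega
  rw [h]
  ext q
  rw [← pnt_self b q, pnt_mem]
  push_cast
  constructor
  · rintro ⟨s, t, hs, ht, e⟩
    rw [pnt_add1, pnt_add3] at e
    have x1 := congrArg cX e
    have x2 := congrArg (cU b) e
    rw [cX_pnt, cX_pnt] at x1
    rw [cU_pnt, cU_pnt] at x2
    rw [x1, x2]
    refine ⟨⟨?_, ?_⟩, ⟨?_, ?_⟩, ?_, ?_⟩ <;> linarith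
  · rintro ⟨⟨h1, h2⟩, ⟨h3, h4⟩, h5, h6⟩
    refine ⟨cU b q + cX q - i - m, cX q - m, ⟨by linarith, by linarith⟩,
      ⟨by linarith, by linarith⟩, ?_⟩
    rw [pnt_add1, pnt_add3]
    ring_nf

lemma para23 (b : ℝ) (m i : ℤ) : para (pnt b m i) e2 e3 = (LB (m, 2*i+m) (m+1, 2*i+m)).S b := by
  have h : LB (m, 2*i+m) (m+1, 2*i+m) = ⟨m, m+2, i-1, i, i+m, i+m+1⟩ := by
    simp only [LB, ii, jj, Bx.mk.injEq]; omega
  rw [h]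
  ext q
  rw [← pnt_self b q, pnt_mem]
  push_cast
  constructor
  · rintro ⟨s, t, hs, ht, e⟩
    rw [pnt_add2, pnt_add3] at e
    have x1 := congrArg cX e
    have x2 := congrArg (cU b) e
    rw [cX_pnt, cX_pnt] at x1
    rw [cU_pnt, cU_pnt] at x2
    rw [x1, x2]
    refine ⟨⟨?_, ?_⟩, ⟨?_, ?_⟩, ?_, ?_⟩ <;> linarith
  · rintro ⟨⟨h1, h2⟩, ⟨h3, h4⟩, h5, h6⟩
    refine ⟨cU b q + cX q - i - m, i - cU b q, ⟨by linarith, by linarith⟩,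
      ⟨by linarith, by linarith⟩, ?_⟩
    rw [pnt_add2, pnt_add3]
    ring_nf

lemma para_pos (b : ℕ) {p u v : Pt} (hp : p ∈ PP.triLattice) (hu : u = e1 ∨ u = e2 ∨ u = e3)
    (hv : v = e1 ∨ v = e2 ∨ v = e3) (hne : u ≠ v) :
    ∃ c d, AdjC c d ∧ para p u v = (LB c d).S b := by
  obtain ⟨m, i, rfl⟩ := (lat_iff b p).1 hp
  have k12 : ∃ c d, AdjC c d ∧ para (pnt b m i) e1 e2 = (LB c d).S b :=
    ⟨(m, 2*i+m+1), (m, 2*i+m+2), Or.inl ⟨rfl, Or.inl (by dsimp only; ring)⟩, para12 b m i⟩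
  have k13 : ∃ c d, AdjC c d ∧ para (pnt b m i) e1 e3 = (LB c d).S b :=
    ⟨(m, 2*i+m), (m, 2*i+m+1), Or.inl ⟨rfl, Or.inl rfl⟩, para13 b m i⟩
  have k23 : ∃ c d, AdjC c d ∧ para (pnt b m i) e2 e3 = (LB c d).S b :=
    ⟨(m, 2*i+m), (m+1, 2*i+m), Or.inr ⟨rfl, Or.inl ⟨rfl, by dsimp only; omega⟩⟩, para23 b m i⟩
  rcases hu with rfl | rfl | rfl <;> rcases hv with rfl | rfl | rfl
  · exact absurd rfl hne
  · exact k12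
  · exact k13
  · rw [para_swap]; exact k12
  · exact absurd rfl hne
  · exact k23
  · rw [para_swap]; exact k13
  · rw [para_swap]; exact k23
  · exact absurd rfl hne

lemma loz_iff (b : ℕ) (L : Set Pt) : PP.IsLozenge L ↔ ∃ c d, AdjC c d ∧ L = (LB c d).S b := by
  constructor
  · rintro ⟨p, u, v, hp, hu, hv, h1, h2, rfl⟩
    rw [hull_para]
    have key : ∀ w ∈ PP.unitVecs, ∃ e, (e = e1 ∨ e = e2 ∨ e = e3) ∧ (w = e ∨ w = -e) := by
      intro w hw
      rw [unit_iff] at hw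
      rcases hw with h | h | h | h | h | h
      · exact ⟨e1, by simp, Or.inl h⟩
      · exact ⟨e1, by simp, Or.inr h⟩
      · exact ⟨e2, by simp, Or.inl h⟩
      · exact ⟨e2, by simp, Or.inr h⟩
      · exact ⟨e3, by simp, Or.inl h⟩
      · exact ⟨e3, by simp, Or.inr h⟩
    obtain ⟨e, he, hue⟩ := key u hu
    obtain ⟨f, hf, hvf⟩ := key v hv
    have hne : e ≠ f := by
      rintro rfl
      rcases hue with rfl | rfl <;> rcases hvf with rfl | rfl <;> simp at h1 h2
    have s1 : ∀ p ∈ PP.triLattice, ∃ c d, AdjC c d ∧ para p u f = (LB c d).S b := by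
      intro p hp
      rcases hue with rfl | rfl
      · exact para_pos b hp he hf hne
      · rw [para_neg]
        exact para_pos b (lat_sub b hp he) he hf hne
    rcases hvf with rfl | rfl
    · exact s1 p hp
    · rw [para_swap, para_neg, para_swap]
      exact s1 _ (lat_sub b hp hf)
  · have hs := s3_pos
    have n12 : e1 ≠ e2 ∧ e1 ≠ -e2 := by
      constructor <;> intro h <;> have := congrArg Prod.fst h <;> simp [e1, e2] at this <;> linarith
    have n13 : e1 ≠ e3 ∧ e1 ≠ -e3 := by
      constructor <;> intro h <;> have := congrArg Prod.fst h <;> simp [e1, e3] at this <;> linarith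
    have n23 : e2 ≠ e3 ∧ e2 ≠ -e3 := by
      constructor
      · intro h; have := congrArg Prod.snd h; simp [e2, e3] at this; linarith
      · intro h; have := congrArg Prod.fst h; simp [e2, e3] at this; linarith
    have key : ∀ c d : Cell, (d.1 = c.1 ∧ d.2 = c.2 + 1) ∨
        (d.1 = c.1 + 1 ∧ d.2 = c.2 ∧ (c.2 - c.1) % 2 = 0) → PP.IsLozenge ((LB c d).S b) := by
      rintro ⟨m, Y⟩ ⟨m', Y'⟩ h
      dsimp only at h
      rcases h with ⟨rfl, rfl⟩ | ⟨rfl, rfl, h⟩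
      · rcases Int.emod_two_eq_zero_or_one (Y - m') with h | h
        · refine ⟨pnt b m' ((Y-m')/2 : ℤ), e1, e3, (lat_iff b _).2 ⟨_, _, rfl⟩, (unit_iff _).2 (by simp),
            (unit_iff _).2 (by simp), n13.1, n13.2, ?_⟩
          rw [hull_para, para13, show 2 * ((Y-m')/2) + m' = Y by omega]
        · refine ⟨pnt b m' ((Y-m')/2 : ℤ), e1, e2, (lat_iff b _).2 ⟨_, _, rfl⟩, (unit_iff _).2 (by simp),
            (unit_iff _).2 (by simp), n12.1, n12.2, ?_⟩
          rw [hull_para, para12, show 2 * ((Y-m')/2) + m' + 1 = Y by omega,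
            show 2 * ((Y-m')/2) + m' + 2 = Y + 1 by omega]
      · refine ⟨pnt b m ((Y'-m)/2 : ℤ), e2, e3, (lat_iff b _).2 ⟨_, _, rfl⟩, (unit_iff _).2 (by simp),
            (unit_iff _).2 (by simp), n23.1, n23.2, ?_⟩
        rw [hull_para, para23, show 2 * ((Y'-m)/2) + m = Y' by omega]
    rintro ⟨c, d, h, rfl⟩
    by_cases h' : (d.1 = c.1 ∧ d.2 = c.2 + 1) ∨ (d.1 = c.1 + 1 ∧ d.2 = c.2 ∧ (c.2 - c.1) % 2 = 0)
    · exact key _ _ h'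
    · rw [LB_symm]
      apply key
      unfold AdjC at h
      omega

end PQ

namespace PQ
open Finset

def MT (b : ℝ) (T : Set (Set Pt)) (c d : Cell) : Prop := AdjC c d ∧ (LB c d).S b ∈ T
def TM (b : ℝ) (M : Cell → Cell → Prop) : Set (Set Pt) := {L | ∃ c d, M c d ∧ L = (LB c d).S b}
def QQ (b : ℝ) (D : Cell → Prop) : Set Pt := {p | ∃ c, D c ∧ p ∈ (LB c c).S b}

lemma LB_inj {b : ℝ} {c d e f : Cell} (h : AdjC c d) (h' : AdjC e f)
    (hE : (LB c d).S b = (LB e f).S b) : (c = e ∧ d = f) ∨ (c = f ∧ d = e) := by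
  have key : ∀ g : Cell, (g = c ∨ g = d) ↔ (g = e ∨ g = f) := by
    intro g
    obtain ⟨p, hp⟩ := cen b g
    rw [← In_LB h, ← In_LB h', ← gen_mem hp, ← gen_mem hp, hE]
  have h1 := (key c).1 (Or.inl rfl)
  have h2 := (key d).1 (Or.inr rfl)
  have n := h.ne
  rcases h1 with h1 | h1 <;> rcases h2 with h2 | h2
  · exact absurd (h1.trans h2.symm) n
  · exact Or.inl ⟨h1, h2⟩
  · exact Or.inr ⟨h1, h2⟩
  · exact absurd (h1.trans h2.symm) n

section til
variable {b : ℕ} {D : Cell → Prop} {R : Set Pt}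

lemma PM_MT (hR : ∀ p c, Gen b p c → (p ∈ R ↔ D c)) {T : Set (Set Pt)}
    (hT : PP.IsLozengeTiling R T) : PM D (MT b T) := by
  obtain ⟨hl, hu, hd⟩ := hT
  refine ⟨fun c d h => h.1, fun c d h => ⟨h.1.symm, by rw [LB_symm]; exact h.2⟩, ?_, ?_, ?_⟩
  · rintro c d ⟨h1, h2⟩
    obtain ⟨p, hp⟩ := cen b c
    rw [← hR p c hp, ← hu]
    exact ⟨_, h2, (gen_mem hp _).2 ((In_LB h1).2 (Or.inl rfl))⟩
  · intro c hc
    obtain ⟨p, hp⟩ := cen b c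
    rw [← hR p c hp, ← hu] at hc
    obtain ⟨L, hL, hpL⟩ := hc
    obtain ⟨e, f, hef, rfl⟩ := (loz_iff b L).1 (hl L hL)
    rcases (In_LB hef).1 ((gen_mem hp _).1 hpL) with rfl | rfl
    · exact ⟨f, hef, hL⟩
    · exact ⟨e, hef.symm, by rw [LB_symm]; exact hL⟩
  · rintro c d e ⟨h1, h2⟩ ⟨h3, h4⟩
    obtain ⟨p, hp⟩ := cen b c
    have hE : (LB c d).S b = (LB c e).S b := by
      by_contra hne
      have := hd _ h2 _ h4 hne
      have hm : p ∈ interior ((LB c d).S b) ∩ interior ((LB c e).S b) :=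
        ⟨gen_int hp ((In_LB h1).2 (Or.inl rfl)), gen_int hp ((In_LB h3).2 (Or.inl rfl))⟩
      rw [this] at hm
      exact hm
    rcases LB_inj h1 h3 hE with h | h
    · exact h.2
    · exact absurd h.2.symm h1.ne

lemma union_T (hR : ∀ p c, Gen b p c → (p ∈ R ↔ D c)) {T : Set (Set Pt)}
    (hT : PP.IsLozengeTiling R T) : R = QQ b D := by
  have hP := PM_MT hR hT
  obtain ⟨hl, hu, hd⟩ := hT
  ext p
  constructor
  · intro hp
    rw [← hu] at hp
    obtain ⟨L, hL, hpL⟩ := hp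
    obtain ⟨e, f, hef, rfl⟩ := (loz_iff b L).1 (hl L hL)
    have hM : MT b T e f := ⟨hef, hL⟩
    rcases (mem_LB hef).1 hpL with h | h
    · exact ⟨e, hP.mem _ _ hM, h⟩
    · exact ⟨f, hP.mem _ _ (hP.symm _ _ hM), h⟩
  · rintro ⟨c, hc, hp⟩
    obtain ⟨d, hcd⟩ := hP.ex c hc
    rw [← hu]
    exact ⟨_, hcd.2, (mem_LB hcd.1).2 (Or.inl hp)⟩

lemma til_TM (hQ : R = QQ b D) {M : Cell → Cell → Prop} (hM : PM D M) :
    PP.IsLozengeTiling R (TM b M) := by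
  refine ⟨?_, ?_, ?_⟩
  · rintro L ⟨c, d, h, rfl⟩
    exact (loz_iff b _).2 ⟨c, d, hM.adj _ _ h, rfl⟩
  · rw [hQ]
    ext p
    constructor
    · rintro ⟨L, ⟨c, d, h, rfl⟩, hp⟩
      rcases (mem_LB (hM.adj _ _ h)).1 hp with h' | h'
      · exact ⟨c, hM.mem _ _ h, h'⟩
      · exact ⟨d, hM.mem _ _ (hM.symm _ _ h), h'⟩
    · rintro ⟨c, hc, hp⟩
      obtain ⟨d, h⟩ := hM.ex c hc
      exact ⟨_, ⟨c, d, h, rfl⟩, (mem_LB (hM.adj _ _ h)).2 (Or.inl hp)⟩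
  · rintro L ⟨c, d, h, rfl⟩ L' ⟨e, f, h', rfl⟩ hne
    by_contra hn
    obtain ⟨p, hp, g, hg⟩ := gen_dense b (isOpen_interior.inter isOpen_interior)
      (Set.nonempty_iff_ne_empty.2 hn)
    have g1 := (In_LB (hM.adj _ _ h)).1 ((gen_mem hg _).1 (interior_subset hp.1))
    have g2 := (In_LB (hM.adj _ _ h')).1 ((gen_mem hg _).1 (interior_subset hp.2))
    apply hne
    have k1 : ∃ g', M g g' ∧ LB c d = LB g g' := by
      rcases g1 with rfl | rfl
      · exact ⟨d, h, rfl⟩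
      · exact ⟨c, hM.symm _ _ h, LB_symm _ _⟩
    have k2 : ∃ g', M g g' ∧ LB e f = LB g g' := by
      rcases g2 with rfl | rfl
      · exact ⟨f, h', rfl⟩
      · exact ⟨e, hM.symm _ _ h', LB_symm _ _⟩
    obtain ⟨y, hy, ey⟩ := k1
    obtain ⟨z, hz, ez⟩ := k2
    rw [ey, ez, hM.uniq _ _ _ hy hz]

lemma TM_MT {T : Set (Set Pt)} (hl : ∀ L ∈ T, PP.IsLozenge L) : TM b (MT b T) = T := by
  ext L
  constructor
  · rintro ⟨c, d, h, rfl⟩; exact h.2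
  · intro h
    obtain ⟨c, d, hcd, rfl⟩ := (loz_iff b L).1 (hl L h)
    exact ⟨c, d, ⟨hcd, h⟩, rfl⟩

lemma MT_TM {M : Cell → Cell → Prop} (hM : PM D M) : MT b (TM b M) = M := by
  funext c d
  apply propext
  constructor
  · rintro ⟨h1, e, f, h2, h3⟩
    rcases LB_inj h1 (hM.adj _ _ h2) h3 with ⟨rfl, rfl⟩ | ⟨rfl, rfl⟩
    · exact h2
    · exact hM.symm _ _ h2
  · intro h
    exact ⟨hM.adj _ _ h, c, d, h, rfl⟩

lemma card_til (hR : ∀ p c, Gen b p c → (p ∈ R ↔ D c)) (hQ : R = QQ b D)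
    (P : Set (Set Pt) → Prop) (P' : (Cell → Cell → Prop) → Prop)
    (hP : ∀ T, PP.IsLozengeTiling R T → (P T ↔ P' (MT b T))) :
    Nat.card {T // PP.IsLozengeTiling R T ∧ P T} = Nat.card {M // PM D M ∧ P' M} :=
  Nat.card_congr
    { toFun := fun T => ⟨MT b T.1, PM_MT hR T.2.1, (hP _ T.2.1).1 T.2.2⟩
      invFun := fun M => ⟨TM b M.1, til_TM hQ M.2.1, by
        rw [hP _ (til_TM hQ M.2.1), MT_TM M.2.1]; exact M.2.2⟩
      left_inv := fun T => Subtype.ext (TM_MT T.2.1.1)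
      right_inv := fun M => Subtype.ext (MT_TM M.2.1) }

lemma inv_iff {f : Pt → Pt} {g : Cell → Cell} (hg : ∀ c d, AdjC c d → AdjC (g c) (g d))
    (hf : ∀ c d, f '' (LB c d).S b = (LB (g c) (g d)).S b) {T : Set (Set Pt)}
    (hl : ∀ L ∈ T, PP.IsLozenge L) :
    (∀ L ∈ T, f '' L ∈ T) ↔ ∀ c d, MT b T c d → MT b T (g c) (g d) := by
  constructor
  · rintro h c d ⟨h1, h2⟩
    exact ⟨hg _ _ h1, by rw [← hf]; exact h _ h2⟩
  · intro h L hL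
    obtain ⟨c, d, hcd, rfl⟩ := (loz_iff b L).1 (hl L hL)
    rw [hf]
    exact (h c d ⟨hcd, hL⟩).2

end til

lemma rot_img (S : Dat) (b : ℕ) (c d : Cell) :
    PP.rot180 S.A b '' (LB c d).S b = (LB (S.rho c) (S.rho d)).S b := by
  have hs := s3_pos
  have hinv : Function.Involutive (PP.rot180 S.A b) := by
    intro p; unfold PP.rot180; ext <;> simp
  rw [Set.image_eq_preimage_of_inverse hinv.leftInverse hinv.rightInverse]
  ext q
  have e1 : cX (PP.rot180 S.A b q) = 2 * S.A - cX q := by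
    unfold cX PP.rot180; dsimp only; field_simp
  have e2 : cU b (PP.rot180 S.A b q) = - cU b q - S.A := by
    unfold cU PP.rot180; dsimp only; field_simp; ring
  have e3 : cV b (PP.rot180 S.A b q) = - cV b q + S.A := by
    unfold cV PP.rot180; dsimp only; field_simp; ring
  have e : LB (S.rho c) (S.rho d) = ⟨2*S.A - (LB c d).x2, 2*S.A - (LB c d).x1, -S.A - (LB c d).u2,
      -S.A - (LB c d).u1, S.A - (LB c d).v2, S.A - (LB c d).v1⟩ := by
    simp only [LB, ii, jj, Dat.rho, Bx.mk.injEq]; omega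
  rw [e]
  unfold Bx.S
  rw [Set.mem_preimage, Set.mem_ofPred_eq, Set.mem_ofPred_eq, e1, e2, e3]
  push_cast
  constructor
  · rintro ⟨⟨h1, h2⟩, ⟨h3, h4⟩, h5, h6⟩
    refine ⟨⟨?_, ?_⟩, ⟨?_, ?_⟩, ?_, ?_⟩ <;> linarith
  · rintro ⟨⟨h1, h2⟩, ⟨h3, h4⟩, h5, h6⟩
    refine ⟨⟨?_, ?_⟩, ⟨?_, ?_⟩, ?_, ?_⟩ <;> linarith

lemma refl_img (S : Dat) (b : ℕ) (c d : Cell) :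
    PP.reflV S.A '' (LB c d).S b = (LB (S.nu c) (S.nu d)).S b := by
  have hs := s3_pos
  have hinv : Function.Involutive (PP.reflV S.A) := by
    intro p; unfold PP.reflV; ext <;> simp
  rw [Set.image_eq_preimage_of_inverse hinv.leftInverse hinv.rightInverse]
  ext q
  have e1 : cX (PP.reflV S.A q) = 2 * S.A - cX q := by
    unfold cX PP.reflV; dsimp only; field_simp
  have e2 : cU b (PP.reflV S.A q) = cV b q - S.A := by
    unfold cU cV PP.reflV; dsimp only; field_simp; ring
  have e3 : cV b (PP.reflV S.A q) = cU b q + S.A := by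
    unfold cV cU PP.reflV; dsimp only; field_simp; ring
  have e : LB (S.nu c) (S.nu d) = ⟨2*S.A - (LB c d).x2, 2*S.A - (LB c d).x1, (LB c d).v1 - S.A,
      (LB c d).v2 - S.A, (LB c d).u1 + S.A, (LB c d).u2 + S.A⟩ := by
    simp only [LB, ii, jj, Dat.nu, Bx.mk.injEq]; omega
  rw [e]
  unfold Bx.S
  rw [Set.mem_preimage, Set.mem_ofPred_eq, Set.mem_ofPred_eq, e1, e2, e3]
  push_cast
  constructor
  · rintro ⟨⟨h1, h2⟩, ⟨h3, h4⟩, h5, h6⟩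
    refine ⟨⟨?_, ?_⟩, ⟨?_, ?_⟩, ?_, ?_⟩ <;> linarith
  · rintro ⟨⟨h1, h2⟩, ⟨h3, h4⟩, h5, h6⟩
    refine ⟨⟨?_, ?_⟩, ⟨?_, ?_⟩, ?_, ?_⟩ <;> linarith

lemma rho_adj (S : Dat) (c d : Cell) (h : AdjC c d) : AdjC (S.rho c) (S.rho d) := by
  simp only [AdjC, Dat.rho] at *; omega
lemma nu_adj (S : Dat) (c d : Cell) (h : AdjC c d) : AdjC (S.nu c) (S.nu d) := by
  simp only [AdjC, Dat.nu] at *; omega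

lemma D_gen (a b s x : ℕ) (ha : 0 < a) (hb : 0 < b) (hx : 0 < x) (hxa : x ≤ a)
    (k : Fin s → ℕ) (hk : ∀ κ ∈ univ.image k, 0 < κ ∧ κ + x ≤ a) (p : Pt) (c : Cell)
    (hp : Gen b p c) : p ∈ PP.HregC (2*a-1) b s k (2*x-1) ↔ (Dat0 (univ.image k) a b x ha hb hk).D c := by
  have hh : ∀ B : Bx, p ∈ interior (B.S b) ↔ B.In c := fun B =>
    ⟨fun h => (gen_mem hp B).1 (interior_subset h), gen_int hp⟩
  have h1 : p ∈ PP.HregC (2*a-1) b s k (2*x-1) ↔ ((hexB (2*a-1) b).In c ∧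
      ∀ i, ¬ (leftB (k i)).In c ∧ ¬ (rightB (2*a-1) (k i)).In c) ∧ ¬ (rhB a x).In c := by
    unfold PP.HregC PP.Hreg
    rw [Set.mem_diff, Set.mem_diff, Set.mem_iUnion, hex_eq _ _ (by omega), rh_eq a b x ha hx, hh,
      gen_mem hp, not_exists]
    simp only [Set.mem_union, left_eq, right_eq, hh, not_or]
  rw [h1]
  have hk' : ∀ i, 0 < k i ∧ k i + x ≤ a := fun i => hk _ (mem_image_of_mem _ (mem_univ i))
  have hA : (((2*a-1:ℕ)):ℤ) = 2*a-1 := by omega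
  obtain ⟨m, Y⟩ := c
  have key : ∀ m' Y' : ℤ, 0 ≤ m' → ((Dat0 (univ.image k) a b x ha hb hk).Lf (m', Y') ↔
      ((-(2*b+m') ≤ Y' ∧ Y' ≤ 2*b+m') ∧ ¬ Rem (univ.image k) a x m' Y')) := by
    intro m' Y' hm
    change (Y' ∈ Bc (univ.image k) a b x m'.toNat ∨ Y' ∈ Wc (univ.image k) a b x m'.toNat) ↔ _
    rw [mem_Bc, mem_Wc, Int.toNat_of_nonneg hm]
    have := Int.emod_two_eq_zero_or_one (Y' - m')
    tauto
  have hRem : ∀ m' Y' : ℤ, Rem (univ.image k) a x m' Y' ↔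
      (∃ i, (m' = 2*(k i)-2 ∧ Y' = 0) ∨ (m' = 2*(k i)-1 ∧ -1 ≤ Y' ∧ Y' ≤ 1)) ∨
    (Y' + 2*a - 2 - m' ≤ 2*x-2 ∧ -Y' + 2*a - 2 - m' ≤ 2*x-2) := by
    intro m' Y'
    unfold Rem
    simp
  unfold Dat.D
  change _ ↔ ((0 ≤ m ∧ m < (2*a-1:ℕ) ∧ _) ∨ ((2*a-1:ℕ) ≤ m ∧ m ≤ 2 * (2*a-1:ℕ) - 1 ∧
    (Dat0 (univ.image k) a b x ha hb hk).Lf (2*(2*a-1:ℕ) - 1 - m, -Y)))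
  rw [hA]
  simp only [Bx.In, hexB, leftB, rightB, rhB, ii, jj, hA]
  constructor
  · rintro ⟨⟨a1, a2⟩, a3⟩
    by_cases hm : m < 2*a-1
    · left
      refine ⟨by omega, hm, ?_⟩
      rw [key _ _ (by omega), hRem]
      refine ⟨by omega, ?_⟩
      rintro (⟨i, h⟩ | h)
      · have := a2 i; have := hk' i; omega
      · omega
    · right
      refine ⟨by omega, by omega, ?_⟩
      rw [key _ _ (by omega), hRem]
      refine ⟨by omega, ?_⟩
      rintro (⟨i, h⟩ | h)
      · have := a2 i; have := hk' i; omega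
      · omega
  · rintro (⟨a1, a2, a3⟩ | ⟨a1, a2, a3⟩)
    · rw [key _ _ (by omega), hRem, not_or, not_exists] at a3
      obtain ⟨a3, a4, a5⟩ := a3
      refine ⟨⟨by omega, fun i => ?_⟩, by omega⟩
      have := a4 i; have := hk' i
      constructor <;> omega
    · rw [key _ _ (by omega), hRem, not_or, not_exists] at a3
      obtain ⟨a3, a4, a5⟩ := a3
      refine ⟨⟨by omega, fun i => ?_⟩, by omega⟩
      have := a4 i; have := hk' i
      constructor <;> omega

theorem main (a b s x : ℕ) (ha : 0 < a) (hb : 0 < b)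
    (hx : 0 < x) (hxa : x ≤ a)
    (k : Fin s → ℕ) (hpos : ∀ i, 0 < k i)
    (hbound : ∀ i, 2 * k i ≤ 2 * a - 1)
    (hdisj : ∀ i, Disjoint (interior (PP.leftHole b (k i)))
      (interior (PP.centralRhombus (2 * a - 1) b (2 * x - 1)))) :
    PP.Mrot (2 * a - 1) b (PP.HregC (2 * a - 1) b s k (2 * x - 1))
      = PP.MrotRefl (2 * a - 1) b (PP.HregC (2 * a - 1) b s k (2 * x - 1)) ^ 2 := by
  have hk : ∀ κ ∈ univ.image k, 0 < κ ∧ κ + x ≤ a := by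
    intro κ hκ
    obtain ⟨i, -, rfl⟩ := mem_image.1 hκ
    refine ⟨hpos i, ?_⟩
    by_contra hc
    have hb' := hbound i
    have hd := hdisj i
    rw [left_eq, rh_eq a b x ha hx] at hd
    obtain ⟨p, hp⟩ := cen b (2 * (k i) - 1, 0)
    refine Set.disjoint_left.1 hd (gen_int hp ?_) (gen_int hp ?_)
    · simp only [Bx.In, leftB, ii, jj]; omega
    · simp only [Bx.In, rhB, ii, jj]; omega
  have hR := D_gen a b s x ha hb hx hxa k hk
  unfold PP.Mrot PP.MrotRefl
  by_cases hT : ∃ T, PP.IsLozengeTiling (PP.HregC (2*a-1) b s k (2*x-1)) T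
  · obtain ⟨T, hT⟩ := hT
    have hQ := union_T hR hT
    have r1 : ∀ T, PP.IsLozengeTiling (PP.HregC (2*a-1) b s k (2*x-1)) T →
        (PP.RotInvariant (2*a-1) b T ↔ (Dat0 (univ.image k) a b x ha hb hk).Rot (MT b T)) :=
      fun T hT => inv_iff (rho_adj (Dat0 (univ.image k) a b x ha hb hk))
        (rot_img (Dat0 (univ.image k) a b x ha hb hk) b) hT.1
    have r2 : ∀ T, PP.IsLozengeTiling (PP.HregC (2*a-1) b s k (2*x-1)) T →
        (PP.ReflInvariant (2*a-1) T ↔ (Dat0 (univ.image k) a b x ha hb hk).Refl (MT b T)) :=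
      fun T hT => inv_iff (nu_adj (Dat0 (univ.image k) a b x ha hb hk))
        (refl_img (Dat0 (univ.image k) a b x ha hb hk) b) hT.1
    rw [card_til hR hQ (fun T => PP.RotInvariant (2*a-1) b T)
        (fun M => (Dat0 (univ.image k) a b x ha hb hk).Rot M) r1,
      card_til hR hQ (fun T => PP.RotInvariant (2*a-1) b T ∧ PP.ReflInvariant (2*a-1) T)
        (fun M => (Dat0 (univ.image k) a b x ha hb hk).Rot M ∧
          (Dat0 (univ.image k) a b x ha hb hk).Refl M)
        (fun T hT => and_congr (r1 T hT) (r2 T hT))]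
    exact count_PM _ a b x ha hb hx hxa hk
  · have n1 : IsEmpty {T // PP.IsLozengeTiling (PP.HregC (2*a-1) b s k (2*x-1)) T ∧
        PP.RotInvariant (2*a-1) b T} := ⟨fun T => hT ⟨T.1, T.2.1⟩⟩
    have n2 : IsEmpty {T // PP.IsLozengeTiling (PP.HregC (2*a-1) b s k (2*x-1)) T ∧
        PP.RotInvariant (2*a-1) b T ∧ PP.ReflInvariant (2*a-1) T} := ⟨fun T => hT ⟨T.1, T.2.1⟩⟩
    rw [Nat.card_of_isEmpty, Nat.card_of_isEmpty]
    rfl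

end PQ

open PP in
/-- Theorem 2.1, equation (2.4):
`M_⊙(H_{2a−1,2b}(k_1,…,k_s; 2x−1)) = M_{⊙,|}(H_{2a−1,2b}(k_1,…,k_s; 2x−1))²`,
under the hypothesis that the `2s` triangular holes and the central rhombus of side
`2x−1` are pairwise disjoint (their interiors do not meet pairwise). -/
theorem Mrot_HregC_eq_MrotRefl_sq (a b s x : ℕ) (ha : 0 < a) (hb : 0 < b) (hs : 0 < s)
    (hx : 0 < x) (hxa : x ≤ a)
    (k : Fin s → ℕ) (hmono : StrictMono k) (hpos : ∀ i, 0 < k i)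
    (hbound : ∀ i, 2 * k i ≤ 2 * a - 1)
    (hdisj : Set.univ.Pairwise (Function.onFun Disjoint
      (fun j : Fin s ⊕ Fin s ⊕ Unit =>
        interior (Sum.elim (fun i => leftHole b (k i))
          (Sum.elim (fun i => rightHole (2 * a - 1) b (k i))
            (fun _ => centralRhombus (2 * a - 1) b (2 * x - 1))) j)))) :
    Mrot (2 * a - 1) b (HregC (2 * a - 1) b s k (2 * x - 1))
      = MrotRefl (2 * a - 1) b (HregC (2 * a - 1) b s k (2 * x - 1)) ^ 2 := by
  exact PQ.main a b s x ha hb hx hxa k hpos hbound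
    (fun i => hdisj (Set.mem_univ (Sum.inl i)) (Set.mem_univ (Sum.inr (Sum.inr ()))) (by simp))
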